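/- arXiv:2601.18249 — 2 statements merged into one kernel-verified Lean document; each statement's English description precedes it below -/
import Mathlib

section
/- Let 𝕜 be an algebraically closed field of characteristic zero. Let Ω_1,…,Ω_d ∈ 𝕜[x,y,z] be homogeneous polynomials with isolated singularities whose degrees are pairwise distinct and each at least 5, and let ξ_1,…,ξ_d ∈ 𝕜. Then the group of Poisson 𝕜-algebra automorphisms of P = P_{Ω_1−ξ_1} ⊗_𝕜 ⋯ ⊗_𝕜 P_{Ω_d−ξ_d} is finite. -/
open scoped TensorProduct

/-- A Poisson bracket on a commutative algebra `A` over `𝕜`: a bilinear, antisymmetric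
bracket satisfying the Jacobi identity and the Leibniz rule. -/
structure PoissonStructure (𝕜 A : Type*) [CommRing 𝕜] [CommRing A] [Algebra 𝕜 A] where
  bracket : A → A → A
  add_left : ∀ a b c : A, bracket (a + b) c = bracket a c + bracket b c
  smul_left : ∀ (r : 𝕜) (a b : A), bracket (r • a) b = r • bracket a b
  antisymm : ∀ a b : A, bracket a b = - bracket b a
  jacobi : ∀ a b c : A,
    bracket a (bracket b c) + bracket b (bracket c a) + bracket c (bracket a b) = 0
  leibniz : ∀ a b c : A, bracket a (b * c) = bracket a b * c + b * bracket a c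

/-- `f` is a morphism of Poisson algebras. -/
def IsPoissonHom {𝕜 A B : Type*} [CommRing 𝕜] [CommRing A] [CommRing B]
    [Algebra 𝕜 A] [Algebra 𝕜 B]
    (PA : PoissonStructure 𝕜 A) (PB : PoissonStructure 𝕜 B) (f : A →ₐ[𝕜] B) : Prop :=
  ∀ a b : A, f (PA.bracket a b) = PB.bracket (f a) (f b)

/-- A Poisson algebra is Dixmier if every injective Poisson endomorphism is bijective. -/
def IsDixmier (𝕜 A : Type*) [CommRing 𝕜] [CommRing A] [Algebra 𝕜 A]
    (PA : PoissonStructure 𝕜 A) : Prop :=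
  ∀ f : A →ₐ[𝕜] A, IsPoissonHom PA PA f → Function.Injective f → Function.Bijective f

/-- The tensor-product Poisson bracket on `A ⊗[𝕜] B`. -/
def IsTensorBracket {𝕜 A B : Type*} [CommRing 𝕜] [CommRing A] [CommRing B]
    [Algebra 𝕜 A] [Algebra 𝕜 B] (PA : PoissonStructure 𝕜 A) (PB : PoissonStructure 𝕜 B)
    (PT : PoissonStructure 𝕜 (A ⊗[𝕜] B)) : Prop :=
  ∀ (a a' : A) (b b' : B),
    PT.bracket (a ⊗ₜ[𝕜] b) (a' ⊗ₜ[𝕜] b') =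
      PA.bracket a a' ⊗ₜ[𝕜] (b * b') + (a * a') ⊗ₜ[𝕜] PB.bracket b b'

/-- `A` is `R`-Dixmier: every injective Poisson morphism `A → A ⊗ R` has image `A ⊗ 𝕜·1`. -/
def IsRelDixmier (𝕜 A R : Type*) [CommRing 𝕜] [CommRing A] [CommRing R]
    [Algebra 𝕜 A] [Algebra 𝕜 R] (PA : PoissonStructure 𝕜 A)
    (PT : PoissonStructure 𝕜 (A ⊗[𝕜] R)) : Prop :=
  ∀ f : A →ₐ[𝕜] A ⊗[𝕜] R, IsPoissonHom PA PT f → Function.Injective f →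
    Set.range f = Set.range fun a : A => a ⊗ₜ[𝕜] (1 : R)

/-- A Poisson algebra is Poisson simple if its only Poisson ideals are `0` and the whole ring. -/
def IsPoissonSimple {𝕜 A : Type*} [CommRing 𝕜] [CommRing A] [Algebra 𝕜 A]
    (PA : PoissonStructure 𝕜 A) : Prop :=
  ∀ I : Ideal A, (∀ x : A, ∀ y ∈ I, PA.bracket x y ∈ I) → I = ⊥ ∨ I = ⊤

open MvPolynomial in
/-- The Jacobian Poisson bracket with potential `Ω` on `𝕜[x,y,z]`. -/
noncomputable def jacBracket {𝕜 : Type*} [CommRing 𝕜]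
    (Ω f g : MvPolynomial (Fin 3) 𝕜) : MvPolynomial (Fin 3) 𝕜 :=
  Matrix.det (Matrix.of
    ![![pderiv 0 f, pderiv 1 f, pderiv 2 f],
      ![pderiv 0 g, pderiv 1 g, pderiv 2 g],
      ![pderiv 0 Ω, pderiv 1 Ω, pderiv 2 Ω]])

open MvPolynomial in
/-- `Ω` has an isolated singularity at the origin. -/
def HasIsolatedSingularity {𝕜 : Type*} [Field 𝕜] (Ω : MvPolynomial (Fin 3) 𝕜) : Prop :=
  FiniteDimensional 𝕜
    (MvPolynomial (Fin 3) 𝕜 ⧸ Ideal.span {pderiv (0 : Fin 3) Ω, pderiv 1 Ω, pderiv 2 Ω})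

/-- The underlying commutative algebra of `P_{Ω-ξ} = 𝕜[x,y,z]/(Ω-ξ)`. -/
def PQuot (𝕜 : Type*) [CommRing 𝕜] (Ω : MvPolynomial (Fin 3) 𝕜) (ξ : 𝕜) : Type _ :=
  MvPolynomial (Fin 3) 𝕜 ⧸ Ideal.span {Ω - MvPolynomial.C ξ}

noncomputable instance {𝕜 : Type*} [CommRing 𝕜] (Ω : MvPolynomial (Fin 3) 𝕜) (ξ : 𝕜) :
    CommRing (PQuot 𝕜 Ω ξ) :=
  inferInstanceAs (CommRing (MvPolynomial (Fin 3) 𝕜 ⧸ Ideal.span {Ω - MvPolynomial.C ξ}))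

noncomputable instance {𝕜 : Type*} [CommRing 𝕜] (Ω : MvPolynomial (Fin 3) 𝕜) (ξ : 𝕜) :
    Algebra 𝕜 (PQuot 𝕜 Ω ξ) :=
  inferInstanceAs (Algebra 𝕜 (MvPolynomial (Fin 3) 𝕜 ⧸ Ideal.span {Ω - MvPolynomial.C ξ}))

/-- The canonical (surjective) projection `𝕜[x,y,z] → P_{Ω-ξ}`. -/
noncomputable def PQuot.mk {𝕜 : Type*} [CommRing 𝕜] (Ω : MvPolynomial (Fin 3) 𝕜) (ξ : 𝕜)
    (f : MvPolynomial (Fin 3) 𝕜) : PQuot 𝕜 Ω ξ :=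
  Ideal.Quotient.mk (Ideal.span {Ω - MvPolynomial.C ξ}) f

/-- `P` is the Poisson bracket on `P_{Ω-ξ}` induced from the Jacobian bracket on `A_Ω`. -/
def IsInducedBracket {𝕜 : Type*} [CommRing 𝕜] (Ω : MvPolynomial (Fin 3) 𝕜) (ξ : 𝕜)
    (P : PoissonStructure 𝕜 (PQuot 𝕜 Ω ξ)) : Prop :=
  ∀ f g : MvPolynomial (Fin 3) 𝕜,
    P.bracket (PQuot.mk Ω ξ f) (PQuot.mk Ω ξ g) = PQuot.mk Ω ξ (jacBracket Ω f g)

open PiTensorProduct in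
/-- The Poisson bracket on a finite tensor product `⨂[𝕜] i, A i`. -/
def IsPiTensorBracket {𝕜 : Type*} [CommRing 𝕜] {d : ℕ} {A : Fin d → Type*}
    [∀ i, CommRing (A i)] [∀ i, Algebra 𝕜 (A i)]
    (P : ∀ i, PoissonStructure 𝕜 (A i))
    (PT : PoissonStructure 𝕜 (⨂[𝕜] i, A i)) : Prop :=
  ∀ a b : (i : Fin d) → A i,
    PT.bracket (⨂ₜ[𝕜] i, a i) (⨂ₜ[𝕜] i, b i) =
      ∑ i : Fin d,
        ⨂ₜ[𝕜] j, Function.update (fun j => a j * b j) i ((P i).bracket (a i) (b i)) j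

/-- The Poisson-torus bracket associated to a matrix `Λ` on the Laurent polynomial ring
`𝕜[x₁^{±1},…,xₙ^{±1}]`, realized as the group algebra of `ℤⁿ`:
`{x^u, x^v} = (Σ_{i,j} uᵢ λᵢⱼ vⱼ) x^{u+v}`. -/
def IsTorusBracket {𝕜 : Type*} [CommRing 𝕜] (n : ℕ) (Λ : Matrix (Fin n) (Fin n) 𝕜)
    (P : PoissonStructure 𝕜 (AddMonoidAlgebra 𝕜 (Fin n → ℤ))) : Prop :=
  ∀ u v : Fin n → ℤ,
    P.bracket (AddMonoidAlgebra.single u (1 : 𝕜)) (AddMonoidAlgebra.single v (1 : 𝕜)) =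
      (∑ i, ∑ j, (u i : 𝕜) * Λ i j * (v j : 𝕜)) • AddMonoidAlgebra.single (u + v) (1 : 𝕜)

/-- `ν : A → ℤ ∪ {∞}` is a `w`-valuation on the Poisson algebra `A`. -/
structure IsWValuation {𝕜 A : Type*} [CommRing 𝕜] [CommRing A] [Algebra 𝕜 A]
    (P : PoissonStructure 𝕜 A) (w : ℤ) (ν : A → WithTop ℤ) : Prop where
  eq_top_iff : ∀ a : A, ν a = ⊤ ↔ a = 0
  scalar : ∀ c : 𝕜, c ≠ 0 → ν (algebraMap 𝕜 A c) = 0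
  map_mul : ∀ a b : A, ν (a * b) = ν a + ν b
  map_add : ∀ a b : A, min (ν a) (ν b) ≤ ν (a + b)
  map_bracket : ∀ a b : A, ν a + ν b ≤ ν (P.bracket a b) + (w : WithTop ℤ)

namespace PoissonFin
open MvPolynomial



section poly
variable {𝕜 : Type*} [Field 𝕜]

lemma hc_mul {p : MvPolynomial (Fin 3) 𝕜} {n : ℕ} (hp : p.IsHomogeneous n)
    (q : MvPolynomial (Fin 3) 𝕜) (m : ℕ) :
    homogeneousComponent (n + m) (p * q) = p * homogeneousComponent m q := by
  have key : ∀ i, homogeneousComponent (n + m) (p * homogeneousComponent i q) =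
      if i = m then p * homogeneousComponent m q else 0 := by
    intro i
    have h := homogeneousComponent_of_mem (m := n + m)
      (hp.mul (homogeneousComponent_isHomogeneous i q))
    rw [h]
    by_cases him : i = m
    · subst him; simp
    · rw [if_neg him, if_neg (by omega)]
  conv_lhs => rw [← sum_homogeneousComponent q, Finset.mul_sum, map_sum]
  simp_rw [key]
  rw [Finset.sum_ite_eq']
  split_ifs with h
  · rfl
  · rw [homogeneousComponent_eq_zero, mul_zero]
    simpa using h

lemma hc_mul_lt {p : MvPolynomial (Fin 3) 𝕜} {n : ℕ} (hp : p.IsHomogeneous n)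
    (q : MvPolynomial (Fin 3) 𝕜) {m : ℕ} (hm : m < n) :
    homogeneousComponent m (p * q) = 0 := by
  conv_lhs => rw [← sum_homogeneousComponent q, Finset.mul_sum, map_sum]
  refine Finset.sum_eq_zero fun i _ => ?_
  rw [homogeneousComponent_of_mem (hp.mul (homogeneousComponent_isHomogeneous i q)),
    if_neg (by omega)]

lemma small_of_hc {m : ℕ} (hm : 1 ≤ m) (g : MvPolynomial (Fin 3) 𝕜) (hg : g.totalDegree ≤ m)
    (h0 : homogeneousComponent m g = 0) : g.totalDegree ≤ m - 1 := by
  refine Finset.sup_le fun d hd => ?_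
  have hdd : d.degree = d.sum fun _ e => e := rfl
  have h1 := le_totalDegree hd
  by_contra hlt
  have : d.degree = m := by omega
  have h2 : coeff d (homogeneousComponent m g) = coeff d g := by
    rw [coeff_homogeneousComponent, if_pos this]
  rw [h0, coeff_zero] at h2
  exact (mem_support_iff.1 hd) h2.symm

lemma hc_pow {f : MvPolynomial (Fin 3) 𝕜} {m : ℕ} (hf : f.totalDegree ≤ m) (N : ℕ) :
    homogeneousComponent (m * N) (f ^ N) = (homogeneousComponent m f) ^ N := by
  set g := homogeneousComponent m f with hg
  have hgm : g.IsHomogeneous m := homogeneousComponent_isHomogeneous m f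
  induction N with
  | zero => simp [homogeneousComponent_zero]
  | succ N ih =>
    have hdec : f ^ (N + 1) = g * f ^ N + (f - g) * f ^ N := by ring
    rw [hdec, map_add, show m * (N + 1) = m + m * N by ring, hc_mul hgm, ih]
    by_cases hr : (f - g) * f ^ N = 0
    · rw [hr, map_zero, add_zero, pow_succ']
    · rw [homogeneousComponent_eq_zero, add_zero, pow_succ']
      have h0 : f - g ≠ 0 := fun h => hr (by rw [h, zero_mul])
      have hdeg : (f - g).totalDegree < m ∨ m = 0 := by
        by_cases hm : m = 0
        · exact Or.inr hm
        left
        have := small_of_hc (by omega) (f - g)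
          ((MvPolynomial.totalDegree_sub _ _).trans (max_le hf hgm.totalDegree_le)) (by
            rw [map_sub, homogeneousComponent_of_mem hgm, if_pos rfl, sub_self])
        omega
      rcases hdeg with hdeg | hm
      · refine (totalDegree_mul _ _).trans_lt ?_
        have := totalDegree_pow f N
        have : N * f.totalDegree ≤ N * m := Nat.mul_le_mul_left _ hf
        have : m * N = N * m := by ring
        omega
      · exfalso
        apply h0
        have h1 : f.totalDegree = 0 := by omega
        rw [hg, hm, homogeneousComponent_zero, ← totalDegree_eq_zero_iff_eq_C.1 h1, sub_self]

/-- Homogeneous of degree `n ≥ 5`, with an explicit isolated singularity certificate. -/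
structure Good (Ω : MvPolynomial (Fin 3) 𝕜) (n : ℕ) : Prop where
  hom : Ω.IsHomogeneous n
  deg : 5 ≤ n
  cert : ∀ u : Fin 3, ∃ N : ℕ, n - 1 ≤ N ∧ ∃ c : Fin 3 → MvPolynomial (Fin 3) 𝕜,
    (∀ l, (c l).IsHomogeneous (N - (n - 1))) ∧ (X u) ^ N = ∑ l, c l * pderiv l Ω

lemma Good.of_isolated {Ω : MvPolynomial (Fin 3) 𝕜} {n : ℕ} (h : Ω.IsHomogeneous n)
    (hn : 5 ≤ n) (hi : HasIsolatedSingularity Ω) : Good Ω n := by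
  refine ⟨h, hn, fun u => ?_⟩
  unfold HasIsolatedSingularity at hi
  set J := Ideal.span {pderiv (0 : Fin 3) Ω, pderiv 1 Ω, pderiv 2 Ω} with hJ
  have halg : IsAlgebraic 𝕜 (Ideal.Quotient.mkₐ 𝕜 J (X u)) := Algebra.IsAlgebraic.isAlgebraic _
  obtain ⟨q, hq0, hq⟩ := halg
  have hmem : Polynomial.aeval (X u : MvPolynomial (Fin 3) 𝕜) q ∈ J := by
    rw [← Ideal.Quotient.eq_zero_iff_mem, ← Ideal.Quotient.mkₐ_eq_mk 𝕜 J, ← hq,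
      Polynomial.aeval_algHom_apply]
  obtain ⟨c, hc⟩ : ∃ c : Fin 3 → MvPolynomial (Fin 3) 𝕜,
      Polynomial.aeval (X u : MvPolynomial (Fin 3) 𝕜) q = ∑ l, c l * pderiv l Ω := by
    rw [hJ, Ideal.mem_span_insert] at hmem
    obtain ⟨a, z, hz, h1⟩ := hmem
    rw [Ideal.mem_span_pair] at hz
    obtain ⟨b, b', hb⟩ := hz
    refine ⟨![a, b, b'], ?_⟩
    rw [h1, ← hb]
    simp [Fin.sum_univ_three, add_assoc]
  set N := q.natDegree with hN
  have hlead : q.coeff N ≠ 0 := by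
    rw [hN]; simpa using hq0
  have hcomp : homogeneousComponent N (Polynomial.aeval (X u : MvPolynomial (Fin 3) 𝕜) q) =
      C (q.coeff N) * X u ^ N := by
    rw [Polynomial.aeval_eq_sum_range, map_sum]
    rw [Finset.sum_eq_single N]
    · rw [smul_eq_C_mul, homogeneousComponent_C_mul,
        homogeneousComponent_of_mem (isHomogeneous_X_pow u N), if_pos rfl]
    · intro b _ hb
      rw [smul_eq_C_mul, homogeneousComponent_C_mul,
        homogeneousComponent_of_mem (isHomogeneous_X_pow u b), if_neg (Ne.symm hb), mul_zero]
    · intro h; simp [hN] at h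
  have hX : (C (q.coeff N) * X u ^ N : MvPolynomial (Fin 3) 𝕜) ≠ 0 :=
    mul_ne_zero (by simpa using hlead) (pow_ne_zero _ (X_ne_zero u))
  have hle : n - 1 ≤ N := by
    by_contra hlt
    apply hX
    rw [← hcomp, hc, map_sum]
    refine Finset.sum_eq_zero fun l _ => ?_
    rw [mul_comm, hc_mul_lt h.pderiv _ (by omega)]
  refine ⟨N, hle, fun l => C (q.coeff N)⁻¹ * homogeneousComponent (N - (n - 1)) (c l), ?_, ?_⟩
  · intro l
    exact (homogeneousComponent_isHomogeneous _ _).C_mul _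
  · have : C (q.coeff N) * X u ^ N =
        ∑ l, homogeneousComponent (N - (n - 1)) (c l) * pderiv l Ω := by
      rw [← hcomp, hc, map_sum]
      refine Finset.sum_congr rfl fun l _ => ?_
      conv_lhs => rw [mul_comm, ← Nat.add_sub_of_le hle, hc_mul h.pderiv]
      rw [mul_comm]
    simp_rw [mul_assoc]
    rw [← Finset.mul_sum, ← this, ← mul_assoc, ← C_mul, inv_mul_cancel₀ hlead, C_1, one_mul]

variable {Ω : MvPolynomial (Fin 3) 𝕜} {n : ℕ}

lemma Good.ne_zero (hG : Good Ω n) : Ω ≠ 0 := by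
  rintro rfl
  obtain ⟨N, _, c, _, h⟩ := hG.cert 0
  simp at h

lemma relPrime_X : IsRelPrime (X 0 : MvPolynomial (Fin 3) 𝕜) (X 1) := by
  have h0 : Prime (X 0 : MvPolynomial (Fin 3) 𝕜) := X_prime
  have h1 : Prime (X 1 : MvPolynomial (Fin 3) 𝕜) := X_prime
  refine (h0.irreducible.isRelPrime_iff_not_dvd).2 fun h => ?_
  rw [X_dvd_X] at h
  simp at h

lemma dvd_of_dvd_mul_pow {P f : MvPolynomial (Fin 3) 𝕜} {a b : ℕ} (hP : P ≠ 0)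
    (h0 : P ∣ f * X 0 ^ a) (h1 : P ∣ f * X 1 ^ b) : P ∣ f := by
  obtain ⟨q, hq⟩ := h0
  obtain ⟨r, hr⟩ := h1
  have hrp : IsRelPrime (X 0 ^ a : MvPolynomial (Fin 3) 𝕜) (X 1 ^ b) := relPrime_X.pow
  have h2 : q * X 1 ^ b = r * X 0 ^ a := by
    apply mul_left_cancel₀ hP
    linear_combination (-X 1 ^ b) * hq + X 0 ^ a * hr
  have h3 : X 0 ^ a ∣ q := hrp.dvd_of_dvd_mul_right ⟨r, by rw [h2]; ring⟩
  obtain ⟨s, hs⟩ := h3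
  refine ⟨s, ?_⟩
  have : (X 0 ^ a : MvPolynomial (Fin 3) 𝕜) ≠ 0 := pow_ne_zero _ (X_ne_zero _)
  apply mul_right_cancel₀ this
  rw [hq, hs]; ring

lemma Good.dvd_of_mul_pderiv (hG : Good Ω n) {f P : MvPolynomial (Fin 3) 𝕜} (hP : P ≠ 0)
    (h : ∀ l, P ∣ f * pderiv l Ω) : P ∣ f := by
  have key : ∀ u, ∃ N, P ∣ f * X u ^ N := by
    intro u
    obtain ⟨N, _, c, _, hc⟩ := hG.cert u
    refine ⟨N, ?_⟩
    rw [hc, Finset.mul_sum]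
    refine Finset.dvd_sum fun l _ => ?_
    rw [mul_left_comm]
    exact (h l).mul_left _
  obtain ⟨a, ha⟩ := key 0
  obtain ⟨b, hb⟩ := key 1
  exact dvd_of_dvd_mul_pow hP ha hb

lemma Good.squarefree (hG : Good Ω n) : Squarefree Ω := by
  intro F hF
  obtain ⟨G, hFG⟩ := hF
  have hF0 : F ≠ 0 := by
    rintro rfl
    exact hG.ne_zero (by simpa using hFG)
  apply isUnit_of_dvd_one
  refine hG.dvd_of_mul_pderiv hF0 fun l => ?_
  rw [one_mul, hFG, pderiv_mul, pderiv_mul]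
  refine ⟨pderiv l F * G + pderiv l F * G + F * pderiv l G, by ring⟩

lemma Good.totalDegree_sub (hG : Good Ω n) (ξ : 𝕜) : (Ω - C ξ).totalDegree = n := by
  rw [sub_eq_add_neg, totalDegree_add_eq_left_of_totalDegree_lt, hG.hom.totalDegree hG.ne_zero]
  rw [totalDegree_neg, totalDegree_C, hG.hom.totalDegree hG.ne_zero]
  have := hG.deg
  omega

lemma Good.sub_ne_zero (hG : Good Ω n) (ξ : 𝕜) : Ω - C ξ ≠ 0 := by
  intro h
  have := hG.totalDegree_sub ξ
  rw [h, totalDegree_zero] at this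
  have := hG.deg
  omega

lemma Good.mul_degree (hG : Good Ω n) {ξ : 𝕜} {f h : MvPolynomial (Fin 3) 𝕜}
    (hf : f = (Ω - C ξ) * h) (h0 : h ≠ 0) : f.totalDegree = n + h.totalDegree := by
  rw [hf, totalDegree_mul_of_isDomain (hG.sub_ne_zero ξ) h0, hG.totalDegree_sub]

lemma Good.eq_zero_of_dvd (hG : Good Ω n) {ξ : 𝕜} {f : MvPolynomial (Fin 3) 𝕜}
    (hf : Ω - C ξ ∣ f) (hd : f.totalDegree < n) : f = 0 := by
  obtain ⟨h, hh⟩ := hf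
  by_cases h0 : h = 0
  · rw [hh, h0, mul_zero]
  · have := hG.mul_degree hh h0
    omega

lemma Good.top_dvd (hG : Good Ω n) {ξ : 𝕜} {f : MvPolynomial (Fin 3) 𝕜} {M : ℕ}
    (hf : Ω - C ξ ∣ f) (hd : f.totalDegree ≤ M) : Ω ∣ homogeneousComponent M f := by
  obtain ⟨h, hh⟩ := hf
  by_cases h0 : h = 0
  · rw [hh, h0, mul_zero, map_zero]; exact dvd_zero _
  · have h1 := hG.mul_degree hh h0
    have h2 := hG.deg
    rw [hh, sub_mul, map_sub, homogeneousComponent_C_mul, homogeneousComponent_eq_zero M h (by omega),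
      mul_zero, sub_zero, show M = n + (M - n) by omega, hc_mul hG.hom]
    exact dvd_mul_right _ _

/-- If the top component is divisible by `Ω`, we can lower the degree. -/
lemma Good.lower (hG : Good Ω n) (ξ : 𝕜) {f : MvPolynomial (Fin 3) 𝕜} {m : ℕ} (hm : 1 ≤ m)
    (hd : f.totalDegree ≤ m) (hf : Ω ∣ homogeneousComponent m f) :
    ∃ g : MvPolynomial (Fin 3) 𝕜, g.totalDegree ≤ m - 1 ∧ Ω - C ξ ∣ f - g := by
  obtain ⟨h, hh⟩ := hf
  have hn := hG.deg
  have hsmall := small_of_hc (𝕜 := 𝕜) hm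
  by_cases h0 : h = 0
  · refine ⟨f, hsmall f hd (by rw [hh, h0, mul_zero]), by simp⟩
  · have hdegh : n + h.totalDegree ≤ m := by
      have h1 := (homogeneousComponent_isHomogeneous m f).totalDegree_le
      rw [hh, totalDegree_mul_of_isDomain hG.ne_zero h0, hG.hom.totalDegree hG.ne_zero] at h1
      exact h1
    have hdm : (((Ω - C ξ) * h)).totalDegree ≤ m := by
      rw [hG.mul_degree rfl h0]; exact hdegh
    refine ⟨f - (Ω - C ξ) * h, hsmall _ ((MvPolynomial.totalDegree_sub _ _).trans (max_le hd hdm)) ?_, by simp⟩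
    rw [map_sub, sub_mul, map_sub, homogeneousComponent_C_mul,
      homogeneousComponent_eq_zero m h (by omega), mul_zero, sub_zero, ← hh]
    have : homogeneousComponent m (homogeneousComponent m f) = homogeneousComponent m f := by
      rw [homogeneousComponent_of_mem (homogeneousComponent_isHomogeneous m f), if_pos rfl]
    rw [this, sub_self]

end poly
end PoissonFin

namespace PoissonFin
open MvPolynomial



section alg
variable {𝕜 : Type*} [Field 𝕜]

lemma jac_eq (Ω f g : MvPolynomial (Fin 3) 𝕜) : jacBracket Ω f g =
    (pderiv 0 f * pderiv 1 g - pderiv 1 f * pderiv 0 g) * pderiv 2 Ω +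
    (pderiv 1 f * pderiv 2 g - pderiv 2 f * pderiv 1 g) * pderiv 0 Ω +
    (pderiv 2 f * pderiv 0 g - pderiv 0 f * pderiv 2 g) * pderiv 1 Ω := by
  unfold jacBracket
  rw [Matrix.det_fin_three]
  simp
  ring

lemma hc_pderiv (f : MvPolynomial (Fin 3) 𝕜) (j : Fin 3) (m : ℕ) :
    homogeneousComponent m (pderiv j f) = pderiv j (homogeneousComponent (m + 1) f) := by
  have key : ∀ i, homogeneousComponent m (pderiv j (homogeneousComponent i f)) =
      if i = m + 1 then pderiv j (homogeneousComponent (m + 1) f) else 0 := by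
    intro i
    by_cases hi : i = 0
    · subst hi
      rw [homogeneousComponent_zero, pderiv_C, map_zero, if_neg (by omega)]
    rw [homogeneousComponent_of_mem ((homogeneousComponent_isHomogeneous i f).pderiv (i := j))]
    by_cases him : i = m + 1
    · subst him; simp
    · rw [if_neg him, if_neg (by omega)]
  conv_lhs => rw [← sum_homogeneousComponent f, map_sum, map_sum]
  simp_rw [key]
  rw [Finset.sum_ite_eq']
  split_ifs with h
  · rfl
  · rw [homogeneousComponent_eq_zero, map_zero]
    simpa using h

lemma totalDegree_pderiv_le (f : MvPolynomial (Fin 3) 𝕜) (j : Fin 3) :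
    (pderiv j f).totalDegree ≤ f.totalDegree - 1 := by
  conv_lhs => rw [← sum_homogeneousComponent f, map_sum]
  refine (totalDegree_finsetSum _ _).trans (Finset.sup_le fun i hi => ?_)
  have := (((homogeneousComponent_isHomogeneous i f).pderiv (i := j))).totalDegree_le
  simp at hi
  omega

lemma totalDegree_jac_le {Ω f g : MvPolynomial (Fin 3) 𝕜} {n m m' : ℕ} (hΩ : Ω.IsHomogeneous n)
    (hn : 5 ≤ n) (hf : f.totalDegree ≤ m) (hg : g.totalDegree ≤ m') :
    (jacBracket Ω f g).totalDegree ≤ m + m' + (n - 3) := by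
  have h0 : ∀ p : MvPolynomial (Fin 3) 𝕜, p.totalDegree = 0 → ∀ j, pderiv j p = 0 := by
    intro p hp j
    rw [totalDegree_eq_zero_iff_eq_C.1 hp, pderiv_C]
  by_cases hf0 : f.totalDegree = 0
  · rw [jac_eq]; simp [h0 f hf0]
  by_cases hg0 : g.totalDegree = 0
  · rw [jac_eq]; simp [h0 g hg0]
  have hm : ∀ i j k, (pderiv i f * pderiv j g * pderiv k Ω).totalDegree ≤ m + m' + (n - 3) := by
    intro i j k
    have h1 := totalDegree_pderiv_le f i
    have h2 := totalDegree_pderiv_le g j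
    have h3 := (hΩ.pderiv (i := k)).totalDegree_le
    have h4 := totalDegree_mul (pderiv i f * pderiv j g) (pderiv k Ω)
    have h5 := totalDegree_mul (pderiv i f) (pderiv j g)
    omega
  rw [jac_eq]
  simp only [sub_mul]
  refine (totalDegree_add _ _).trans (max_le ((totalDegree_add _ _).trans (max_le ?_ ?_)) ?_) <;>
  exact (MvPolynomial.totalDegree_sub _ _).trans (max_le (hm _ _ _) (hm _ _ _))

/-- The projection as an algebra homomorphism. -/
noncomputable def mkA (Ω : MvPolynomial (Fin 3) 𝕜) (ξ : 𝕜) :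
    MvPolynomial (Fin 3) 𝕜 →ₐ[𝕜] PQuot 𝕜 Ω ξ :=
  Ideal.Quotient.mkₐ 𝕜 (Ideal.span {Ω - MvPolynomial.C ξ})

lemma mkA_eq (Ω : MvPolynomial (Fin 3) 𝕜) (ξ : 𝕜) (f) : PQuot.mk Ω ξ f = mkA Ω ξ f := rfl

lemma mkA_surj (Ω : MvPolynomial (Fin 3) 𝕜) (ξ : 𝕜) : Function.Surjective (mkA Ω ξ) :=
  Ideal.Quotient.mk_surjective

lemma mkA_eq_zero {Ω : MvPolynomial (Fin 3) 𝕜} {ξ : 𝕜} {f} :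
    mkA Ω ξ f = 0 ↔ Ω - C ξ ∣ f := by
  rw [← Ideal.mem_span_singleton]
  exact Ideal.Quotient.eq_zero_iff_mem

lemma mkA_eq_iff {Ω : MvPolynomial (Fin 3) 𝕜} {ξ : 𝕜} {f g} :
    mkA Ω ξ f = mkA Ω ξ g ↔ Ω - C ξ ∣ f - g := by
  rw [← mkA_eq_zero, map_sub, sub_eq_zero]

/-- The degree filtration. -/
noncomputable def Fil (Ω : MvPolynomial (Fin 3) 𝕜) (ξ : 𝕜) (m : ℕ) :
    Submodule 𝕜 (PQuot 𝕜 Ω ξ) :=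
  (restrictTotalDegree (Fin 3) 𝕜 m).map (mkA Ω ξ).toLinearMap

variable {Ω : MvPolynomial (Fin 3) 𝕜} {ξ : 𝕜} {n : ℕ}

lemma mem_Fil {m : ℕ} {a : PQuot 𝕜 Ω ξ} :
    a ∈ Fil Ω ξ m ↔ ∃ f : MvPolynomial (Fin 3) 𝕜, f.totalDegree ≤ m ∧ mkA Ω ξ f = a := by
  simp [Fil, Submodule.mem_map, mem_restrictTotalDegree]

lemma Fil_mono {m m' : ℕ} (h : m ≤ m') : Fil Ω ξ m ≤ Fil Ω ξ m' := by
  intro a ha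
  rw [mem_Fil] at ha ⊢
  obtain ⟨f, hf, rfl⟩ := ha
  exact ⟨f, hf.trans h, rfl⟩

lemma Fil_mul {m m' : ℕ} {a b : PQuot 𝕜 Ω ξ} (ha : a ∈ Fil Ω ξ m) (hb : b ∈ Fil Ω ξ m') :
    a * b ∈ Fil Ω ξ (m + m') := by
  rw [mem_Fil] at ha hb ⊢
  obtain ⟨f, hf, rfl⟩ := ha
  obtain ⟨g, hg, rfl⟩ := hb
  exact ⟨f * g, (totalDegree_mul _ _).trans (by omega), map_mul _ _ _⟩

lemma Fil_exists (a : PQuot 𝕜 Ω ξ) : ∃ m, a ∈ Fil Ω ξ m := by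
  obtain ⟨f, rfl⟩ := mkA_surj Ω ξ a
  exact ⟨_, mem_Fil.2 ⟨f, le_rfl, rfl⟩⟩

lemma Fil_algebraMap (c : 𝕜) (m : ℕ) : algebraMap 𝕜 (PQuot 𝕜 Ω ξ) c ∈ Fil Ω ξ m :=
  mem_Fil.2 ⟨C c, by simp, by rw [← algebraMap_eq]; exact AlgHom.commutes _ _⟩

lemma Fil_zero_iff {a : PQuot 𝕜 Ω ξ} (h : a ∈ Fil Ω ξ 0) : ∃ c, a = algebraMap 𝕜 _ c := by
  obtain ⟨f, hf, rfl⟩ := mem_Fil.1 h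
  rw [Nat.le_zero, totalDegree_eq_zero_iff_eq_C] at hf
  refine ⟨coeff 0 f, ?_⟩
  rw [hf, ← algebraMap_eq, AlgHom.commutes]
  simp

lemma Fil_bracket (hG : Good Ω n) {P : PoissonStructure 𝕜 (PQuot 𝕜 Ω ξ)}
    (hP : IsInducedBracket Ω ξ P) {m m' : ℕ} {a b : PQuot 𝕜 Ω ξ} (ha : a ∈ Fil Ω ξ m)
    (hb : b ∈ Fil Ω ξ m') : P.bracket a b ∈ Fil Ω ξ (m + m' + (n - 3)) := by
  obtain ⟨f, hf, rfl⟩ := mem_Fil.1 ha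
  obtain ⟨g, hg, rfl⟩ := mem_Fil.1 hb
  rw [← mkA_eq, ← mkA_eq, hP, mkA_eq, mem_Fil]
  exact ⟨_, totalDegree_jac_le hG.hom hG.deg hf hg, rfl⟩

lemma Fil_pow_lower (hG : Good Ω n) {m N M : ℕ} (hm : 1 ≤ m) {a : PQuot 𝕜 Ω ξ}
    (ha : a ∈ Fil Ω ξ m) (hM : M < m * N) (hN : a ^ N ∈ Fil Ω ξ M) : a ∈ Fil Ω ξ (m - 1) := by
  obtain ⟨f, hf, rfl⟩ := mem_Fil.1 ha
  obtain ⟨g, hg, hfg⟩ := mem_Fil.1 hN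
  rw [← map_pow] at hfg
  have h1 := mkA_eq_iff.1 hfg.symm
  have hd : (f ^ N).totalDegree ≤ m * N := by
    refine (totalDegree_pow _ _).trans ?_
    rw [mul_comm]; exact Nat.mul_le_mul_right _ hf
  have h2 := hG.top_dvd (M := m * N) h1
    ((MvPolynomial.totalDegree_sub _ _).trans (max_le hd (by omega)))
  rw [map_sub, homogeneousComponent_eq_zero _ g (by omega), sub_zero, hc_pow hf] at h2
  obtain ⟨g', hg', hd'⟩ := hG.lower ξ hm hf (hG.squarefree.isRadical _ _ h2)
  exact mem_Fil.2 ⟨g', hg', (mkA_eq_iff.2 hd').symm⟩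

lemma Fil_one_zero (hG : Good Ω n) {c : 𝕜} (h : algebraMap 𝕜 (PQuot 𝕜 Ω ξ) c = 0) : c = 0 := by
  rw [← AlgHom.commutes (mkA Ω ξ), mkA_eq_zero] at h
  have := hG.eq_zero_of_dvd h (by rw [algebraMap_eq, totalDegree_C]; have := hG.deg; omega)
  simpa [algebraMap_eq] using this

lemma nil_zero (hG : Good Ω n) {a : PQuot 𝕜 Ω ξ} {N : ℕ} (h : a ^ N = 0) : a = 0 := by
  have hN : N ≠ 0 := by
    rintro rfl
    rw [pow_zero, ← map_one (algebraMap 𝕜 (PQuot 𝕜 Ω ξ))] at h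
    exact one_ne_zero (Fil_one_zero hG h)
  obtain ⟨m, hm⟩ := Fil_exists a
  have h0 : a ∈ Fil Ω ξ 0 := by
    induction m with
    | zero => exact hm
    | succ m ih =>
      have hpos : 0 < (m + 1) * N := Nat.mul_pos (Nat.succ_pos m) (Nat.pos_of_ne_zero hN)
      have hz : a ^ N ∈ Fil Ω ξ 0 := by rw [h]; exact Submodule.zero_mem _
      have h' := Fil_pow_lower hG (Nat.succ_pos m) hm hpos hz
      rw [Nat.succ_sub_one] at h'
      exact ih h'
  obtain ⟨c, rfl⟩ := Fil_zero_iff h0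
  rw [← map_pow] at h
  have := Fil_one_zero hG h
  rw [pow_eq_zero_iff hN] at this
  rw [this, map_zero]

/-- points of the surface -/
def Pt (Ω : MvPolynomial (Fin 3) 𝕜) (ξ : 𝕜) : Type _ := {v : Fin 3 → 𝕜 // aeval v Ω = ξ}

/-- Evaluation at a point. -/
noncomputable def evA (p : Pt Ω ξ) : PQuot 𝕜 Ω ξ →ₐ[𝕜] 𝕜 :=
  Ideal.Quotient.liftₐ (Ideal.span {Ω - MvPolynomial.C ξ}) (aeval p.1) (by
    intro a ha
    rw [Ideal.mem_span_singleton] at ha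
    obtain ⟨b, rfl⟩ := ha
    have := p.2
    rw [map_mul, map_sub, this, ← algebraMap_eq, AlgHom.commutes]
    simp)

lemma evA_mk (p : Pt Ω ξ) (f : MvPolynomial (Fin 3) 𝕜) : evA p (mkA Ω ξ f) = aeval p.1 f := rfl

lemma evA_sep [IsAlgClosed 𝕜] (hG : Good Ω n) {a : PQuot 𝕜 Ω ξ} (h : ∀ p : Pt Ω ξ, evA p a = 0) :
    a = 0 := by
  obtain ⟨f, rfl⟩ := mkA_surj Ω ξ a
  have h1 : f ∈ vanishingIdeal 𝕜 (zeroLocus 𝕜 (Ideal.span {Ω - C ξ})) := by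
    rw [mem_vanishingIdeal_iff]
    intro x hx
    have hx' := hx (Ω - C ξ) (Ideal.mem_span_singleton_self _)
    have := h ⟨x, by simpa [sub_eq_zero] using hx'⟩
    exact this
  rw [vanishingIdeal_zeroLocus_eq_radical] at h1
  obtain ⟨N, hN⟩ := h1
  rw [Ideal.mem_span_singleton, ← mkA_eq_zero, map_pow] at hN
  exact nil_zero hG hN

lemma Pt_nonempty [IsAlgClosed 𝕜] (hG : Good Ω n) : Nonempty (Pt Ω ξ) := by
  by_contra hne
  have h1 : algebraMap 𝕜 (PQuot 𝕜 Ω ξ) 1 = 0 :=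
    evA_sep hG fun p => (hne ⟨p⟩).elim
  exact one_ne_zero (Fil_one_zero hG h1)

lemma Fil_central_lower [CharZero 𝕜] (hG : Good Ω n) {P : PoissonStructure 𝕜 (PQuot 𝕜 Ω ξ)}
    (hP : IsInducedBracket Ω ξ P) {m : ℕ} (hm : 1 ≤ m) {a : PQuot 𝕜 Ω ξ}
    (ha : a ∈ Fil Ω ξ m) (hc : ∀ l, P.bracket a (mkA Ω ξ (X l)) = 0) : a ∈ Fil Ω ξ (m - 1) := by
  obtain ⟨f, hf, rfl⟩ := mem_Fil.1 ha
  set g := homogeneousComponent m f with hg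
  have hgm : g.IsHomogeneous m := homogeneousComponent_isHomogeneous _ _
  have hn := hG.deg
  have h1 : ∀ l, Ω ∣ jacBracket Ω g (X l) := by
    intro l
    have h2 := hc l
    rw [← mkA_eq, ← mkA_eq, hP, mkA_eq, mkA_eq_zero] at h2
    have h3 := hG.top_dvd (M := (n - 1) + (m - 1)) h2
      ((totalDegree_jac_le hG.hom hG.deg hf (totalDegree_X l).le).trans (by omega))
    have h4 : ∀ i j, homogeneousComponent ((n - 1) + (m - 1)) (pderiv i f * pderiv j Ω) =
        pderiv i g * pderiv j Ω := by
      intro i j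
      rw [mul_comm, hc_mul hG.hom.pderiv, hc_pderiv, Nat.sub_add_cancel hm, mul_comm]
    convert h3 using 1
    rw [jac_eq, jac_eq]
    fin_cases l <;> simp [pderiv_X, h4, sub_mul, Pi.single_apply]
  have hE := hgm.sum_X_mul_pderiv
  have hE' := hG.hom.sum_X_mul_pderiv
  rw [Fin.sum_univ_three, nsmul_eq_mul] at hE hE'
  have h5 : ∀ k, Ω ∣ g * pderiv k Ω := by
    intro k
    have hmc : (C ((m : 𝕜)⁻¹) : MvPolynomial (Fin 3) 𝕜) * (m : MvPolynomial (Fin 3) 𝕜) = 1 := by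
      rw [← map_natCast (C : 𝕜 →+* MvPolynomial (Fin 3) 𝕜), ← C_mul, inv_mul_cancel₀, C_1]
      exact_mod_cast (by omega : m ≠ 0)
    suffices h : Ω ∣ (m : MvPolynomial (Fin 3) 𝕜) * (g * pderiv k Ω) by
      have := h.mul_left (C ((m : 𝕜)⁻¹))
      rwa [← mul_assoc, hmc, one_mul] at this
    obtain ⟨r0, hr0⟩ := h1 0
    obtain ⟨r1, hr1⟩ := h1 1
    obtain ⟨r2, hr2⟩ := h1 2
    rw [jac_eq] at hr0 hr1 hr2
    simp only [pderiv_X, Pi.single_apply] at hr0 hr1 hr2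
    simp at hr0 hr1 hr2
    fin_cases k
    · refine ⟨(n : MvPolynomial (Fin 3) 𝕜) * pderiv 0 g + X 1 * r2 - X 2 * r1, ?_⟩
      simp
      linear_combination (-pderiv 0 Ω) * hE + pderiv 0 g * hE' + X 1 * hr2 - X 2 * hr1
    · refine ⟨(n : MvPolynomial (Fin 3) 𝕜) * pderiv 1 g + X 2 * r0 - X 0 * r2, ?_⟩
      simp
      linear_combination (-pderiv 1 Ω) * hE + pderiv 1 g * hE' + X 2 * hr0 - X 0 * hr2
    · refine ⟨(n : MvPolynomial (Fin 3) 𝕜) * pderiv 2 g + X 0 * r1 - X 1 * r0, ?_⟩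
      simp
      linear_combination (-pderiv 2 Ω) * hE + pderiv 2 g * hE' + X 0 * hr1 - X 1 * hr0
  obtain ⟨g', hg', hd'⟩ := hG.lower ξ hm hf (hG.dvd_of_mul_pderiv hG.ne_zero h5)
  exact mem_Fil.2 ⟨g', hg', (mkA_eq_iff.2 hd').symm⟩

end alg
end PoissonFin

namespace PoissonFin

open scoped TensorProduct
open PiTensorProduct

section tens
variable {𝕜 : Type*} [Field 𝕜] {d : ℕ} {A : Fin d → Type*} [∀ i, CommRing (A i)]
  [∀ i, Algebra 𝕜 (A i)] {S : Type*} [CommRing S] [Algebra 𝕜 S]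

/-- product of linear maps -/
noncomputable def linHom (g : ∀ j, A j →ₗ[𝕜] S) : (⨂[𝕜] i, A i) →ₗ[𝕜] S :=
  lift ((MultilinearMap.mkPiAlgebra 𝕜 (Fin d) S).compLinearMap g)

lemma linHom_tprod (g : ∀ j, A j →ₗ[𝕜] S) (a : ∀ j, A j) :
    linHom g (tprod 𝕜 a) = ∏ j, g j (a j) := by
  simp [linHom]

/-- product of algebra maps -/
noncomputable def mulHom (g : ∀ j, A j →ₐ[𝕜] S) : (⨂[𝕜] i, A i) →ₐ[𝕜] S :=
  liftAlgHom ((MultilinearMap.mkPiAlgebra 𝕜 (Fin d) S).compLinearMap fun j => (g j).toLinearMap)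
    (by simp) (by intro x y; simp [Finset.prod_mul_distrib])

lemma mulHom_tprod (g : ∀ j, A j →ₐ[𝕜] S) (a : ∀ j, A j) :
    mulHom g (tprod 𝕜 a) = ∏ j, g j (a j) := by
  change lift ((MultilinearMap.mkPiAlgebra 𝕜 (Fin d) S).compLinearMap fun j => (g j).toLinearMap)
    (tprod 𝕜 a) = _
  rw [lift.tprod]
  simp

/-- The inclusion of a factor. -/
noncomputable def inc (i : Fin d) : A i →ₐ[𝕜] ⨂[𝕜] i, A i := singleAlgHom i

lemma inc_apply (i : Fin d) (a : A i) :
    (inc i a : ⨂[𝕜] i, A i) = tprod 𝕜 (Function.update (1 : ∀ j, A j) i a) := rfl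

lemma mulHom_inc (g : ∀ j, A j →ₐ[𝕜] S) (i : Fin d) (a : A i) :
    mulHom g (inc i a) = g i a := by
  rw [inc_apply, mulHom_tprod, Finset.prod_eq_single i]
  · simp
  · intro j _ hj
    simp [Function.update_of_ne hj]
  · simp

lemma tens_ext {f g : (⨂[𝕜] i, A i) →ₐ[𝕜] S} (h : ∀ i a, f (inc i a) = g (inc i a)) : f = g :=
  algHom_ext fun i => AlgHom.ext fun a => h i a

variable {Q : Fin d → Type*} (ev : ∀ i, Q i → A i →ₐ[𝕜] 𝕜)

/-- evaluation at a point -/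
noncomputable def evT (p : ∀ j, Q j) : (⨂[𝕜] i, A i) →ₐ[𝕜] 𝕜 := mulHom fun j => ev j (p j)

/-- contraction at a point -/
noncomputable def rho (i : Fin d) (p : ∀ j, Q j) : (⨂[𝕜] i, A i) →ₐ[𝕜] A i :=
  mulHom (Function.update (fun j => (Algebra.ofId 𝕜 (A i)).comp (ev j (p j))) i (AlgHom.id 𝕜 (A i)))

lemma rho_inc (i : Fin d) (p : ∀ j, Q j) (a : A i) : rho ev i p (inc i a) = a := by
  rw [rho, mulHom_inc]; simp

lemma rho_inc_ne {i j : Fin d} (h : j ≠ i) (p : ∀ j, Q j) (a : A j) :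
    rho ev i p (inc j a) = algebraMap 𝕜 _ (ev j (p j) a) := by
  rw [rho, mulHom_inc, Function.update_of_ne h]; rfl

lemma evT_inc (j : Fin d) (p : ∀ j, Q j) (a : A j) :
    evT ev p (inc j a) = ev j (p j) a := by
  rw [evT, mulHom_inc]

lemma evT_update (i : Fin d) (p : ∀ j, Q j) (q : Q i) (f) :
    evT ev (Function.update p i q) f = ev i q (rho ev i p f) := by
  have : evT ev (Function.update p i q) = (ev i q).comp (rho ev i p) := by
    refine tens_ext fun j a => ?_
    rw [evT_inc, AlgHom.comp_apply]
    by_cases h : j = i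
    · subst h; rw [rho_inc, Function.update_self]
    · rw [rho_inc_ne _ h, Function.update_of_ne h, AlgHom.commutes]; rfl
  rw [this]; rfl

lemma evT_eq (i : Fin d) (p : ∀ j, Q j) (f) : evT ev p f = ev i (p i) (rho ev i p f) := by
  conv_lhs => rw [← Function.update_eq_self i p]
  exact evT_update ev i p (p i) f

lemma rho_tprod (i : Fin d) (p : ∀ j, Q j) (a : ∀ j, A j) :
    rho ev i p (tprod 𝕜 a) = (∏ j ∈ Finset.univ.erase i, ev j (p j) (a j)) • a i := by
  rw [rho, mulHom_tprod, ← Finset.mul_prod_erase _ _ (Finset.mem_univ i), Algebra.smul_def, map_prod,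
    mul_comm]
  congr 1
  · refine Finset.prod_congr rfl fun j hj => ?_
    rw [Function.update_of_ne (Finset.ne_of_mem_erase hj)]; rfl
  · simp

lemma linHom_update (i : Fin d) (θ : ∀ j, A j →ₗ[𝕜] 𝕜) : ∃ L : (⨂[𝕜] i, A i) →ₗ[𝕜] A i,
    ∀ (τ : A i →ₗ[𝕜] 𝕜) f, linHom (Function.update θ i τ) f = τ (L f) := by
  refine ⟨linHom (Function.update (fun j => (Algebra.linearMap 𝕜 (A i)).comp (θ j)) i
    LinearMap.id), fun τ f => ?_⟩
  have : linHom (Function.update θ i τ) = τ.comp (linHom (Function.update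
      (fun j => (Algebra.linearMap 𝕜 (A i)).comp (θ j)) i LinearMap.id)) := by
    refine PiTensorProduct.ext (MultilinearMap.ext fun a => ?_)
    simp only [LinearMap.compMultilinearMap_apply, LinearMap.comp_apply, linHom_tprod]
    rw [← Finset.mul_prod_erase _ _ (Finset.mem_univ i),
      ← Finset.mul_prod_erase _ _ (Finset.mem_univ i), Function.update_self, Function.update_self]
    have h1 : ∏ j ∈ Finset.univ.erase i, (Function.update (fun j => (Algebra.linearMap 𝕜 (A i)).comp
        (θ j)) i LinearMap.id j) (a j) =
        algebraMap 𝕜 (A i) (∏ j ∈ Finset.univ.erase i, θ j (a j)) := by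
      rw [map_prod]
      refine Finset.prod_congr rfl fun j hj => ?_
      rw [Function.update_of_ne (Finset.ne_of_mem_erase hj)]; rfl
    have h2 : ∏ j ∈ Finset.univ.erase i, (Function.update θ i τ j) (a j) =
        ∏ j ∈ Finset.univ.erase i, θ j (a j) := by
      refine Finset.prod_congr rfl fun j hj => ?_
      rw [Function.update_of_ne (Finset.ne_of_mem_erase hj)]
    rw [h1, h2, LinearMap.id_apply, mul_comm (a i), ← Algebra.smul_def, map_smul, smul_eq_mul,
      mul_comm]
  rw [this]; rfl

lemma tens_sep (sep : ∀ i (a : A i), (∀ q, ev i q a = 0) → a = 0) {f : ⨂[𝕜] i, A i}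
    (h : ∀ p, evT ev p f = 0) : f = 0 := by
  have key : ∀ (s : Finset (Fin d)) (θ : ∀ j, A j →ₗ[𝕜] 𝕜),
      (∀ j, j ∉ s → ∃ q, θ j = (ev j q).toLinearMap) → linHom θ f = 0 := by
    intro s
    induction s using Finset.induction_on with
    | empty =>
      intro θ hθ
      choose p hp using fun j => hθ j (by simp)
      have hh : linHom θ = (evT ev p).toLinearMap := by
        refine PiTensorProduct.ext (MultilinearMap.ext fun a => ?_)
        simp only [LinearMap.compMultilinearMap_apply, linHom_tprod, AlgHom.toLinearMap_apply, evT,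
          mulHom_tprod, hp]
      rw [hh]; exact h p
    | insert i s hi ih =>
      intro θ hθ
      obtain ⟨L, hL⟩ := linHom_update i θ
      have h0 : L f = 0 := by
        refine sep i _ fun q => ?_
        have := hL (ev i q).toLinearMap f
        rw [AlgHom.toLinearMap_apply] at this
        rw [← this]
        refine ih _ fun j hj => ?_
        by_cases hji : j = i
        · subst hji; exact ⟨q, Function.update_self ..⟩
        · rw [Function.update_of_ne hji]
          exact hθ j (by simp [hji, hj])
      have := hL (θ i) f
      rwa [Function.update_eq_self, h0, map_zero] at this
  let b := fun i => Module.Basis.ofVectorSpace 𝕜 (A i)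
  refine (Basis.piTensorProduct b).ext_elem fun p => ?_
  rw [map_zero, Finsupp.zero_apply]
  have h2 : (Finsupp.lapply p).comp (Basis.piTensorProduct b).repr.toLinearMap =
      linHom fun j => (Finsupp.lapply (p j)).comp (b j).repr.toLinearMap := by
    refine PiTensorProduct.ext (MultilinearMap.ext fun a => ?_)
    simp [linHom_tprod]
  have h3 := LinearMap.congr_fun h2 f
  rw [key Finset.univ _ (by simp)] at h3
  exact h3

variable (F : ∀ i, ℕ → Submodule 𝕜 (A i))

/-- Filtration on the tensor product by degree in the `i`-th factor. -/
noncomputable def FT (i : Fin d) (m : ℕ) : Submodule 𝕜 (⨂[𝕜] i, A i) :=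
  ⨅ p : ∀ j, Q j, (F i m).comap (rho ev i p).toLinearMap

lemma mem_FT {i : Fin d} {m : ℕ} {f : ⨂[𝕜] i, A i} :
    f ∈ FT ev F i m ↔ ∀ p, rho ev i p f ∈ F i m := by
  simp [FT]

lemma tprod_mem_FT {i : Fin d} {m : ℕ} {a : ∀ j, A j} (h : a i ∈ F i m) :
    tprod 𝕜 a ∈ FT ev F i m := by
  rw [mem_FT]; intro p
  rw [rho_tprod]; exact Submodule.smul_mem _ _ h

lemma FT_eq_span (sep : ∀ i (a : A i), (∀ q, ev i q a = 0) → a = 0) (i : Fin d) (m : ℕ) :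
    FT ev F i m = Submodule.span 𝕜 {f | ∃ a : ∀ j, A j, a i ∈ F i m ∧ f = tprod 𝕜 a} := by
  apply le_antisymm
  · intro f hf
    rw [mem_FT] at hf
    obtain ⟨g, hg⟩ := LinearMap.exists_extend (LinearMap.id : F i m →ₗ[𝕜] F i m)
    let G : ∀ j, A j →ₗ[𝕜] A j := Function.update (fun j => LinearMap.id) i
      ((F i m).subtype.comp g)
    have hGi : G i = (F i m).subtype.comp g := Function.update_self ..
    have hGj : ∀ j, j ≠ i → G j = LinearMap.id := fun j hj => Function.update_of_ne hj ..
    have h1 : ∀ f, PiTensorProduct.map G f ∈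
        Submodule.span 𝕜 {f | ∃ a : ∀ j, A j, a i ∈ F i m ∧ f = tprod 𝕜 a} := by
      intro f
      induction f using PiTensorProduct.induction_on with
      | smul_tprod r a =>
        rw [map_smul, map_tprod]
        refine Submodule.smul_mem _ _ (Submodule.subset_span ⟨_, ?_, rfl⟩)
        simp [hGi]
      | add x y hx hy => rw [map_add]; exact Submodule.add_mem _ hx hy
    have h2 : ∀ p f, rho ev i p (PiTensorProduct.map G f) = G i (rho ev i p f) := by
      intro p f
      induction f using PiTensorProduct.induction_on with
      | smul_tprod r a =>
        rw [map_smul, map_smul, map_smul, map_smul, map_tprod, rho_tprod, rho_tprod, map_smul]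
        congr 2
        refine Finset.prod_congr rfl fun j hj => ?_
        rw [hGj j (Finset.ne_of_mem_erase hj)]; rfl
      | add x y hx hy => simp only [map_add, hx, hy]
    have h3 : PiTensorProduct.map G f = f := by
      rw [← sub_eq_zero]
      refine tens_sep ev sep fun p => ?_
      rw [map_sub, evT_eq ev i, evT_eq ev i, h2, sub_eq_zero, hGi]
      congr 1
      have := LinearMap.congr_fun hg ⟨_, hf p⟩
      exact congrArg Subtype.val this
    rw [← h3]; exact h1 f
  · rw [Submodule.span_le]
    rintro _ ⟨a, ha, rfl⟩
    exact tprod_mem_FT ev F ha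

lemma FT_mono (hF : ∀ i, Monotone (F i)) (i : Fin d) : Monotone (FT ev F i) := by
  intro m m' h f hf
  rw [mem_FT] at hf ⊢
  exact fun p => hF i h (hf p)

lemma FT_exists (hF : ∀ i, Monotone (F i)) (hex : ∀ i a, ∃ m, a ∈ F i m) (i : Fin d)
    (f : ⨂[𝕜] i, A i) : ∃ m, f ∈ FT ev F i m := by
  induction f using PiTensorProduct.induction_on with
  | smul_tprod r a =>
    obtain ⟨m, hm⟩ := hex i (a i)
    exact ⟨m, Submodule.smul_mem _ _ (tprod_mem_FT ev F hm)⟩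
  | add x y hx hy =>
    obtain ⟨m, hm⟩ := hx
    obtain ⟨m', hm'⟩ := hy
    exact ⟨max m m', Submodule.add_mem _ (FT_mono ev F hF i (le_max_left _ _) hm)
      (FT_mono ev F hF i (le_max_right _ _) hm')⟩

lemma FT_mul (hmul : ∀ i m m' (a b : A i), a ∈ F i m → b ∈ F i m' → a * b ∈ F i (m + m'))
    {i : Fin d} {m m' : ℕ} {f g : ⨂[𝕜] i, A i} (hf : f ∈ FT ev F i m) (hg : g ∈ FT ev F i m') :
    f * g ∈ FT ev F i (m + m') := by
  rw [mem_FT] at *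
  intro p
  rw [map_mul]; exact hmul _ _ _ _ _ (hf p) (hg p)

lemma bracket_zero_left {B : Type*} [CommRing B] [Algebra 𝕜 B] (P : PoissonStructure 𝕜 B) (b : B) :
    P.bracket 0 b = 0 := by
  have := P.smul_left 0 0 b
  simpa using this

lemma bracket_zero_right {B : Type*} [CommRing B] [Algebra 𝕜 B] (P : PoissonStructure 𝕜 B) (b : B) :
    P.bracket b 0 = 0 := by
  rw [P.antisymm, bracket_zero_left, neg_zero]

lemma bracket_one_right {B : Type*} [CommRing B] [Algebra 𝕜 B] (P : PoissonStructure 𝕜 B) (b : B) :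
    P.bracket b 1 = 0 := by
  have := P.leibniz b 1 1
  simpa using this

lemma bracket_add_right {B : Type*} [CommRing B] [Algebra 𝕜 B] (P : PoissonStructure 𝕜 B)
    (a b c : B) : P.bracket a (b + c) = P.bracket a b + P.bracket a c := by
  rw [P.antisymm, P.add_left, P.antisymm a b, P.antisymm a c]; ring

lemma bracket_smul_right {B : Type*} [CommRing B] [Algebra 𝕜 B] (P : PoissonStructure 𝕜 B)
    (r : 𝕜) (a b : B) : P.bracket a (r • b) = r • P.bracket a b := by
  rw [P.antisymm, P.smul_left, P.antisymm a b, smul_neg]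

variable {P : ∀ i, PoissonStructure 𝕜 (A i)} {PT : PoissonStructure 𝕜 (⨂[𝕜] i, A i)}

lemma FT_bracket (sep : ∀ i (a : A i), (∀ q, ev i q a = 0) → a = 0)
    (hPT : IsPiTensorBracket P PT) (hF : ∀ i, Monotone (F i))
    (hmul : ∀ i m m' (a b : A i), a ∈ F i m → b ∈ F i m' → a * b ∈ F i (m + m'))
    (w : Fin d → ℕ)
    (hbr : ∀ i m m' (a b : A i), a ∈ F i m → b ∈ F i m' → (P i).bracket a b ∈ F i (m + m' + w i))
    {i : Fin d} {m m' : ℕ} {f g : ⨂[𝕜] i, A i} (hf : f ∈ FT ev F i m) (hg : g ∈ FT ev F i m') :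
    PT.bracket f g ∈ FT ev F i (m + m' + w i) := by
  rw [FT_eq_span ev F sep] at hf hg
  induction hf using Submodule.span_induction with
  | mem f hf =>
    obtain ⟨a, ha, rfl⟩ := hf
    induction hg using Submodule.span_induction with
    | mem g hg =>
      obtain ⟨b, hb, rfl⟩ := hg
      rw [hPT a b]
      refine Submodule.sum_mem _ fun k _ => tprod_mem_FT ev F ?_
      by_cases hk : i = k
      · subst hk
        rw [Function.update_self]; exact hbr _ _ _ _ _ ha hb
      · rw [Function.update_of_ne hk]
        exact hF i (by omega) (hmul _ _ _ _ _ ha hb)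
    | zero => rw [bracket_zero_right]; exact Submodule.zero_mem _
    | add x y _ _ hx hy => rw [bracket_add_right]; exact Submodule.add_mem _ hx hy
    | smul r x _ hx => rw [bracket_smul_right]; exact Submodule.smul_mem _ _ hx
  | zero => rw [bracket_zero_left]; exact Submodule.zero_mem _
  | add x y _ _ hx hy => rw [PT.add_left]; exact Submodule.add_mem _ hx hy
  | smul r x _ hx => rw [PT.smul_left]; exact Submodule.smul_mem _ _ hx

lemma bracket_tprod_inc (hPT : IsPiTensorBracket P PT) (c : ∀ j, A j) (i : Fin d) (a : A i) :
    PT.bracket (tprod 𝕜 c) (inc i a) =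
      tprod 𝕜 (Function.update c i ((P i).bracket (c i) a)) := by
  rw [inc_apply, hPT, Finset.sum_eq_single i]
  · congr 1
    funext j
    by_cases h : j = i
    · subst h; simp
    · simp [Function.update_of_ne h]
  · intro k _ hk
    refine (PiTensorProduct.tprod 𝕜).map_coord_zero k ?_
    rw [Function.update_self, Function.update_of_ne hk, Pi.one_apply, bracket_one_right]
  · simp

lemma bracket_inc_inc (hPT : IsPiTensorBracket P PT) (i : Fin d) (a b : A i) :
    PT.bracket (inc i a) (inc i b) = inc i ((P i).bracket a b) := by
  rw [inc_apply i a, bracket_tprod_inc hPT, inc_apply]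
  simp

lemma bracket_inc_ne (hPT : IsPiTensorBracket P PT) {i j : Fin d} (h : i ≠ j) (a : A i) (b : A j) :
    PT.bracket (inc i a) (inc j b) = 0 := by
  rw [inc_apply i a, bracket_tprod_inc hPT]
  refine (PiTensorProduct.tprod 𝕜).map_coord_zero j ?_
  rw [Function.update_self, Function.update_of_ne h.symm, Pi.one_apply, (P j).antisymm,
    bracket_one_right, neg_zero]

lemma rho_bracket_inc (hPT : IsPiTensorBracket P PT) (i : Fin d) (p : ∀ j, Q j) (a : A i) (f) :
    rho ev i p (PT.bracket f (inc i a)) = (P i).bracket (rho ev i p f) a := by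
  induction f using PiTensorProduct.induction_on with
  | smul_tprod r c =>
    rw [PT.smul_left, bracket_tprod_inc hPT, map_smul, map_smul, rho_tprod, rho_tprod,
      (P i).smul_left, (P i).smul_left, Function.update_self]
    congr 2
    refine Finset.prod_congr rfl fun j hj => ?_
    rw [Function.update_of_ne (Finset.ne_of_mem_erase hj)]
  | add x y hx hy => rw [PT.add_left, map_add, hx, hy, map_add, (P i).add_left]

/-- an element constant in all the other directions comes from a factor -/
lemma eq_inc (sep : ∀ i (a : A i), (∀ q, ev i q a = 0) → a = 0)
    (h0 : ∀ i a, a ∈ F i 0 → ∃ c, a = algebraMap 𝕜 (A i) c) (j : Fin d) (p : ∀ j, Q j) {f}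
    (hf : ∀ i, i ≠ j → f ∈ FT ev F i 0) : f = inc j (rho ev j p f) := by
  have hupd : ∀ i, i ≠ j → ∀ (p : ∀ j, Q j) (q : Q i),
      evT ev (Function.update p i q) f = evT ev p f := by
    intro i hi p q
    obtain ⟨c, hc⟩ := h0 i _ ((mem_FT ev F).1 (hf i hi) p)
    rw [evT_update, evT_eq ev i, hc, AlgHom.commutes, AlgHom.commutes]
  have key : ∀ (s : Finset (Fin d)), j ∉ s → ∀ p p' : ∀ j, Q j, (∀ i, i ∉ s → p i = p' i) →
      evT ev p f = evT ev p' f := by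
    intro s
    induction s using Finset.induction_on with
    | empty => intro _ p p' h; rw [show p = p' from funext fun i => h i (by simp)]
    | insert i s hi ih =>
      intro hj p p' h
      have hij : i ≠ j := by rintro rfl; simp at hj
      rw [← hupd i hij p (p' i)]
      refine ih (by simp at hj; tauto) _ _ fun k hk => ?_
      by_cases hki : k = i
      · subst hki; simp
      · rw [Function.update_of_ne hki]
        exact h k (by simp [hki, hk])
  rw [← sub_eq_zero]
  refine tens_sep ev sep fun p' => ?_
  rw [map_sub, sub_eq_zero, evT_inc, ← evT_update]
  refine key (Finset.univ.erase j) (by simp) _ _ fun i hi => ?_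
  have : i = j := by simpa using hi
  subst this; simp

end tens
end PoissonFin

namespace PoissonFin

open scoped TensorProduct
open PiTensorProduct MvPolynomial

lemma jac_X {𝕜 : Type*} [Field 𝕜] (Ω : MvPolynomial (Fin 3) 𝕜) (l : Fin 3) :
    jacBracket Ω (X (l + 1)) (X (l + 2)) = pderiv l Ω := by
  rw [jac_eq]
  fin_cases l <;> simp [pderiv_X]

lemma descend {p : ℕ → Prop} {m : ℕ} (k : ℕ) (hm : p m) (hk : k ≤ m)
    (h : ∀ D, k < D → p D → p (D - 1)) : p k := by
  induction m with
  | zero => rwa [Nat.le_zero.1 hk]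
  | succ m ih =>
    by_cases hkm : k = m + 1
    · rwa [hkm]
    · exact ih (by simpa using h _ (by omega) hm) (by omega)

section main
variable {𝕜 : Type*} [Field 𝕜] {d : ℕ} {Ω : Fin d → MvPolynomial (Fin 3) 𝕜} {n : Fin d → ℕ}
  {ξ : Fin d → 𝕜}

/-- The filtration of the tensor product of surfaces. -/
noncomputable abbrev FS (Ω : Fin d → MvPolynomial (Fin 3) 𝕜) (ξ : Fin d → 𝕜) (i : Fin d) (m : ℕ) :
    Submodule 𝕜 (⨂[𝕜] i, PQuot 𝕜 (Ω i) (ξ i)) :=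
  FT (fun i => (evA : Pt (Ω i) (ξ i) → _)) (fun i => Fil (Ω i) (ξ i)) i m

lemma FS_mono {i : Fin d} {m m' : ℕ} (h : m ≤ m') : FS Ω ξ i m ≤ FS Ω ξ i m' :=
  FT_mono _ _ (fun _ _ _ h => Fil_mono h) i h

lemma FS_mul {i : Fin d} {m m' : ℕ} {f g} (hf : f ∈ FS Ω ξ i m) (hg : g ∈ FS Ω ξ i m') :
    f * g ∈ FS Ω ξ i (m + m') :=
  FT_mul _ _ (fun _ _ _ _ _ ha hb => Fil_mul ha hb) hf hg

lemma FS_one (i : Fin d) : 1 ∈ FS Ω ξ i 0 := by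
  rw [mem_FT]; intro p
  rw [map_one, ← map_one (algebraMap 𝕜 _)]
  exact Fil_algebraMap _ _

lemma FS_pow {i : Fin d} {m : ℕ} {f} (hf : f ∈ FS Ω ξ i m) (k : ℕ) :
    f ^ k ∈ FS Ω ξ i (k * m) := by
  induction k with
  | zero => rw [pow_zero, zero_mul]; exact FS_one i
  | succ k ih => rw [pow_succ, Nat.succ_mul]; exact FS_mul ih hf

lemma FS_aeval {i : Fin d} {D e : ℕ} {ψ : MvPolynomial (Fin 3) 𝕜 →ₐ[𝕜] ⨂[𝕜] i, PQuot 𝕜 (Ω i) (ξ i)}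
    (hf : ∀ l, ψ (X l) ∈ FS Ω ξ i D) {p : MvPolynomial (Fin 3) 𝕜} (hp : p.totalDegree ≤ e) :
    ψ p ∈ FS Ω ξ i (e * D) := by
  rw [aeval_unique ψ, aeval_def, eval₂_eq']
  refine Submodule.sum_mem _ fun s hs => ?_
  rw [← Algebra.smul_def]
  refine Submodule.smul_mem _ _ ?_
  have h1 : ∏ l, (ψ ∘ X) l ^ s l ∈ FS Ω ξ i ((s 0 + s 1 + s 2) * D) := by
    rw [Fin.prod_univ_three, add_mul, add_mul]
    exact FS_mul (FS_mul (FS_pow (hf _) _) (FS_pow (hf _) _)) (FS_pow (hf _) _)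
  refine FS_mono (Nat.mul_le_mul_right _ (le_trans ?_ hp)) h1
  have := le_totalDegree hs
  rw [Finsupp.sum_fintype _ _ (by simp), Fin.sum_univ_three] at this
  exact this

variable (hG : ∀ i, Good (Ω i) (n i))
include hG

lemma FS_pow_lower {i : Fin d} {m N M : ℕ} (hm : 1 ≤ m) {f}
    (ha : f ∈ FS Ω ξ i m) (hM : M < m * N) (hN : f ^ N ∈ FS Ω ξ i M) : f ∈ FS Ω ξ i (m - 1) := by
  rw [mem_FT] at *
  intro p
  have h := hN p
  rw [map_pow] at h
  exact Fil_pow_lower (hG i) hm (ha p) hM h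

variable {P : ∀ i, PoissonStructure 𝕜 (PQuot 𝕜 (Ω i) (ξ i))}
    (hP : ∀ i, IsInducedBracket (Ω i) (ξ i) (P i))
    {PT : PoissonStructure 𝕜 (⨂[𝕜] i, PQuot 𝕜 (Ω i) (ξ i))}
    (hPT : IsPiTensorBracket P PT)
include hP hPT

lemma FS_bracket [IsAlgClosed 𝕜] {i : Fin d} {m m' : ℕ} {f g} (hf : f ∈ FS Ω ξ i m)
    (hg : g ∈ FS Ω ξ i m') : PT.bracket f g ∈ FS Ω ξ i (m + m' + (n i - 3)) :=
  FT_bracket (w := fun i => n i - 3) _ _ (fun i _ h => evA_sep (hG i) h) hPT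
    (fun _ _ _ h => Fil_mono h) (fun _ _ _ _ _ ha hb => Fil_mul ha hb)
    (fun i _ _ _ _ ha hb => Fil_bracket (hG i) (hP i) ha hb) hf hg

lemma inc_pderiv (j : Fin d) (l : Fin 3) :
    (inc j (mkA (Ω j) (ξ j) (pderiv l (Ω j))) : ⨂[𝕜] i, PQuot 𝕜 (Ω i) (ξ i)) =
    PT.bracket (inc j (mkA (Ω j) (ξ j) (X (l+1)))) (inc j (mkA (Ω j) (ξ j) (X (l+2)))) := by
  rw [bracket_inc_inc hPT, ← jac_X, ← mkA_eq, ← hP]; rfl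

omit hP in
lemma K3 [CharZero 𝕜] (hP : ∀ i, IsInducedBracket (Ω i) (ξ i) (P i)) {i : Fin d} {m : ℕ}
    (hm : 1 ≤ m) {f} (hf : f ∈ FS Ω ξ i m)
    (hc : ∀ l, PT.bracket f (inc i (mkA (Ω i) (ξ i) (X l))) = 0) : f ∈ FS Ω ξ i (m - 1) := by
  rw [mem_FT] at *
  intro p
  refine Fil_central_lower (hG i) (hP i) hm (hf p) fun l => ?_
  rw [← rho_bracket_inc _ hPT, hc, map_zero]

lemma K1 [IsAlgClosed 𝕜] {ψ : (⨂[𝕜] i, PQuot 𝕜 (Ω i) (ξ i)) ≃ₐ[𝕜] ⨂[𝕜] i, PQuot 𝕜 (Ω i) (ξ i)}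
    (hψ : ∀ a b, ψ (PT.bracket a b) = PT.bracket (ψ a) (ψ b)) {i j : Fin d} {D : ℕ} (hD : 1 ≤ D)
    (hw : n i - 3 < (n j - 3) * D)
    (h : ∀ l, ψ (inc j (mkA (Ω j) (ξ j) (X l))) ∈ FS Ω ξ i D) :
    ∀ l, ψ (inc j (mkA (Ω j) (ξ j) (X l))) ∈ FS Ω ξ i (D - 1) := by
  intro u
  obtain ⟨N, hN, c, hc, hcert⟩ := (hG j).cert u
  have hn := (hG j).deg
  let Ψ : MvPolynomial (Fin 3) 𝕜 →ₐ[𝕜] ⨂[𝕜] i, PQuot 𝕜 (Ω i) (ξ i) :=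
    (ψ : _ →ₐ[𝕜] _).comp ((inc (A := fun i => PQuot 𝕜 (Ω i) (ξ i)) j).comp (mkA (Ω j) (ξ j)))
  have hΨ : ∀ f, Ψ f = ψ (inc j (mkA (Ω j) (ξ j) f)) := fun _ => rfl
  have h1 : ∀ l, Ψ (pderiv l (Ω j)) ∈ FS Ω ξ i (D + D + (n i - 3)) := by
    intro l
    rw [hΨ, inc_pderiv hG hP hPT, hψ]
    exact FS_bracket hG hP hPT (h _) (h _)
  have h2 : ∀ l, Ψ (c l) ∈ FS Ω ξ i ((N - (n j - 1)) * D) := fun l =>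
    FS_aeval h (hc l).totalDegree_le
  have h3 : Ψ (X u) ^ N ∈ FS Ω ξ i ((N - (n j - 1)) * D + (D + D + (n i - 3))) := by
    rw [← map_pow, hcert, map_sum]
    refine Submodule.sum_mem _ fun l _ => ?_
    rw [map_mul]; exact FS_mul (h2 l) (h1 l)
  refine FS_pow_lower hG hD (h u) ?_ h3
  obtain ⟨e, rfl⟩ := Nat.exists_eq_add_of_le hN
  obtain ⟨w, hw'⟩ : ∃ w, n j = w + 3 := ⟨n j - 3, by omega⟩
  rw [hw'] at hw ⊢
  simp only [Nat.add_sub_cancel_left, Nat.add_sub_cancel] at hw ⊢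
  have : w + 3 - 1 = w + 2 := rfl
  rw [this]
  nlinarith

lemma all_deg [IsAlgClosed 𝕜]
    {ψ : (⨂[𝕜] i, PQuot 𝕜 (Ω i) (ξ i)) ≃ₐ[𝕜] ⨂[𝕜] i, PQuot 𝕜 (Ω i) (ξ i)}
    (hψ : ∀ a b, ψ (PT.bracket a b) = PT.bracket (ψ a) (ψ b)) (i j : Fin d) (k : ℕ)
    (hk : ∀ D, k < D → n i - 3 < (n j - 3) * D) :
    ∀ l, ψ (inc j (mkA (Ω j) (ξ j) (X l))) ∈ FS Ω ξ i k := by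
  choose m hm using fun l => FT_exists (fun i => (evA : Pt (Ω i) (ξ i) → _))
    (fun i => Fil (Ω i) (ξ i)) (fun _ _ _ h => Fil_mono h) (fun _ a => Fil_exists a) i
    (ψ (inc j (mkA (Ω j) (ξ j) (X l))))
  refine descend (p := fun k => ∀ l, ψ (inc j (mkA (Ω j) (ξ j) (X l))) ∈ FS Ω ξ i k)
    (m := m 0 + m 1 + m 2 + k) k (fun l => FS_mono ?_ (hm l)) (by omega) fun D hD h =>
    K1 hG hP hPT hψ (by omega) (hk D hD) h
  fin_cases l <;> simp <;> omega

lemma main_affine [IsAlgClosed 𝕜] [CharZero 𝕜] (hdist : Function.Injective n) (j : Fin d) :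
    ∀ ψ : (⨂[𝕜] i, PQuot 𝕜 (Ω i) (ξ i)) ≃ₐ[𝕜] ⨂[𝕜] i, PQuot 𝕜 (Ω i) (ξ i),
    (∀ a b, ψ (PT.bracket a b) = PT.bracket (ψ a) (ψ b)) → ∀ l, ∃ a ∈ Fil (Ω j) (ξ j) 1,
      ψ (inc j (mkA (Ω j) (ξ j) (X l))) = inc j a := by
  induction hM : (∑ i, n i) - n j using Nat.strong_induction_on generalizing j with
  | _ M ih =>
  intro ψ hψ l
  have hsymm : ∀ a b, ψ.symm (PT.bracket a b) = PT.bracket (ψ.symm a) (ψ.symm b) := by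
    intro a b
    apply ψ.injective
    rw [hψ]; simp
  have hnj := (hG j).deg
  have hle : ∀ i, n i ≤ ∑ i, n i := fun i =>
    Finset.single_le_sum (f := n) (fun _ _ => Nat.zero_le _) (Finset.mem_univ i)
  have h1 : ψ (inc j (mkA (Ω j) (ξ j) (X l))) ∈ FS Ω ξ j 1 := by
    refine all_deg hG hP hPT hψ j j 1 (fun D hD => ?_) l
    have : (n j - 3) * 2 ≤ (n j - 3) * D := Nat.mul_le_mul_left _ hD
    omega
  have h0 : ∀ i, i ≠ j → ψ (inc j (mkA (Ω j) (ξ j) (X l))) ∈ FS Ω ξ i 0 := by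
    intro i hij
    have hni := (hG i).deg
    rcases lt_or_gt_of_ne (fun h => hij (hdist h) : n i ≠ n j) with hlt | hgt
    · refine all_deg hG hP hPT hψ i j 0 (fun D hD => ?_) l
      have : (n j - 3) * 1 ≤ (n j - 3) * D := Nat.mul_le_mul_left _ hD
      omega
    · obtain ⟨m, hm⟩ := FT_exists (fun i => (evA : Pt (Ω i) (ξ i) → _))
        (fun i => Fil (Ω i) (ξ i)) (fun _ _ _ h => Fil_mono h) (fun _ a => Fil_exists a) i
        (ψ (inc j (mkA (Ω j) (ξ j) (X l))))
      refine descend (p := fun k => ψ (inc j (mkA (Ω j) (ξ j) (X l))) ∈ FS Ω ξ i k) 0 hm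
        (Nat.zero_le _) fun D hD h => K3 hG hPT hP hD h fun u => ?_
      obtain ⟨a, -, ha⟩ := ih ((∑ i, n i) - n i) (by have := hle i; omega) i rfl ψ.symm hsymm u
      apply ψ.symm.injective
      rw [hsymm, ha, ψ.symm_apply_apply, map_zero]
      exact bracket_inc_ne hPT hij.symm _ _
  have p : ∀ j, Pt (Ω j) (ξ j) := fun j => (Pt_nonempty (hG j)).some
  refine ⟨_, (mem_FT _ _).1 h1 p, ?_⟩
  exact eq_inc _ (fun i => Fil (Ω i) (ξ i)) (fun i _ h => evA_sep (hG i) h)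
    (fun _ _ h => Fil_zero_iff h) j p h0

end main
end PoissonFin

namespace PoissonFin

open scoped TensorProduct
open PiTensorProduct MvPolynomial

section aff
variable {𝕜 : Type*} [Field 𝕜]

lemma chain_rule {B : Type*} [CommRing B] [Algebra 𝕜 B] (D : Derivation 𝕜 B B) (x : Fin 3 → B)
    (p : MvPolynomial (Fin 3) 𝕜) : D (aeval x p) = ∑ l, aeval x (pderiv l p) * D (x l) := by
  induction p using MvPolynomial.induction_on with
  | C a => rw [← algebraMap_eq, AlgHom.commutes, D.map_algebraMap]; simp [algebraMap_eq]
  | add p q hp hq => simp only [map_add, hp, hq, add_mul, Finset.sum_add_distrib]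
  | mul_X p i hp =>
    rw [map_mul, D.leibniz, hp, aeval_X, smul_eq_mul, smul_eq_mul]
    simp only [Derivation.leibniz, map_add, smul_eq_mul, map_mul, aeval_X, add_mul,
      Finset.sum_add_distrib]
    congr 1
    · rw [Finset.sum_eq_single i]
      · simp
      · intro j _ hj; simp [pderiv_X_of_ne hj.symm]
      · simp
    · rw [Finset.mul_sum]
      exact Finset.sum_congr rfl fun _ _ => by ring

/-- the affine polynomials attached to a matrix and a vector -/
noncomputable def Laf (M : Matrix (Fin 3) (Fin 3) 𝕜) (b : Fin 3 → 𝕜) (l : Fin 3) :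
    MvPolynomial (Fin 3) 𝕜 := ∑ m, C (M l m) * X m + C (b l)

lemma exists_Laf {L : Fin 3 → MvPolynomial (Fin 3) 𝕜} (h : ∀ l, (L l).totalDegree ≤ 1) :
    ∃ M b, L = Laf M b := by
  refine ⟨fun l m => coeff 0 (pderiv m (L l)), fun l => coeff 0 (L l), funext fun l => ?_⟩
  have h1 := (homogeneousComponent_isHomogeneous 1 (L l)).sum_X_mul_pderiv
  have h2 : ∀ m, pderiv m (homogeneousComponent 1 (L l)) = C (coeff 0 (pderiv m (L l))) := by
    intro m
    rw [← homogeneousComponent_zero, hc_pderiv]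
  simp only [h2, one_smul] at h1
  have h3 : L l = homogeneousComponent 0 (L l) + homogeneousComponent 1 (L l) := by
    conv_lhs => rw [← sum_homogeneousComponent (L l)]
    rcases Nat.le_one_iff_eq_zero_or_eq_one.1 (h l) with h0 | h0
    · rw [h0, homogeneousComponent_eq_zero 1 (L l) (by omega)]; simp
    · rw [h0]; simp [Finset.sum_range_succ]
  refine h3.trans ?_
  rw [← h1, homogeneousComponent_zero, add_comm]
  unfold Laf
  congr 1
  exact Finset.sum_congr rfl fun m _ => mul_comm _ _

lemma pderiv_Laf (M : Matrix (Fin 3) (Fin 3) 𝕜) (b : Fin 3 → 𝕜) (l k : Fin 3) :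
    pderiv k (Laf M b l) = C (M l k) := by
  rw [Laf, map_add, pderiv_C, add_zero, map_sum, Finset.sum_eq_single k]
  · simp
  · intro j _ hj; simp [pderiv_X_of_ne hj]
  · simp

lemma totalDegree_Laf (M : Matrix (Fin 3) (Fin 3) 𝕜) (b : Fin 3 → 𝕜) (l : Fin 3) :
    (Laf M b l).totalDegree ≤ 1 := by
  refine (totalDegree_add _ _).trans (max_le ?_ (by simp))
  refine (totalDegree_finsetSum _ _).trans (Finset.sup_le fun i hi => ?_)
  refine (totalDegree_mul _ _).trans ?_
  simp

lemma totalDegree_aeval_le {L : Fin 3 → MvPolynomial (Fin 3) 𝕜} (h : ∀ l, (L l).totalDegree ≤ 1)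
    {p : MvPolynomial (Fin 3) 𝕜} : (aeval L p).totalDegree ≤ p.totalDegree := by
  rw [aeval_def, eval₂_eq']
  refine (totalDegree_finsetSum _ _).trans (Finset.sup_le fun s hs => ?_)
  have h1 := le_totalDegree hs
  rw [Finsupp.sum_fintype _ _ (by simp), Fin.sum_univ_three] at h1
  rw [Fin.prod_univ_three, algebraMap_eq]
  have h2 : ∀ l, (L l ^ s l).totalDegree ≤ s l := fun l =>
    (totalDegree_pow _ _).trans (by simpa using Nat.mul_le_mul_left (s l) (h l))
  have h3 := totalDegree_mul (C (coeff s p)) (L 0 ^ s 0 * L 1 ^ s 1 * L 2 ^ s 2)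
  have h4 := totalDegree_mul (L 0 ^ s 0 * L 1 ^ s 1) (L 2 ^ s 2)
  have h5 := totalDegree_mul (L 0 ^ s 0) (L 1 ^ s 1)
  have := h2 0
  have := h2 1
  have := h2 2
  rw [totalDegree_C] at h3
  omega

lemma jac_Laf (Ω : MvPolynomial (Fin 3) 𝕜) (M : Matrix (Fin 3) (Fin 3) 𝕜) (b : Fin 3 → 𝕜)
    (l : Fin 3) : jacBracket Ω (Laf M b (l + 1)) (Laf M b (l + 2)) =
      ∑ k, C (M.adjugate k l) * pderiv k Ω := by
  rw [jac_eq]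
  simp only [pderiv_Laf, Fin.sum_univ_three, Matrix.adjugate_fin_three]
  fin_cases l <;> simp <;> ring

/-- The point obtained by an affine transformation. -/
def afpt {B : Type*} [CommRing B] [Algebra 𝕜 B] (M : Matrix (Fin 3) (Fin 3) B) (b : Fin 3 → B)
    (v : Fin 3 → 𝕜) (a : Fin 3) : B := ∑ m, M a m * algebraMap 𝕜 B (v m) + b a

/-- The system of equations satisfied by the affine automorphisms. -/
def Sol (Ω : MvPolynomial (Fin 3) 𝕜) (ξ : 𝕜) {B : Type*} [CommRing B] [Algebra 𝕜 B]
    (M : Matrix (Fin 3) (Fin 3) B) (b : Fin 3 → B) : Prop :=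
  (∀ (v : Fin 3 → 𝕜) l, aeval (afpt M b v) (pderiv l Ω) =
    ∑ k, M.adjugate k l * algebraMap 𝕜 B (aeval v (pderiv k Ω))) ∧
  ∀ v : Fin 3 → 𝕜, aeval (afpt M b v) Ω - algebraMap 𝕜 B ξ =
    M.det * algebraMap 𝕜 B (aeval v Ω - ξ)

lemma aeval_Laf (M : Matrix (Fin 3) (Fin 3) 𝕜) (b : Fin 3 → 𝕜) (v : Fin 3 → 𝕜)
    (p : MvPolynomial (Fin 3) 𝕜) : aeval v (aeval (Laf M b) p) = aeval (afpt M b v) p := by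
  have : (aeval v).comp (aeval (Laf M b)) = (aeval (afpt M b v) : MvPolynomial (Fin 3) 𝕜 →ₐ[𝕜] 𝕜) := by
    ext l
    simp [Laf, afpt]
  rw [← this]; rfl

lemma Good.exists_pderiv_ne {Ω : MvPolynomial (Fin 3) 𝕜} {n : ℕ} (hG : Good Ω n) :
    ∃ k, pderiv k Ω ≠ 0 := by
  by_contra! h
  obtain ⟨N, -, c, -, hc⟩ := hG.cert 0
  simp only [h, mul_zero, Finset.sum_const_zero] at hc
  exact pow_ne_zero N (X_ne_zero 0) hc

lemma sol_of_affine {Ω : MvPolynomial (Fin 3) 𝕜} {n : ℕ} {ξ : 𝕜} (hG : Good Ω n)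
    {P : PoissonStructure 𝕜 (PQuot 𝕜 Ω ξ)} (hP : IsInducedBracket Ω ξ P)
    {M : Matrix (Fin 3) (Fin 3) 𝕜} {b : Fin 3 → 𝕜}
    (ψ : PQuot 𝕜 Ω ξ →ₐ[𝕜] PQuot 𝕜 Ω ξ) (hinj : Function.Injective ψ)
    (hψ : ∀ x y, ψ (P.bracket x y) = P.bracket (ψ x) (ψ y))
    (hL : ∀ l, ψ (mkA Ω ξ (X l)) = mkA Ω ξ (Laf M b l)) : M.det ≠ 0 ∧ Sol Ω ξ M b := by
  have hn := hG.deg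
  have hall : ∀ f, ψ (mkA Ω ξ f) = mkA Ω ξ (aeval (Laf M b) f) := by
    have : ψ.comp (mkA Ω ξ) = (mkA Ω ξ).comp (aeval (Laf M b)) := by
      ext l
      simp only [AlgHom.comp_apply, hL, aeval_X]
    intro f
    exact AlgHom.congr_fun this f
  -- the gradient equation
  have h1 : ∀ l, aeval (Laf M b) (pderiv l Ω) = ∑ k, C (M.adjugate k l) * pderiv k Ω := by
    intro l
    rw [← jac_Laf (b := b), ← sub_eq_zero]
    refine hG.eq_zero_of_dvd (ξ := ξ) ?_ ?_
    · rw [← mkA_eq_iff, ← hall, ← jac_X, ← mkA_eq, ← hP, hψ, mkA_eq, mkA_eq, hL, hL, ← mkA_eq,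
        ← mkA_eq, hP, mkA_eq]
    · refine lt_of_le_of_lt (MvPolynomial.totalDegree_sub _ _) (max_lt ?_ ?_)
      · refine lt_of_le_of_lt (totalDegree_aeval_le (totalDegree_Laf M b)) ?_
        have := (hG.hom.pderiv (i := l)).totalDegree_le
        omega
      · have := totalDegree_jac_le hG.hom hG.deg (totalDegree_Laf M b (l + 1))
          (totalDegree_Laf M b (l + 2))
        omega
  -- the equation
  have h2 : ∃ c : 𝕜, aeval (Laf M b) Ω - C ξ = C c * (Ω - C ξ) := by
    have hd : Ω - C ξ ∣ aeval (Laf M b) Ω - C ξ := by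
      have e : aeval (Laf M b) (Ω - C ξ) = aeval (Laf M b) Ω - C ξ := by
        rw [map_sub, ← algebraMap_eq, AlgHom.commutes]
      rw [← e, ← mkA_eq_zero, ← hall, mkA_eq_zero.2 dvd_rfl, map_zero]
    obtain ⟨h, hh⟩ := hd
    by_cases h0 : h = 0
    · exact ⟨0, by rw [hh, h0]; simp⟩
    have h3 := hG.mul_degree hh h0
    have h4 : (aeval (Laf M b) Ω - C ξ).totalDegree ≤ n := by
      refine (MvPolynomial.totalDegree_sub _ _).trans (max_le ?_ (by simp))
      exact (totalDegree_aeval_le (totalDegree_Laf M b)).trans hG.hom.totalDegree_le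
    have h5 : h.totalDegree = 0 := by omega
    rw [totalDegree_eq_zero_iff_eq_C] at h5
    exact ⟨_, by rw [hh, mul_comm, ← h5]⟩
  obtain ⟨c, hc⟩ := h2
  have h3 : c = M.det := by
    obtain ⟨k, hk⟩ := hG.exists_pderiv_ne
    have e1 := congrArg (pderiv k) hc
    rw [map_sub, pderiv_C, sub_zero, chain_rule] at e1
    have e2 : ∑ l, aeval (Laf M b) (pderiv l Ω) * pderiv k (Laf M b l) =
        C M.det * pderiv k Ω := by
      simp only [h1, pderiv_Laf, Finset.sum_mul]
      rw [Finset.sum_comm]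
      have e3 : ∀ m, ∑ l, C (M.adjugate m l) * pderiv m Ω * C (M l k) =
          C ((M.adjugate * M) m k) * pderiv m Ω := by
        intro m
        rw [Matrix.mul_apply, map_sum, Finset.sum_mul]
        refine Finset.sum_congr rfl fun l _ => ?_
        rw [map_mul]; ring
      simp only [e3, Matrix.adjugate_mul]
      rw [Finset.sum_eq_single k]
      · simp
      · intro m _ hm; simp [hm]
      · simp
    rw [e2] at e1
    simp only [Derivation.leibniz, pderiv_C, map_sub, sub_zero, smul_eq_mul, mul_zero,
      add_zero] at e1
    exact (C_injective _ _ (mul_right_cancel₀ hk e1)).symm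
  subst h3
  refine ⟨?_, ?_, ?_⟩
  · intro hdet
    obtain ⟨w, hw, hwM⟩ := Matrix.exists_vecMul_eq_zero_iff.2 hdet
    have e1 : ∑ l, C (w l) * Laf M b l = C (∑ l, w l * b l) := by
      simp only [Laf, mul_add, Finset.sum_add_distrib, Finset.mul_sum, map_sum, map_mul]
      rw [Finset.sum_comm]
      have : ∀ m, ∑ l, C (w l) * (C (M l m) * X m) = (0 : MvPolynomial (Fin 3) 𝕜) := by
        intro m
        have := congrFun hwM m
        simp only [Matrix.vecMul, dotProduct, Pi.zero_apply] at this
        simp only [← mul_assoc, ← C_mul, ← Finset.sum_mul]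
        rw [← map_sum, this, C_0, zero_mul]
      simp [this]
    have e2 : mkA Ω ξ (∑ l, C (w l) * X l - C (∑ l, w l * b l)) = 0 := by
      apply hinj
      rw [hall, map_zero, mkA_eq_zero]
      have : aeval (Laf M b) (∑ l, C (w l) * X l - C (∑ l, w l * b l)) = 0 := by
        rw [map_sub, map_sum]
        simp only [map_mul, aeval_X, ← algebraMap_eq, AlgHom.commutes]
        rw [algebraMap_eq, e1, sub_self]
      rw [this]; exact dvd_zero _
    have e3 : ∑ l, C (w l) * X l - C (∑ l, w l * b l) = 0 := by
      refine hG.eq_zero_of_dvd (mkA_eq_zero.1 e2) ?_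
      refine lt_of_le_of_lt (MvPolynomial.totalDegree_sub _ _) (max_lt ?_ (by rw [totalDegree_C]; omega))
      refine lt_of_le_of_lt (totalDegree_finsetSum _ _) ?_
      rw [Finset.sup_lt_iff (by simp; omega)]
      intro l _
      have := totalDegree_mul (C (w l)) (X l)
      simp at this
      omega
    apply hw
    funext l
    have e4 := congrArg (pderiv l) e3
    rw [map_sub, pderiv_C, sub_zero, map_sum, Finset.sum_eq_single l] at e4
    · simpa using e4
    · intro j _ hj; simp [pderiv_X_of_ne hj]
    · simp
  · intro v l
    have := congrArg (aeval v) (h1 l)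
    rw [aeval_Laf, map_sum] at this
    rw [this]
    refine Finset.sum_congr rfl fun k _ => ?_
    rw [map_mul, ← algebraMap_eq, AlgHom.commutes]; rfl
  · intro v
    have := congrArg (aeval v) hc
    rw [map_sub, aeval_Laf, ← algebraMap_eq, AlgHom.commutes, map_mul, AlgHom.commutes, map_sub,
      AlgHom.commutes] at this
    exact this

end aff
end PoissonFin

namespace PoissonFin

open MvPolynomial

section syz
variable {𝕜 : Type*} [Field 𝕜]

lemma pderiv_comm' (i j : Fin 3) (p : MvPolynomial (Fin 3) 𝕜) :
    pderiv i (pderiv j p) = pderiv j (pderiv i p) := by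
  induction p using MvPolynomial.induction_on with
  | C a => simp
  | add p q hp hq => simp only [map_add, hp, hq]
  | mul_X p k hp =>
    have hX : ∀ a b : Fin 3, pderiv a (pderiv b (X k : MvPolynomial (Fin 3) 𝕜)) = 0 := by
      intro a b
      rw [pderiv_X]
      by_cases h : k = b
      · subst h; simp
      · simp [h]
    simp only [Derivation.leibniz, smul_eq_mul, map_add, hX, hp]
    ring

variable {Ω : MvPolynomial (Fin 3) 𝕜} {n : ℕ}

lemma Good.grad_ne (hG : Good Ω n) {v : Fin 3 → 𝕜} (h : ∀ l, aeval v (pderiv l Ω) = 0) : v = 0 := by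
  funext u
  obtain ⟨N, -, c, -, hc⟩ := hG.cert u
  have := congrArg (aeval v) hc
  simp only [map_pow, aeval_X, map_sum, map_mul, h, mul_zero, Finset.sum_const_zero] at this
  exact eq_zero_of_pow_eq_zero this

/-- Euler relation for the gradient at a point. -/
lemma euler_pt (hG : Good Ω n) (v : Fin 3 → 𝕜) (m : Fin 3) :
    ∑ l, v l * aeval v (pderiv l (pderiv m Ω)) = ((n - 1 : ℕ) : 𝕜) * aeval v (pderiv m Ω) := by
  have := congrArg (aeval v) ((hG.hom.pderiv (i := m)).sum_X_mul_pderiv)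
  rw [map_sum, nsmul_eq_mul, map_mul, map_natCast] at this
  rw [← this]
  simp

lemma coeff_line {k : ℕ} {p : MvPolynomial (Fin 3) 𝕜} (hp : p.IsHomogeneous k) (u v : Fin 3 → 𝕜) :
    (aeval (fun a => Polynomial.C (u a) + Polynomial.X * Polynomial.C (v a)) p).coeff k =
      aeval v p := by
  rw [aeval_def, aeval_def, eval₂_eq', eval₂_eq', Polynomial.finsetSum_coeff]
  refine Finset.sum_congr rfl fun s hs => ?_
  have h1 := hp (mem_support_iff.1 hs)
  rw [Finsupp.weight_apply, Finsupp.sum_fintype _ _ (by simp), Fin.sum_univ_three] at h1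
  simp at h1
  rw [Fin.prod_univ_three, Fin.prod_univ_three, Polynomial.algebraMap_eq, Polynomial.coeff_C_mul]
  congr 1
  have hd : ∀ a, (Polynomial.C (u a) + Polynomial.X * Polynomial.C (v a)).natDegree ≤ 1 := by
    intro a; compute_degree
  have hd' : ∀ a, ((Polynomial.C (u a) + Polynomial.X * Polynomial.C (v a)) ^ s a).natDegree ≤ s a := by
    intro a
    simpa using Polynomial.natDegree_pow_le_of_le (s a) (hd a)
  have hc : ∀ a, ((Polynomial.C (u a) + Polynomial.X * Polynomial.C (v a)) ^ s a).coeff (s a) =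
      v a ^ s a := by
    intro a
    have := Polynomial.coeff_pow_of_natDegree_le (m := s a) (hd a)
    rw [mul_one] at this
    rw [this]; simp [Polynomial.coeff_C]
  rw [← h1, Polynomial.coeff_mul_add_eq_of_natDegree_le
    ((Polynomial.natDegree_mul_le).trans (Nat.add_le_add (hd' 0) (hd' 1))) (hd' 2),
    Polynomial.coeff_mul_add_eq_of_natDegree_le (hd' 0) (hd' 1), hc, hc, hc]

/-- linear part of the syzygy -/
lemma syz_pderiv {E : Matrix (Fin 3) (Fin 3) 𝕜} {γ : 𝕜}
    (h : ∑ l, (∑ m, C (E l m) * X m) * pderiv l Ω = C γ * Ω) (m : Fin 3) :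
    ∑ l, C (E l m) * pderiv l Ω + ∑ l, (∑ k, C (E l k) * X k) * pderiv l (pderiv m Ω) =
      C γ * pderiv m Ω := by
  have h1 := congrArg (pderiv m) h
  have h2 : ∀ l, pderiv m (∑ k, C (E l k) * X k) = C (E l m) := by
    intro l
    rw [map_sum, Finset.sum_eq_single m]
    · simp
    · intro j _ hj; simp [pderiv_X_of_ne hj]
    · simp
  rw [map_sum] at h1
  simp only [Derivation.leibniz, h2, smul_eq_mul, pderiv_C, mul_zero, add_zero,
    Finset.sum_add_distrib, pderiv_comm' m] at h1
  rw [← h1, add_comm]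
  congr 1
  exact Finset.sum_congr rfl fun _ _ => mul_comm _ _

set_option maxHeartbeats 1000000 in
lemma nilp_zero [CharZero 𝕜] (hG : Good Ω n) {N : Matrix (Fin 3) (Fin 3) 𝕜} (hN : N ^ 3 = 0)
    (h : ∑ l, (∑ m, C (N l m) * X m) * pderiv l Ω = 0) : N = 0 := by
  by_contra hN0
  have hn := hG.deg
  obtain ⟨u, hu, hu'⟩ : ∃ u, N.mulVec u ≠ 0 ∧ N.mulVec (N.mulVec u) = 0 := by
    by_cases h2 : N ^ 2 = 0
    · obtain ⟨u, hu⟩ : ∃ u, N.mulVec u ≠ 0 := by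
        by_contra! hh
        exact hN0 (Matrix.ext_of_mulVec_single fun i => by rw [hh, Matrix.zero_mulVec])
      refine ⟨u, hu, ?_⟩
      rw [Matrix.mulVec_mulVec, ← pow_two, h2, Matrix.zero_mulVec]
    · obtain ⟨u, hu⟩ : ∃ u, (N ^ 2).mulVec u ≠ 0 := by
        by_contra! hh
        exact h2 (Matrix.ext_of_mulVec_single fun i => by rw [hh, Matrix.zero_mulVec])
      refine ⟨N.mulVec u, ?_, ?_⟩
      · rwa [Matrix.mulVec_mulVec, ← pow_two]
      · rw [Matrix.mulVec_mulVec, Matrix.mulVec_mulVec, ← pow_two, ← pow_succ, hN,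
          Matrix.zero_mulVec]
  set v := N.mulVec u with hv
  let x : Fin 3 → Polynomial 𝕜 := fun a => Polynomial.C (u a) + Polynomial.X * Polynomial.C (v a)
  let q : Fin 3 → Polynomial 𝕜 := fun m => aeval x (pderiv m Ω)
  have hNx : ∀ l, ∑ k, Polynomial.C (N l k) * x k = Polynomial.C (v l) := by
    intro l
    have e1 : v l = ∑ k, N l k * u k := rfl
    have e2 : ∑ k, N l k * v k = 0 := congrFun hu' l
    simp only [x, mul_add, Finset.sum_add_distrib]
    have e3 : ∑ k, Polynomial.C (N l k) * (Polynomial.X * Polynomial.C (v k)) =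
        Polynomial.X * Polynomial.C (∑ k, N l k * v k) := by
      rw [map_sum, Finset.mul_sum]
      refine Finset.sum_congr rfl fun k _ => ?_
      rw [map_mul]; ring
    rw [e3, e2, e1]
    simp
  have hq : ∀ m, Polynomial.derivative (q m) = - ∑ l, Polynomial.C (N l m) * q l := by
    intro m
    have e1 : Polynomial.derivative (q m) = ∑ l, aeval x (pderiv l (pderiv m Ω)) *
        Polynomial.derivative (x l) := chain_rule Polynomial.derivative' x (pderiv m Ω)
    have e2 : ∀ l, Polynomial.derivative (x l) = Polynomial.C (v l) := by
      intro l; simp [x]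
    have e3 := congrArg (aeval x) (syz_pderiv (Ω := Ω) (E := N) (γ := (0 : 𝕜)) (by rw [h]; simp) m)
    simp only [map_add, map_sum, map_mul, aeval_X, zero_mul, map_zero, ← algebraMap_eq,
      AlgHom.commutes, Polynomial.algebraMap_eq, hNx] at e3
    have e4 : ∑ l, aeval x (pderiv l (pderiv m Ω)) * Polynomial.derivative (x l) =
        ∑ l, Polynomial.C (v l) * aeval x (pderiv l (pderiv m Ω)) :=
      Finset.sum_congr rfl fun l _ => by rw [e2, mul_comm]
    rw [e1, e4]
    exact eq_neg_of_add_eq_zero_right e3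
  have hit : ∀ k m, (Polynomial.derivative^[k]) (q m) =
      (-1) ^ k * ∑ l, Polynomial.C ((N ^ k) l m) * q l := by
    intro k
    induction k with
    | zero =>
      intro m
      simp [Matrix.one_apply]
    | succ k ih =>
      intro m
      rw [Function.iterate_succ_apply, hq, Polynomial.iterate_derivative_neg,
        Polynomial.iterate_derivative_sum]
      simp only [Polynomial.iterate_derivative_C_mul, ih]
      rw [pow_succ, pow_succ]
      simp only [Matrix.mul_apply, map_sum, map_mul, Finset.sum_mul, Finset.mul_sum]
      rw [Finset.sum_comm, ← Finset.sum_neg_distrib]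
      refine Finset.sum_congr rfl fun a _ => ?_
      rw [← Finset.sum_neg_distrib]
      refine Finset.sum_congr rfl fun b _ => ?_
      ring
  refine hu (hG.grad_ne fun m => ?_)
  rw [← coeff_line hG.hom.pderiv u v]
  have h3 := hit 3 m
  rw [hN] at h3
  simp only [Matrix.zero_apply, map_zero, zero_mul, Finset.sum_const_zero, mul_zero] at h3
  have h4 := congrArg (fun p => Polynomial.coeff p (n - 4)) h3
  simp only [Polynomial.coeff_iterate_derivative, Polynomial.coeff_zero, nsmul_eq_mul,
    mul_eq_zero, Nat.cast_eq_zero, Nat.descFactorial_eq_zero_iff_lt] at h4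
  rw [show n - 1 = n - 4 + 3 by omega]
  exact h4.resolve_left (by omega)

set_option maxHeartbeats 1000000 in
lemma syz_scalar [CharZero 𝕜] [IsAlgClosed 𝕜] (hG : Good Ω n) {E : Matrix (Fin 3) (Fin 3) 𝕜} {γ : 𝕜}
    (h : ∑ l, (∑ m, C (E l m) * X m) * pderiv l Ω = C γ * Ω) :
    E = Matrix.scalar _ (γ / n) := by
  have hn := hG.deg
  have hn0 : (n : 𝕜) ≠ 0 := by exact_mod_cast (by omega : n ≠ 0)
  have hroot : ∀ μ, E.charpoly.IsRoot μ ↔ (Matrix.scalar _ μ - E).det = 0 := by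
    intro μ; rw [Polynomial.IsRoot, Matrix.eval_charpoly]
  have hstab : ∀ μ, E.charpoly.IsRoot μ → E.charpoly.IsRoot (γ - ((n - 1 : ℕ) : 𝕜) * μ) := by
    intro μ hμ
    rw [hroot, ← Matrix.exists_mulVec_eq_zero_iff] at hμ
    obtain ⟨v, hv, hv'⟩ := hμ
    rw [hroot, ← Matrix.exists_vecMul_eq_zero_iff]
    refine ⟨fun l => aeval v (pderiv l Ω), fun h0 => hv (hG.grad_ne fun l => congrFun h0 l), ?_⟩
    have hEv : ∀ l, ∑ k, E l k * v k = μ * v l := by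
      intro l
      have := congrFun hv' l
      rw [Matrix.sub_mulVec, Pi.sub_apply, Pi.zero_apply, sub_eq_zero] at this
      rw [Matrix.scalar_apply, Matrix.mulVec_diagonal] at this
      exact this.symm
    funext m
    have e := congrArg (aeval v) (syz_pderiv h m)
    simp only [map_add, map_sum, map_mul, aeval_X, ← algebraMap_eq, AlgHom.commutes, hEv,
      Algebra.algebraMap_self, RingHom.id_apply] at e
    simp only [mul_assoc, ← Finset.mul_sum, euler_pt hG] at e
    rw [Matrix.vecMul_sub, Pi.sub_apply, Matrix.scalar_apply, Matrix.vecMul_diagonal, Pi.zero_apply]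
    have e2 : Matrix.vecMul (fun l => aeval v (pderiv l Ω)) E m =
        ∑ l, E l m * aeval v (pderiv l Ω) := by
      simp only [Matrix.vecMul, dotProduct]
      exact Finset.sum_congr rfl fun _ _ => mul_comm _ _
    rw [e2]
    linear_combination -e
  have hall : ∀ μ, E.charpoly.IsRoot μ → μ = γ / n := by
    intro μ hμ
    by_contra hne
    have hne' : μ - γ / n ≠ 0 := sub_ne_zero.2 hne
    have hit : ∀ k : ℕ, E.charpoly.IsRoot (γ / n + (-((n - 1 : ℕ) : 𝕜)) ^ k * (μ - γ / n)) := by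
      intro k
      induction k with
      | zero => simpa using hμ
      | succ k ih =>
        convert hstab _ ih using 1
        rw [Nat.cast_sub (by omega)]
        field_simp
        push_cast
        ring
    have hinj : Function.Injective fun k : ℕ => γ / n + (-((n - 1 : ℕ) : 𝕜)) ^ k * (μ - γ / n) := by
      intro a b hab
      have h1 : (-((n - 1 : ℕ) : 𝕜)) ^ a = (-((n - 1 : ℕ) : 𝕜)) ^ b :=
        mul_right_cancel₀ hne' (add_left_cancel hab)
      have h2 : (-((n - 1 : ℕ) : ℤ)) ^ a = (-((n - 1 : ℕ) : ℤ)) ^ b := by exact_mod_cast h1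
      have h3 := congrArg Int.natAbs h2
      rw [Int.natAbs_pow, Int.natAbs_pow, Int.natAbs_neg, Int.natAbs_natCast] at h3
      exact Nat.pow_right_injective (by omega : 2 ≤ n - 1) h3
    have hfin : {x | E.charpoly.IsRoot x}.Finite :=
      Polynomial.finite_setOfPred_isRoot E.charpoly_monic.ne_zero
    exact Set.infinite_of_injective_forall_mem hinj hit hfin
  have hcp : E.charpoly = (Polynomial.X - Polynomial.C (γ / n)) ^ 3 := by
    have hs := IsAlgClosed.splits E.charpoly
    have h1 := hs.eq_prod_roots_of_monic E.charpoly_monic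
    have h2 : E.charpoly.roots = Multiset.replicate 3 (γ / n) := by
      rw [Multiset.eq_replicate]
      refine ⟨?_, fun μ hμ => hall μ (Polynomial.isRoot_of_mem_roots hμ)⟩
      rw [← hs.natDegree_eq_card_roots, Matrix.charpoly_natDegree_eq_dim]; simp
    rw [h2] at h1
    rw [h1]; simp; ring
  have hch := E.aeval_self_charpoly
  rw [hcp] at hch
  simp only [map_pow, map_sub, Polynomial.aeval_X, Polynomial.aeval_C] at hch
  rw [← sub_eq_zero]
  refine nilp_zero hG hch ?_
  have hE := hG.hom.sum_X_mul_pderiv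
  have e1 : ∀ l, (∑ m, C ((E - Matrix.scalar (Fin 3) (γ / n) : Matrix (Fin 3) (Fin 3) 𝕜) l m) * X m) * pderiv l Ω =
      (∑ m, C (E l m) * X m) * pderiv l Ω - C (γ / n) * (X l * pderiv l Ω) := by
    intro l
    have e2 : ∑ m, C ((Matrix.scalar (Fin 3) (γ / n) : Matrix (Fin 3) (Fin 3) 𝕜) l m) * X m =
        C (γ / n) * (X l : MvPolynomial (Fin 3) 𝕜) := by
      rw [Finset.sum_eq_single l]
      · rw [Matrix.scalar_apply, Matrix.diagonal_apply_eq]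
      · intro j _ hj
        rw [Matrix.scalar_apply, Matrix.diagonal_apply_ne _ hj.symm, C_0, zero_mul]
      · intro hh; exact absurd (Finset.mem_univ _) hh
    rw [← mul_assoc, ← sub_mul, ← e2]
    simp only [Matrix.sub_apply, map_sub, sub_mul, Finset.sum_sub_distrib]
  simp only [e1, Finset.sum_sub_distrib, h, ← Finset.mul_sum, hE]
  rw [nsmul_eq_mul, ← mul_assoc, ← map_natCast (C : 𝕜 →+* MvPolynomial (Fin 3) 𝕜), ← C_mul,
    div_mul_cancel₀ _ hn0, sub_self]

lemma noSyz [CharZero 𝕜] [IsAlgClosed 𝕜] (hG : Good Ω n) {ξ : 𝕜} {E : Matrix (Fin 3) (Fin 3) 𝕜}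
    {h : Fin 3 → 𝕜} (hs : ∑ l, Laf E h l * pderiv l Ω = C E.trace * (Ω - C ξ)) : E = 0 ∧ h = 0 := by
  have hn := hG.deg
  set S1 := ∑ l, (∑ m, C (E l m) * X m) * pderiv l Ω with hS1
  set S0 := ∑ l, C (h l) * pderiv l Ω with hS0
  have hsum : S1 + S0 = C E.trace * Ω - C (E.trace * ξ) := by
    rw [hS1, hS0, ← Finset.sum_add_distrib, C_mul, ← mul_sub, ← hs]
    exact Finset.sum_congr rfl fun l _ => by rw [Laf]; ring
  have d0 : S0.IsHomogeneous (n - 1) := by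
    refine IsHomogeneous.sum _ _ _ fun l _ => ?_
    simpa using (isHomogeneous_C (Fin 3) (h l)).mul (hG.hom.pderiv (i := l))
  have d1 : S1.IsHomogeneous n := by
    refine IsHomogeneous.sum _ _ _ fun l _ => ?_
    have e : (∑ m, C (E l m) * X m).IsHomogeneous 1 := by
      refine IsHomogeneous.sum _ _ _ fun m _ => ?_
      simpa using (isHomogeneous_C (Fin 3) (E l m)).mul (isHomogeneous_X 𝕜 m)
    have := e.mul (hG.hom.pderiv (i := l))
    rwa [show 1 + (n - 1) = n by omega] at this
  have d2 : (C E.trace * Ω).IsHomogeneous n := by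
    simpa using (isHomogeneous_C (Fin 3) E.trace).mul hG.hom
  have d3 := isHomogeneous_C (Fin 3) (E.trace * ξ)
  have z0 : S0 = 0 := by
    have := congrArg (homogeneousComponent (n - 1)) hsum
    rw [map_add, map_sub, homogeneousComponent_of_mem d0, homogeneousComponent_of_mem d1,
      homogeneousComponent_of_mem d2, homogeneousComponent_of_mem d3, if_neg (by omega),
      if_pos rfl, if_neg (by omega), if_neg (by omega)] at this
    simpa using this
  have z1 : S1 = C E.trace * Ω := by
    have := congrArg (homogeneousComponent n) hsum
    rw [map_add, map_sub, homogeneousComponent_of_mem d0, homogeneousComponent_of_mem d1,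
      homogeneousComponent_of_mem d2, homogeneousComponent_of_mem d3, if_neg (show ¬ n = n - 1 by omega),
      if_pos rfl, if_pos rfl, if_neg (show ¬ n = 0 by omega)] at this
    simpa using this
  have hE := syz_scalar hG z1
  constructor
  · have ht : E.trace = 3 * (E.trace / n) := by
      conv_lhs => rw [hE]
      simp [Matrix.trace, Fin.sum_univ_three]
    have hn0 : (n : 𝕜) ≠ 0 := by exact_mod_cast (by omega : n ≠ 0)
    have hn3 : (n : 𝕜) - 3 ≠ 0 := by
      rw [sub_ne_zero]
      exact_mod_cast (by omega : n ≠ 3)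
    have : E.trace = 0 := by
      field_simp at ht
      have h4 : E.trace * ((n : 𝕜) - 3) = 0 := by linear_combination ht
      exact (mul_eq_zero.1 h4).resolve_right hn3
    rw [hE, this]; simp
  · refine hG.grad_ne fun m => ?_
    have e1 := congrArg (fun p => aeval h (pderiv m p)) z0
    simp only [hS0, map_sum, Derivation.leibniz, pderiv_C, smul_eq_mul, mul_zero, add_zero,
      map_zero, pderiv_comm' m] at e1
    simp only [map_mul, ← algebraMap_eq, AlgHom.commutes,
      Algebra.algebraMap_self, RingHom.id_apply] at e1
    rw [euler_pt hG] at e1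
    refine (mul_eq_zero.1 e1).resolve_left ?_
    exact_mod_cast (by omega : n - 1 ≠ 0)

end syz
end PoissonFin

namespace PoissonFin

open MvPolynomial

section unram
universe u
variable {𝕜 : Type u} [Field 𝕜]

lemma finite_of_unram {σ : Type} [Finite σ] (E : Set (MvPolynomial σ 𝕜))
    (h : ∀ (B : Type u) [CommRing B] [Algebra 𝕜 B] (I : Ideal B) (_ : ∀ p ∈ I, ∀ q ∈ I, p * q = 0)
      (x y : σ → B), (∀ p ∈ E, aeval x p = 0) → (∀ p ∈ E, aeval y p = 0) →
      (∀ s, y s - x s ∈ I) → x = y) :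
    Finite {x : σ → 𝕜 // ∀ p ∈ E, aeval x p = 0} := by
  let J : Ideal (MvPolynomial σ 𝕜) := Ideal.span E
  have hU : Algebra.FormallyUnramified 𝕜 (MvPolynomial σ 𝕜 ⧸ J) := by
    rw [Algebra.FormallyUnramified.iff_comp_injective]
    intro B _ _ I hI f g hfg
    have hI' : ∀ p ∈ I, ∀ q ∈ I, p * q = 0 := by
      intro p hp q hq
      have := Ideal.mul_mem_mul hp hq
      rwa [← pow_two, hI, Ideal.mem_bot] at this
    have hx : ∀ (f : (MvPolynomial σ 𝕜 ⧸ J) →ₐ[𝕜] B) (p : MvPolynomial σ 𝕜),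
        aeval (fun s => f (Ideal.Quotient.mkₐ 𝕜 J (X s))) p = f (Ideal.Quotient.mkₐ 𝕜 J p) := by
      intro f p
      have : aeval (fun s => f (Ideal.Quotient.mkₐ 𝕜 J (X s))) = f.comp (Ideal.Quotient.mkₐ 𝕜 J) := by
        ext s; simp
      rw [this]; rfl
    have hE : ∀ p ∈ E, Ideal.Quotient.mkₐ 𝕜 J p = 0 := fun p hp =>
      Ideal.Quotient.eq_zero_iff_mem.2 (Ideal.subset_span hp)
    have := h B I hI' (fun s => f (Ideal.Quotient.mkₐ 𝕜 J (X s)))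
      (fun s => g (Ideal.Quotient.mkₐ 𝕜 J (X s)))
      (fun p hp => by rw [hx, hE p hp, map_zero]) (fun p hp => by rw [hx, hE p hp, map_zero])
      (fun s => by
        rw [← Ideal.Quotient.mk_eq_mk_iff_sub_mem]
        exact (AlgHom.congr_fun hfg _).symm)
    apply Ideal.Quotient.algHom_ext
    ext s
    exact congrFun this s
  have hF : Module.Finite 𝕜 (MvPolynomial σ 𝕜 ⧸ J) := by
    have : Algebra.FiniteType 𝕜 (MvPolynomial σ 𝕜 ⧸ J) :=
      Algebra.FiniteType.of_surjective (Ideal.Quotient.mkₐ 𝕜 J) (Ideal.Quotient.mkₐ_surjective 𝕜 J)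
    exact Algebra.FormallyUnramified.finite_of_free 𝕜 _
  have hfin : Finite ((MvPolynomial σ 𝕜 ⧸ J) →ₐ[𝕜] 𝕜) := inferInstance
  have hJ : ∀ x : {x : σ → 𝕜 // ∀ p ∈ E, aeval x p = 0}, ∀ a ∈ J,
      (aeval x.1 : MvPolynomial σ 𝕜 →ₐ[𝕜] 𝕜) a = 0 := by
    intro x a ha
    have : J ≤ RingHom.ker (aeval x.1 : MvPolynomial σ 𝕜 →ₐ[𝕜] 𝕜) := Ideal.span_le.2 x.2
    exact this ha
  refine Finite.of_injective (fun x => Ideal.Quotient.liftₐ J (aeval x.1) (hJ x)) ?_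
  intro x y hxy
  apply Subtype.ext
  funext s
  have := AlgHom.congr_fun hxy (Ideal.Quotient.mk J (X s))
  simpa using this

lemma taylor {B : Type*} [CommRing B] [Algebra 𝕜 B] {I : Ideal B}
    (hI : ∀ p ∈ I, ∀ q ∈ I, p * q = 0) (x w : Fin 3 → B) (hw : ∀ s, w s ∈ I)
    (p : MvPolynomial (Fin 3) 𝕜) :
    aeval (x + w) p = aeval x p + ∑ l, w l * aeval x (pderiv l p) := by
  induction p using MvPolynomial.induction_on with
  | C a => simp
  | add p q hp hq => simp only [map_add, hp, hq, mul_add, Finset.sum_add_distrib]; ring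
  | mul_X p i hp =>
    have h1 : (∑ l, w l * aeval x (pderiv l p)) * w i = 0 := by
      refine hI _ (Ideal.sum_mem _ fun l _ => I.mul_mem_right _ (hw l)) _ (hw i)
    have h2 : ∑ l, w l * aeval x (pderiv l (p * X i)) =
        (∑ l, w l * aeval x (pderiv l p)) * x i + aeval x p * w i := by
      simp only [Derivation.leibniz, smul_eq_mul, map_add, map_mul, aeval_X, mul_add,
        Finset.sum_add_distrib, Finset.sum_mul]
      rw [add_comm]
      congr 1
      · exact Finset.sum_congr rfl fun _ _ => by ring
      · rw [Finset.sum_eq_single i]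
        · simp; ring
        · intro j _ hj; simp [pderiv_X_of_ne hj.symm]
        · simp
    rw [map_mul, hp, h2, map_mul, aeval_X, aeval_X, Pi.add_apply]
    linear_combination h1

lemma det_linear {B : Type*} [CommRing B] {I : Ideal B}
    (hI : ∀ p ∈ I, ∀ q ∈ I, p * q = 0) (M F : Matrix (Fin 3) (Fin 3) B) (hF : ∀ a m, F a m ∈ I) :
    (M + F).det = M.det + (M.adjugate * F).trace := by
  have hz : ∀ a b c d, F a b * F c d = 0 := fun a b c d => hI _ (hF a b) _ (hF c d)
  have h1 : F.adjugate = 0 := by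
    ext i j
    rw [Matrix.adjugate_fin_three]
    fin_cases i <;> fin_cases j <;> simp [hz]
  have h2 : F.det = 0 := by
    simp [Matrix.det_fin_three, hz]
  have h3 : (M + F).det = M.det + (M.adjugate * F).trace + (F.adjugate * M).trace + F.det := by
    simp only [Matrix.det_fin_three, Matrix.adjugate_fin_three, Matrix.trace_fin_three,
      Matrix.mul_apply, Fin.sum_univ_three, Matrix.add_apply]
    simp
    ring
  rw [h3, h1, h2]; simp

variable [CharZero 𝕜] [IsAlgClosed 𝕜]

lemma sol_rigid {Ω : MvPolynomial (Fin 3) 𝕜} {n : ℕ} {ξ : 𝕜} (hG : Good Ω n)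
    {B : Type*} [CommRing B] [Algebra 𝕜 B] {I : Ideal B}
    (hI : ∀ p ∈ I, ∀ q ∈ I, p * q = 0) (M F : Matrix (Fin 3) (Fin 3) B) (b e : Fin 3 → B)
    (hF : ∀ a m, F a m ∈ I) (he : ∀ a, e a ∈ I) (hdet : IsUnit M.det)
    (h0 : Sol Ω ξ M b) (h1 : Sol Ω ξ (M + F) (b + e)) : F = 0 ∧ e = 0 := by
  have hadd : ∀ v : Fin 3 → 𝕜, afpt (M + F) (b + e) v = afpt M b v + afpt F e v := by
    intro v; funext a
    simp only [afpt, Matrix.add_apply, Pi.add_apply, add_mul, Finset.sum_add_distrib]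
    ring
  have hw : ∀ (v : Fin 3 → 𝕜) a, afpt F e v a ∈ I := fun v a =>
    I.add_mem (Ideal.sum_mem _ fun m _ => I.mul_mem_right _ (hF a m)) (he a)
  set E := M.adjugate * F with hE
  set h := M.adjugate.mulVec e with hh
  have hEh : ∀ (v : Fin 3 → 𝕜) k, ∑ l, M.adjugate k l * afpt F e v l = afpt E h v k := by
    intro v k
    simp only [afpt, hE, hh, Matrix.mul_apply, Matrix.mulVec, dotProduct, Fin.sum_univ_three]
    ring
  have key : ∀ v : Fin 3 → 𝕜, ∑ k, afpt E h v k * algebraMap 𝕜 B (aeval v (pderiv k Ω)) =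
      E.trace * algebraMap 𝕜 B (aeval v Ω - ξ) := by
    intro v
    have a1 := h1.2 v
    have a0 := h0.2 v
    rw [hadd, taylor hI _ _ (hw v), det_linear hI M F hF] at a1
    have a2 : ∑ l, afpt F e v l * aeval (afpt M b v) (pderiv l Ω) =
        ∑ k, afpt E h v k * algebraMap 𝕜 B (aeval v (pderiv k Ω)) := by
      simp only [h0.1, ← hEh, Finset.mul_sum, Finset.sum_mul]
      rw [Finset.sum_comm]
      exact Finset.sum_congr rfl fun _ _ => Finset.sum_congr rfl fun _ _ => by ring
    rw [a2] at a1
    linear_combination a1 - a0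
  have hlam : ∀ lam : Module.Dual 𝕜 B, (∀ a m, lam (E a m) = 0) ∧ ∀ a, lam (h a) = 0 := by
    intro lam
    have hl : ∀ (x : B) (c : 𝕜), lam (x * algebraMap 𝕜 B c) = lam x * c := by
      intro x c
      rw [mul_comm, ← Algebra.smul_def, map_smul, smul_eq_mul, mul_comm]
    have hs : ∑ l, Laf (E.map lam) (lam ∘ h) l * pderiv l Ω =
        C (E.map lam).trace * (Ω - C ξ) := by
      refine MvPolynomial.funext fun v => ?_
      have k1 := congrArg lam (key v)
      rw [map_sum, hl] at k1
      simp only [hl] at k1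
      have k2 : ∀ l, lam (afpt E h v l) = eval v (Laf (E.map lam) (lam ∘ h) l) := by
        intro l
        simp only [afpt, map_add, map_sum, hl, Laf, map_mul, eval_C, eval_X, Matrix.map_apply,
          Function.comp]
      have k3 : lam E.trace = (E.map lam).trace := by
        simp [Matrix.trace, Fin.sum_univ_three]
      rw [k3] at k1
      simp only [k2, aeval_eq_eval] at k1
      rw [map_sum, map_mul, eval_C, map_sub, eval_C]
      simp only [map_mul]
      exact k1
    obtain ⟨r1, r2⟩ := noSyz hG hs
    exact ⟨fun a m => congrFun (congrFun r1 a) m, fun a => congrFun r2 a⟩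
  have hE0 : E = 0 := by
    ext a m
    exact (Module.forall_dual_apply_eq_zero_iff 𝕜 (E a m)).1 fun lam => (hlam lam).1 a m
  have hh0 : h = 0 := by
    funext a
    exact (Module.forall_dual_apply_eq_zero_iff 𝕜 (h a)).1 fun lam => (hlam lam).2 a
  constructor
  · have := congrArg (M * ·) hE0
    simp only [hE, ← mul_assoc, Matrix.mul_adjugate, mul_zero, Matrix.smul_mul, one_mul] at this
    ext a m
    have := congrFun (congrFun this a) m
    rw [Matrix.smul_apply, smul_eq_mul] at this
    exact (hdet.mul_right_eq_zero).1 this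
  · have := congrArg (M.mulVec ·) hh0
    simp only [hh, Matrix.mulVec_mulVec, Matrix.mul_adjugate, Matrix.mulVec_zero,
      Matrix.smul_mulVec, Matrix.one_mulVec] at this
    funext a
    have := congrFun this a
    rw [Pi.smul_apply, smul_eq_mul] at this
    exact (hdet.mul_right_eq_zero).1 this

end unram
end PoissonFin

namespace PoissonFin

open scoped TensorProduct
open PiTensorProduct MvPolynomial

section fin
universe u
variable {𝕜 : Type u} [Field 𝕜]

lemma afpt_map {B C : Type*} [CommRing B] [Algebra 𝕜 B] [CommRing C] [Algebra 𝕜 C] (f : B →ₐ[𝕜] C)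
    (M : Matrix (Fin 3) (Fin 3) B) (b : Fin 3 → B) (v : Fin 3 → 𝕜) (p : MvPolynomial (Fin 3) 𝕜) :
    f (aeval (afpt M b v) p) = aeval (afpt (M.map f) (f ∘ b) v) p := by
  have : f.comp (aeval (afpt M b v)) =
      (aeval (afpt (M.map f) (f ∘ b) v) : MvPolynomial (Fin 3) 𝕜 →ₐ[𝕜] C) := by
    ext l
    simp [afpt]
  rw [← this]; rfl

/-- first family of equations -/
noncomputable def eq1 (Ω : MvPolynomial (Fin 3) 𝕜) {B : Type*} [CommRing B] [Algebra 𝕜 B]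
    (M : Matrix (Fin 3) (Fin 3) B) (b : Fin 3 → B) (v : Fin 3 → 𝕜) (l : Fin 3) : B :=
  aeval (afpt M b v) (pderiv l Ω) -
    ∑ k, M.adjugate k l * algebraMap 𝕜 B (aeval v (pderiv k Ω))

/-- second family of equations -/
noncomputable def eq2 (Ω : MvPolynomial (Fin 3) 𝕜) (ξ : 𝕜) {B : Type*} [CommRing B] [Algebra 𝕜 B]
    (M : Matrix (Fin 3) (Fin 3) B) (b : Fin 3 → B) (v : Fin 3 → 𝕜) : B :=
  aeval (afpt M b v) Ω - algebraMap 𝕜 B ξ - M.det * algebraMap 𝕜 B (aeval v Ω - ξ)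

lemma eq1_map (Ω : MvPolynomial (Fin 3) 𝕜) {B C : Type*} [CommRing B] [Algebra 𝕜 B] [CommRing C]
    [Algebra 𝕜 C] (f : B →ₐ[𝕜] C) (M : Matrix (Fin 3) (Fin 3) B) (b : Fin 3 → B) (v : Fin 3 → 𝕜)
    (l : Fin 3) : f (eq1 Ω M b v l) = eq1 Ω (M.map f) (f ∘ b) v l := by
  have h : (M.map f).adjugate = M.adjugate.map f := (RingHom.map_adjugate (f : B →+* C) M).symm
  simp only [eq1, map_sub, afpt_map, map_sum, map_mul, AlgHom.commutes, h, Matrix.map_apply]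

lemma eq2_map (Ω : MvPolynomial (Fin 3) 𝕜) (ξ : 𝕜) {B C : Type*} [CommRing B] [Algebra 𝕜 B]
    [CommRing C] [Algebra 𝕜 C] (f : B →ₐ[𝕜] C) (M : Matrix (Fin 3) (Fin 3) B) (b : Fin 3 → B)
    (v : Fin 3 → 𝕜) : f (eq2 Ω ξ M b v) = eq2 Ω ξ (M.map f) (f ∘ b) v := by
  have h : (M.map f).det = f M.det := (RingHom.map_det (f : B →+* C) M).symm
  simp only [eq2, map_sub f, map_mul, afpt_map, AlgHom.commutes, h]

lemma sol_iff (Ω : MvPolynomial (Fin 3) 𝕜) (ξ : 𝕜) {B : Type*} [CommRing B] [Algebra 𝕜 B]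
    (M : Matrix (Fin 3) (Fin 3) B) (b : Fin 3 → B) :
    Sol Ω ξ M b ↔ (∀ v l, eq1 Ω M b v l = 0) ∧ ∀ v, eq2 Ω ξ M b v = 0 := by
  simp only [Sol, eq1, eq2, sub_eq_zero]

/-- index of the unknowns -/
abbrev Unk := Option (Fin 3 × Option (Fin 3))

/-- the matrix part -/
def unkM {B : Type*} (x : Unk → B) : Matrix (Fin 3) (Fin 3) B := fun a m => x (some (a, some m))

/-- the vector part -/
def unkb {B : Type*} (x : Unk → B) : Fin 3 → B := fun a => x (some (a, none))

/-- the set of all equations -/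
def eqs (Ω : MvPolynomial (Fin 3) 𝕜) (ξ : 𝕜) : Set (MvPolynomial Unk 𝕜) :=
  {p | (∃ v l, p = eq1 Ω (unkM X) (unkb X) v l) ∨ (∃ v, p = eq2 Ω ξ (unkM X) (unkb X) v) ∨
    p = X none * (unkM X).det - 1}

lemma eqs_iff (Ω : MvPolynomial (Fin 3) 𝕜) (ξ : 𝕜) {B : Type*} [CommRing B] [Algebra 𝕜 B]
    (x : Unk → B) : (∀ p ∈ eqs Ω ξ, aeval x p = 0) ↔
      Sol Ω ξ (unkM x) (unkb x) ∧ x none * (unkM x).det = 1 := by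
  have e1 : (unkM (X : Unk → MvPolynomial Unk 𝕜)).map (aeval x) = unkM x := by
    ext a m; simp [unkM]
  have e2 : (aeval x : MvPolynomial Unk 𝕜 →ₐ[𝕜] B) ∘ unkb X = unkb x := by
    ext a; simp [unkb]
  have e3 : (aeval x : MvPolynomial Unk 𝕜 →ₐ[𝕜] B) (unkM X).det = (unkM x).det := by
    rw [← e1]
    exact RingHom.map_det ((aeval x : MvPolynomial Unk 𝕜 →ₐ[𝕜] B) : MvPolynomial Unk 𝕜 →+* B) _
  rw [sol_iff]
  constructor
  · intro h
    refine ⟨⟨fun v l => ?_, fun v => ?_⟩, ?_⟩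
    · have := h _ (Or.inl ⟨v, l, rfl⟩)
      rwa [eq1_map, e1, e2] at this
    · have := h _ (Or.inr (Or.inl ⟨v, rfl⟩))
      rwa [eq2_map, e1, e2] at this
    · have := h _ (Or.inr (Or.inr rfl))
      rwa [map_sub, map_mul, e3, aeval_X, map_one, sub_eq_zero] at this
  · rintro ⟨⟨h1, h2⟩, h3⟩ p (⟨v, l, rfl⟩ | ⟨v, rfl⟩ | rfl)
    · rw [eq1_map, e1, e2, h1]
    · rw [eq2_map, e1, e2, h2]
    · rw [map_sub, map_mul, e3, aeval_X, map_one, sub_eq_zero, h3]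

variable [CharZero 𝕜] [IsAlgClosed 𝕜]

lemma finite_eqs {Ω : MvPolynomial (Fin 3) 𝕜} {n : ℕ} (ξ : 𝕜) (hG : Good Ω n) :
    Finite {x : Unk → 𝕜 // ∀ p ∈ eqs Ω ξ, aeval x p = 0} := by
  refine finite_of_unram (eqs Ω ξ) ?_
  intro B _ _ I hI x y hx hy hxy
  rw [eqs_iff] at hx hy
  have hu : IsUnit (unkM x).det := IsUnit.of_mul_eq_one_right _ hx.2
  have h1 : unkM x + (unkM y - unkM x) = unkM y := by abel
  have h2 : unkb x + (unkb y - unkb x) = unkb y := by abel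
  obtain ⟨r1, r2⟩ := sol_rigid hG hI (unkM x) (unkM y - unkM x) (unkb x) (unkb y - unkb x)
    (fun a m => hxy _) (fun a => hxy _) hu hx.1 (by rw [h1, h2]; exact hy.1)
  rw [sub_eq_zero] at r1 r2
  funext s
  match s with
  | some (a, some m) => exact (congrFun (congrFun r1 a) m).symm
  | some (a, none) => exact (congrFun r2 a).symm
  | none =>
    have h3 := hx.2
    have h4 := hy.2
    rw [r1] at h4
    exact hu.mul_left_injective (h3.trans h4.symm)

end fin

section final
universe u
variable {𝕜 : Type u} [Field 𝕜] [IsAlgClosed 𝕜] [CharZero 𝕜]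

lemma aut_data {d : ℕ} {Ω : Fin d → MvPolynomial (Fin 3) 𝕜} {n : Fin d → ℕ} {ξ : Fin d → 𝕜}
    (hG : ∀ i, Good (Ω i) (n i)) (hdist : Function.Injective n)
    {P : ∀ i, PoissonStructure 𝕜 (PQuot 𝕜 (Ω i) (ξ i))}
    (hP : ∀ i, IsInducedBracket (Ω i) (ξ i) (P i))
    {PT : PoissonStructure 𝕜 (⨂[𝕜] i, PQuot 𝕜 (Ω i) (ξ i))}
    (hPT : IsPiTensorBracket P PT)
    (φ : (⨂[𝕜] i, PQuot 𝕜 (Ω i) (ξ i)) ≃ₐ[𝕜] ⨂[𝕜] i, PQuot 𝕜 (Ω i) (ξ i))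
    (hφ : ∀ a b, φ (PT.bracket a b) = PT.bracket (φ a) (φ b)) (j : Fin d) :
    ∃ x : {x : Unk → 𝕜 // ∀ p ∈ eqs (Ω j) (ξ j), aeval x p = 0},
      ∀ l, φ (inc (A := fun i => PQuot 𝕜 (Ω i) (ξ i)) j (mkA (Ω j) (ξ j) (X l))) =
        inc (A := fun i => PQuot 𝕜 (Ω i) (ξ i)) j
          (mkA (Ω j) (ξ j) (Laf (unkM x.1) (unkb x.1) l)) := by
  have h1 := main_affine hG hP hPT hdist j φ hφ
  have h2 : ∀ l, ∃ f : MvPolynomial (Fin 3) 𝕜, f.totalDegree ≤ 1 ∧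
      φ (inc (A := fun i => PQuot 𝕜 (Ω i) (ξ i)) j (mkA (Ω j) (ξ j) (X l))) =
        inc (A := fun i => PQuot 𝕜 (Ω i) (ξ i)) j (mkA (Ω j) (ξ j) f) := by
    intro l
    obtain ⟨a, ha, hl⟩ := h1 l
    obtain ⟨f, hf, rfl⟩ := mem_Fil.1 ha
    exact ⟨f, hf, hl⟩
  choose L hL1 hL using h2
  obtain ⟨M, b, rfl⟩ := exists_Laf hL1
  let p : ∀ i, Pt (Ω i) (ξ i) := fun i => (Pt_nonempty (hG i)).some
  let J : PQuot 𝕜 (Ω j) (ξ j) →ₐ[𝕜] ⨂[𝕜] i, PQuot 𝕜 (Ω i) (ξ i) :=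
    inc (A := fun i => PQuot 𝕜 (Ω i) (ξ i)) j
  let r : (⨂[𝕜] i, PQuot 𝕜 (Ω i) (ξ i)) →ₐ[𝕜] PQuot 𝕜 (Ω j) (ξ j) :=
    rho (A := fun i => PQuot 𝕜 (Ω i) (ξ i)) (fun i => evA (Ω := Ω i) (ξ := ξ i)) j p
  have hrJ : ∀ a, r (J a) = a := fun a =>
    rho_inc (A := fun i => PQuot 𝕜 (Ω i) (ξ i)) (fun i => evA (Ω := Ω i) (ξ := ξ i)) j p a
  have hJinj : Function.Injective J := Function.LeftInverse.injective hrJ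
  let ψ : PQuot 𝕜 (Ω j) (ξ j) →ₐ[𝕜] PQuot 𝕜 (Ω j) (ξ j) := r.comp ((φ : _ →ₐ[𝕜] _).comp J)
  have hall : ∀ f, φ (J (mkA (Ω j) (ξ j) f)) = J (mkA (Ω j) (ξ j) (aeval (Laf M b) f)) := by
    have : ((φ : _ →ₐ[𝕜] _).comp J).comp (mkA (Ω j) (ξ j)) =
        (J.comp (mkA (Ω j) (ξ j))).comp (aeval (Laf M b)) := by
      apply MvPolynomial.algHom_ext
      intro l
      simp only [AlgHom.comp_apply, aeval_X]
      exact hL l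
    intro f
    exact AlgHom.congr_fun this f
  have hψ : ∀ a, φ (J a) = J (ψ a) := by
    intro a
    obtain ⟨f, rfl⟩ := mkA_surj (Ω j) (ξ j) a
    change _ = J (r (φ (J _)))
    rw [hall, hrJ]
  have hdS := sol_of_affine (hG j) (hP j) (M := M) (b := b) ψ
    (fun x y hxy => hJinj (φ.injective (by rw [hψ, hψ, hxy])))
    (fun x y => hJinj (by
      rw [← hψ]
      have e := bracket_inc_inc (A := fun i => PQuot 𝕜 (Ω i) (ξ i)) hPT j
      have e1 := e x y
      have e2 := e (ψ x) (ψ y)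
      change PT.bracket (J x) (J y) = J _ at e1
      change PT.bracket (J (ψ x)) (J (ψ y)) = J _ at e2
      rw [← e1, hφ, hψ, hψ, e2]))
    (fun l => hJinj (by rw [← hψ]; exact hL l))
  refine ⟨⟨fun s => match s with
    | some (a, some m) => M a m
    | some (a, none) => b a
    | none => M.det⁻¹, (eqs_iff _ _ _).2 ⟨hdS.2, inv_mul_cancel₀ hdS.1⟩⟩, hL⟩

end final
end PoissonFin

open PiTensorProduct in
/-- Theorem 0.2(2): the group of Poisson algebra automorphisms of
`P_{Ω₁-ξ₁} ⊗ ⋯ ⊗ P_{Ω_d-ξ_d}` is finite. -/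
theorem finite_poissonAut_of_tensorProduct_of_potentials
    {𝕜 : Type*} [Field 𝕜] [IsAlgClosed 𝕜] [CharZero 𝕜]
    (d : ℕ) (Ω : Fin d → MvPolynomial (Fin 3) 𝕜) (n : Fin d → ℕ)
    (hhom : ∀ i, (Ω i).IsHomogeneous (n i))
    (hiso : ∀ i, HasIsolatedSingularity (Ω i))
    (hdeg : ∀ i, 5 ≤ n i)
    (hdist : Function.Injective n)
    (ξ : Fin d → 𝕜)
    (P : ∀ i, PoissonStructure 𝕜 (PQuot 𝕜 (Ω i) (ξ i)))
    (hP : ∀ i, IsInducedBracket (Ω i) (ξ i) (P i))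
    (PT : PoissonStructure 𝕜 (⨂[𝕜] i, PQuot 𝕜 (Ω i) (ξ i)))
    (hPT : IsPiTensorBracket P PT) :
    Finite {f : (⨂[𝕜] i, PQuot 𝕜 (Ω i) (ξ i)) ≃ₐ[𝕜] ⨂[𝕜] i, PQuot 𝕜 (Ω i) (ξ i) //
      ∀ a b, f (PT.bracket a b) = PT.bracket (f a) (f b)} := by
  have hG : ∀ i, PoissonFin.Good (Ω i) (n i) := fun i =>
    PoissonFin.Good.of_isolated (hhom i) (hdeg i) (hiso i)
  have hfin := fun i => PoissonFin.finite_eqs (ξ i) (hG i)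
  choose x hx using fun (φ : {f : (⨂[𝕜] i, PQuot 𝕜 (Ω i) (ξ i)) ≃ₐ[𝕜]
      ⨂[𝕜] i, PQuot 𝕜 (Ω i) (ξ i) // ∀ a b, f (PT.bracket a b) = PT.bracket (f a) (f b)}) j =>
    PoissonFin.aut_data hG hdist hP hPT φ.1 φ.2 j
  refine Finite.of_injective x ?_
  intro φ φ' h
  apply Subtype.ext
  have key : φ.1.toAlgHom = φ'.1.toAlgHom := by
    refine PoissonFin.tens_ext fun i a => ?_
    obtain ⟨f, rfl⟩ := PoissonFin.mkA_surj (Ω i) (ξ i) a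
    have h2 : (φ.1.toAlgHom.comp (PoissonFin.inc (A := fun i => PQuot 𝕜 (Ω i) (ξ i)) i)).comp
        (PoissonFin.mkA (Ω i) (ξ i)) =
        (φ'.1.toAlgHom.comp (PoissonFin.inc (A := fun i => PQuot 𝕜 (Ω i) (ξ i)) i)).comp
        (PoissonFin.mkA (Ω i) (ξ i)) := by
      apply MvPolynomial.algHom_ext
      intro l
      have e1 := hx φ i l
      rw [h, ← hx φ' i l] at e1
      exact e1
    exact AlgHom.congr_fun h2 f
  exact AlgEquiv.ext fun a => AlgHom.congr_fun key a
end

section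
/- Let 𝕜 be an algebraically closed field of characteristic zero. Let Ω_1,…,Ω_d ∈ 𝕜[x,y,z] be homogeneous polynomials with isolated singularities whose degrees are pairwise distinct and each at least 5, and let ξ_1,…,ξ_d ∈ 𝕜. Then the Poisson algebra P = P_{Ω_1−ξ_1} ⊗_𝕜 ⋯ ⊗_𝕜 P_{Ω_d−ξ_d} is Poisson simple if and only if ξ_i ≠ 0 for all i = 1,…,d. -/
open scoped TensorProduct

section PolynomialPart

open MvPolynomial

variable {𝕜 : Type*} [Field 𝕜]

lemma jac_stable_cross {Ω : MvPolynomial (Fin 3) 𝕜} {J : Ideal (MvPolynomial (Fin 3) 𝕜)}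
    (hJ : ∀ f g, g ∈ J → jacBracket Ω f g ∈ J) {g : MvPolynomial (Fin 3) 𝕜} (hg : g ∈ J)
    (i j : Fin 3) : pderiv i Ω * pderiv j g - pderiv j Ω * pderiv i g ∈ J := by
  have h0 := hJ (X 0) g hg
  have h1 := hJ (X 1) g hg
  have h2 := hJ (X 2) g hg
  simp only [jacBracket, Matrix.det_fin_three, Matrix.of_apply, Matrix.cons_val_zero,
    Matrix.cons_val_one, Matrix.cons_val, pderiv_X_self,
    pderiv_X_of_ne (R := 𝕜) (show (0 : Fin 3) ≠ 1 by decide),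
    pderiv_X_of_ne (R := 𝕜) (show (0 : Fin 3) ≠ 2 by decide),
    pderiv_X_of_ne (R := 𝕜) (show (1 : Fin 3) ≠ 0 by decide),
    pderiv_X_of_ne (R := 𝕜) (show (1 : Fin 3) ≠ 2 by decide),
    pderiv_X_of_ne (R := 𝕜) (show (2 : Fin 3) ≠ 0 by decide),
    pderiv_X_of_ne (R := 𝕜) (show (2 : Fin 3) ≠ 1 by decide)] at h0 h1 h2
  have e : ∀ a b : MvPolynomial (Fin 3) 𝕜, a ∈ J → (b = a ∨ b = -a ∨ b = 0) → b ∈ J := by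
    rintro a b ha (rfl | rfl | rfl)
    · exact ha
    · exact J.neg_mem ha
    · exact J.zero_mem
  fin_cases i <;> fin_cases j <;> dsimp only [Fin.zero_eta, Fin.mk_one, Fin.reduceFinMk]
  · exact e _ _ h0 (by right; right; ring)
  · exact e _ _ h2 (by right; left; ring1)
  · exact e _ _ h1 (by left; ring1)
  · exact e _ _ h2 (by left; ring1)
  · exact e _ _ h0 (by right; right; ring)
  · exact e _ _ h0 (by right; left; ring1)
  · exact e _ _ h1 (by right; left; ring1)
  · exact e _ _ h0 (by left; ring1)
  · exact e _ _ h0 (by right; right; ring)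

lemma homog_mem_top [CharZero 𝕜] {Ω : MvPolynomial (Fin 3) 𝕜} {n : ℕ} (hΩ : Ω.IsHomogeneous n)
    (hn : n ≠ 0) {ξ : 𝕜} (hξ : ξ ≠ 0)
    {J : Ideal (MvPolynomial (Fin 3) 𝕜)} (hF : Ω - C ξ ∈ J)
    (hJ : ∀ f g, g ∈ J → jacBracket Ω f g ∈ J) :
    ∀ (k : ℕ) (g : MvPolynomial (Fin 3) 𝕜), g.IsHomogeneous k → g ≠ 0 → g ∈ J → J = ⊤ := by
  intro k
  induction k with
  | zero =>
    intro g hg h0 hgJ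
    have hC : g = C (coeff 0 g) :=
      totalDegree_eq_zero_iff_eq_C.mp (Nat.le_zero.mp hg.totalDegree_le)
    have hc : coeff 0 g ≠ 0 := by
      intro h; rw [h, map_zero] at hC; exact h0 hC
    refine J.eq_top_of_isUnit_mem hgJ ?_
    rw [hC]
    exact (IsUnit.mk0 _ hc).map C
  | succ k ih =>
    intro g hg h0 hgJ
    have hE := hg.sum_X_mul_pderiv
    have hex : ∃ j, pderiv j g ≠ 0 := by
      by_contra hcon
      push Not at hcon
      simp only [hcon, mul_zero, Finset.sum_const_zero, nsmul_eq_mul] at hE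
      have := mul_eq_zero.mp hE.symm
      rcases this with h | h
      · exact absurd h (by exact_mod_cast (Nat.succ_ne_zero k))
      · exact h0 h
    obtain ⟨j, hj⟩ := hex
    refine ih (pderiv j g) (by simpa using hg.pderiv (i := j)) hj ?_
    have hEΩ := hΩ.sum_X_mul_pderiv
    have h1 : (n : MvPolynomial (Fin 3) 𝕜) * Ω * pderiv j g ∈ J := by
      have : (n : MvPolynomial (Fin 3) 𝕜) * Ω * pderiv j g =
          (∑ i, X i * (pderiv i Ω * pderiv j g - pderiv j Ω * pderiv i g))
            + pderiv j Ω * ((k + 1 : ℕ) • g) := by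
        rw [← nsmul_eq_mul, ← hEΩ, ← hE, Finset.sum_mul, Finset.mul_sum,
          ← Finset.sum_add_distrib]
        refine Finset.sum_congr rfl fun i _ => ?_
        ring
      rw [this]
      refine J.add_mem (J.sum_mem fun i _ => J.mul_mem_left _ (jac_stable_cross hJ hgJ i j)) ?_
      exact J.mul_mem_left _ (by rw [nsmul_eq_mul]; exact J.mul_mem_left _ hgJ)
    have h2 : C ((n : 𝕜) * ξ) * pderiv j g ∈ J := by
      have : C ((n : 𝕜) * ξ) * pderiv j g = (n : MvPolynomial (Fin 3) 𝕜) * Ω * pderiv j g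
          - ((n : MvPolynomial (Fin 3) 𝕜) * pderiv j g) * (Ω - C ξ) := by
        rw [map_mul, map_natCast]; ring
      rw [this]
      exact J.sub_mem h1 (J.mul_mem_left _ hF)
    have hne : (n : 𝕜) * ξ ≠ 0 := mul_ne_zero (by exact_mod_cast hn) hξ
    have : pderiv j g = C ((n : 𝕜) * ξ)⁻¹ * (C ((n : 𝕜) * ξ) * pderiv j g) := by
      rw [← mul_assoc, ← map_mul, inv_mul_cancel₀ hne, map_one, one_mul]
    rw [this]
    exact J.mul_mem_left _ h2

/-- Scaling automorphism. -/
noncomputable def scal (c : 𝕜) : MvPolynomial (Fin 3) 𝕜 →ₐ[𝕜] MvPolynomial (Fin 3) 𝕜 :=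
  aeval fun i => C c * X i

lemma scal_monomial (c a : 𝕜) (m : Fin 3 →₀ ℕ) :
    scal c (monomial m a) = C (c ^ m.degree) * monomial m a := by
  rw [scal, aeval_monomial, algebraMap_eq, monomial_eq]
  rw [Finsupp.prod_fintype _ _ (fun _ => pow_zero _), Finsupp.prod_fintype _ _ (fun _ => pow_zero _)]
  simp only [mul_pow, Finset.prod_mul_distrib]
  rw [Finset.prod_pow_eq_pow_sum, Finsupp.degree_eq_sum, map_pow]
  ring

lemma coeff_scal (c : 𝕜) (p : MvPolynomial (Fin 3) 𝕜) (m : Fin 3 →₀ ℕ) :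
    coeff m (scal c p) = c ^ m.degree * coeff m p := by
  induction p using MvPolynomial.induction_on' with
  | monomial u a =>
    rw [scal_monomial, coeff_C_mul, coeff_monomial]
    split_ifs with h
    · rw [h]
    · simp
  | add p q hp hq => rw [map_add, coeff_add, coeff_add, hp, hq, mul_add]

lemma scal_scal (c e : 𝕜) (p : MvPolynomial (Fin 3) 𝕜) : scal c (scal e p) = scal (c * e) p := by
  ext m
  simp only [coeff_scal, mul_pow, mul_assoc]

lemma scal_one (p : MvPolynomial (Fin 3) 𝕜) : scal 1 p = p := by
  ext m
  simp [coeff_scal]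

lemma scal_homog {c : 𝕜} {n : ℕ} (hc : c ^ n = 1) {p : MvPolynomial (Fin 3) 𝕜}
    (hp : p.IsHomogeneous n) : scal c p = p := by
  ext m
  rw [coeff_scal]
  by_cases h : coeff m p = 0
  · rw [h, mul_zero]
  · have : m.degree = n := by
      by_contra hne
      exact h (hp.coeff_eq_zero hne)
    rw [this, hc, one_mul]

lemma exists_homog_mem [CharZero 𝕜] [IsAlgClosed 𝕜] {Ω : MvPolynomial (Fin 3) 𝕜} {n : ℕ}
    (hΩ : Ω.IsHomogeneous n)
    (hn : n ≠ 0) {ξ : 𝕜} (hξ : ξ ≠ 0) (hp : Prime (Ω - C ξ))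
    {J : Ideal (MvPolynomial (Fin 3) 𝕜)} (hF : Ω - C ξ ∈ J)
    {f : MvPolynomial (Fin 3) 𝕜} (hfJ : f ∈ J) (hf : ¬ (Ω - C ξ) ∣ f) :
    ∃ (k : ℕ) (g : MvPolynomial (Fin 3) 𝕜), g.IsHomogeneous k ∧ g ≠ 0 ∧ g ∈ J := by
  have : NeZero (n : 𝕜) := ⟨by exact_mod_cast hn⟩
  obtain ⟨ζ, hζ⟩ := HasEnoughRootsOfUnity.exists_primitiveRoot 𝕜 n
  set h : MvPolynomial (Fin 3) 𝕜 := ∏ k ∈ Finset.range n, scal (ζ ^ k) f with hh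
  have hinv : scal ζ h = h := by
    rw [hh, map_prod]
    simp only [scal_scal, ← pow_succ']
    obtain ⟨m, rfl⟩ := Nat.exists_eq_succ_of_ne_zero hn
    rw [Finset.prod_range_succ, Finset.prod_range_succ', hζ.pow_eq_one, pow_zero]
  have hhJ : h ∈ J := by
    rw [hh, Finset.prod_eq_mul_prod_sdiff_singleton_of_mem (i := 0)
      (Finset.mem_range.mpr (Nat.pos_of_ne_zero hn)), pow_zero, scal_one]
    exact J.mul_mem_right _ hfJ
  have hcomp : ∀ i, ¬ n ∣ i → homogeneousComponent i h = 0 := by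
    intro i hi
    ext m
    rw [coeff_homogeneousComponent, coeff_zero]
    split_ifs with hm
    · have h1 : coeff m (scal ζ h) = coeff m h := by rw [hinv]
      rw [coeff_scal, hm] at h1
      by_contra hne
      have : ζ ^ i = 1 := by
        have := mul_right_cancel₀ hne (h1.trans (one_mul _).symm)
        exact this
      exact hi (hζ.dvd_of_pow_eq_one i this)
    · rfl
  have hhF : ¬ (Ω - C ξ) ∣ h := by
    intro hd
    rw [hh, hp.dvd_finsetProd_iff] at hd
    obtain ⟨k, _, hk⟩ := hd
    have hu : (ζ ^ k) ≠ 0 := pow_ne_zero _ (hζ.ne_zero hn)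
    have := map_dvd (scal (ζ ^ k)⁻¹) hk
    rw [scal_scal, inv_mul_cancel₀ hu, scal_one, map_sub, scal_homog _ hΩ] at this
    · apply hf
      simpa [scal] using this
    · rw [inv_pow, ← pow_mul, mul_comm, pow_mul, hζ.pow_eq_one, one_pow, inv_one]
  set D := h.totalDegree with hD
  set G : MvPolynomial (Fin 3) 𝕜 := ∑ i ∈ Finset.range (D + 1),
    homogeneousComponent i h * (C ξ⁻¹ * Ω) ^ (D - i / n) with hG
  have hdiff : (Ω - C ξ) ∣ G - h := by
    have : G - h = ∑ i ∈ Finset.range (D + 1),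
        homogeneousComponent i h * ((C ξ⁻¹ * Ω) ^ (D - i / n) - 1) := by
      rw [hG]
      nth_rewrite 2 [← sum_homogeneousComponent h]
      rw [← Finset.sum_sub_distrib]
      refine Finset.sum_congr rfl fun i _ => by ring
    rw [this]
    refine Finset.dvd_sum fun i _ => Dvd.dvd.mul_left ?_ _
    have hpow := sub_dvd_pow_sub_pow (C ξ⁻¹ * Ω) 1 (D - i / n)
    rw [one_pow] at hpow
    refine dvd_trans ?_ hpow
    refine ⟨C ξ⁻¹, ?_⟩
    rw [sub_mul, ← map_mul, mul_inv_cancel₀ hξ, map_one, mul_comm]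
  refine ⟨n * D, G, ?_, ?_, ?_⟩
  · refine IsHomogeneous.sum _ _ _ fun i hi => ?_
    by_cases hdvd : n ∣ i
    · obtain ⟨q, rfl⟩ := hdvd
      have hq : n * q ≤ D := Nat.lt_succ_iff.mp (Finset.mem_range.mp hi)
      have hq' : q ≤ D := le_trans (Nat.le_mul_of_pos_left q (Nat.pos_of_ne_zero hn)) hq
      rw [Nat.mul_div_cancel_left _ (Nat.pos_of_ne_zero hn)]
      have h1 : (C ξ⁻¹ * Ω).IsHomogeneous n := by
        simpa using (isHomogeneous_C (Fin 3) ξ⁻¹).mul hΩ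
      have h2 := (homogeneousComponent_isHomogeneous (n * q) h).mul (h1.pow (D - q))
      have : n * q + n * (D - q) = n * D := by rw [← mul_add, Nat.add_sub_cancel' hq']
      rwa [this] at h2
    · rw [hcomp i hdvd, zero_mul]
      exact isHomogeneous_zero _ _ _
  · intro h0
    rw [h0, zero_sub, dvd_neg] at hdiff
    exact hhF hdiff
  · have : G = (G - h) + h := by ring
    rw [this]
    exact J.add_mem (J.mem_of_dvd hdiff hF) hhJ

end PolynomialPart

section IrreduciblePart

open MvPolynomial

variable {𝕜 : Type*} [Field 𝕜]

/-- The map setting the variables in `s` to zero. -/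
noncomputable def killVars (s : Finset (Fin 3)) :
    MvPolynomial (Fin 3) 𝕜 →ₐ[𝕜] MvPolynomial (Fin 3) 𝕜 :=
  aeval fun i => if i ∈ s then 0 else X i

lemma killVars_killVars {s t : Finset (Fin 3)} (h : s ⊆ t) (p : MvPolynomial (Fin 3) 𝕜) :
    killVars t (killVars s p) = killVars t p := by
  have : (killVars (𝕜 := 𝕜) t).comp (killVars s) = killVars t := by
    ext i : 1
    simp only [killVars, AlgHom.comp_apply, aeval_X]
    by_cases hi : i ∈ s
    · simp [hi, h hi]
    · simp [hi]
  exact DFunLike.congr_fun this p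

lemma ker_killVars_lt {s t : Finset (Fin 3)} (h : s ⊆ t) {i : Fin 3} (hi : i ∈ t) (his : i ∉ s) :
    RingHom.ker (killVars (𝕜 := 𝕜) s) < RingHom.ker (killVars (𝕜 := 𝕜) t) := by
  refine lt_of_le_of_ne ?_ ?_
  · intro p hp
    rw [RingHom.mem_ker] at hp ⊢
    rw [← killVars_killVars h, hp, map_zero]
  · intro heq
    have h1 : (X i : MvPolynomial (Fin 3) 𝕜) ∈ RingHom.ker (killVars (𝕜 := 𝕜) t) := by
      rw [RingHom.mem_ker]; simp [killVars, hi]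
    rw [← heq, RingHom.mem_ker] at h1
    simp [killVars, his] at h1

lemma height_origin : 3 ≤ (RingHom.ker (killVars (𝕜 := 𝕜) Finset.univ)).height := by
  have hp : ∀ s, (RingHom.ker (killVars (𝕜 := 𝕜) s)).IsPrime := fun s => RingHom.ker_isPrime _
  have key : ∀ s t : Finset (Fin 3), ∀ i, s ⊆ t → i ∈ t → i ∉ s → ∀ m : ℕ∞,
      m ≤ (RingHom.ker (killVars (𝕜 := 𝕜) s)).height →
      m + 1 ≤ (RingHom.ker (killVars (𝕜 := 𝕜) t)).height := by
    intro s t i h hi his m hm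
    have := hp s
    have := hp t
    exact le_trans (by gcongr) (Ideal.height_add_one_le_of_lt_of_isPrime (ker_killVars_lt h hi his))
  have h1 := key ∅ {0} 0 (by decide) (by decide) (by decide) 0 zero_le
  have h2 := key {0} {0, 1} 1 (by decide) (by decide) (by decide) _ h1
  have h3 := key {0, 1} Finset.univ 2 (by decide) (by decide) (by decide) _ h2
  exact h3

lemma ker_killVars_univ_isMaximal : (RingHom.ker (killVars (𝕜 := 𝕜) Finset.univ)).IsMaximal := by
  have h : ∀ p : MvPolynomial (Fin 3) 𝕜, killVars Finset.univ p = C (coeff 0 p) := by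
    intro p
    simp only [killVars, Finset.mem_univ, if_true]
    rw [show (fun _ : Fin 3 => (0 : MvPolynomial (Fin 3) 𝕜)) = 0 from rfl, aeval_zero]
    rfl
  have : RingHom.ker (killVars (𝕜 := 𝕜) Finset.univ) =
      RingHom.ker (constantCoeff : MvPolynomial (Fin 3) 𝕜 →+* 𝕜) := by
    ext p
    rw [RingHom.mem_ker, RingHom.mem_ker, h, constantCoeff_eq]
    simp
  rw [this]
  exact RingHom.ker_isMaximal_of_surjective _ (fun c => ⟨C c, constantCoeff_C _ c⟩)

lemma homog_mem_ker {k : ℕ} (hk : k ≠ 0) {g : MvPolynomial (Fin 3) 𝕜} (hg : g.IsHomogeneous k) :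
    g ∈ RingHom.ker (killVars (𝕜 := 𝕜) Finset.univ) := by
  rw [RingHom.mem_ker]
  simp only [killVars, Finset.mem_univ, if_true]
  rw [show (fun _ : Fin 3 => (0 : MvPolynomial (Fin 3) 𝕜)) = 0 from rfl, aeval_zero]
  rw [constantCoeff_eq, hg.coeff_eq_zero (by simpa using hk.symm), map_zero]

lemma not_finite_two {a b : MvPolynomial (Fin 3) 𝕜} {p q : ℕ} (hp : p ≠ 0) (hq : q ≠ 0)
    (ha : a.IsHomogeneous p) (hb : b.IsHomogeneous q) :
    ¬ FiniteDimensional 𝕜 (MvPolynomial (Fin 3) 𝕜 ⧸ Ideal.span {a, b}) := by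
  intro hfin
  have hmax := ker_killVars_univ_isMaximal (𝕜 := 𝕜)
  set m := RingHom.ker (killVars (𝕜 := 𝕜) Finset.univ) with hm
  have hle : Ideal.span {a, b} ≤ m := by
    rw [Ideal.span_le]
    rintro x (rfl | rfl)
    · exact homog_mem_ker hp ha
    · exact homog_mem_ker hq hb
  have hart : IsArtinianRing (MvPolynomial (Fin 3) 𝕜 ⧸ Ideal.span {a, b}) :=
    IsArtinianRing.of_finite 𝕜 _
  have hmin : m ∈ (Ideal.span {a, b}).minimalPrimes := by
    refine ⟨⟨hmax.isPrime, hle⟩, ?_⟩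
    rintro Q ⟨hQ, hQle⟩ hQm
    have hQmax : Q.IsMaximal := by
      have hs : Function.Surjective (Ideal.Quotient.mk (Ideal.span {a, b})) :=
        Ideal.Quotient.mk_surjective
      have hk : RingHom.ker (Ideal.Quotient.mk (Ideal.span {a, b})) ≤ Q := by
        rw [Ideal.mk_ker]; exact hQle
      have h1 : (Q.map (Ideal.Quotient.mk (Ideal.span {a, b}))).IsPrime :=
        Ideal.map_isPrime_of_surjective hs hk
      have h2 : (Q.map (Ideal.Quotient.mk (Ideal.span {a, b}))).IsMaximal :=
        IsArtinianRing.isMaximal_of_isPrime _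
      have h3 := Ideal.comap_isMaximal_of_surjective _ hs (K := Q.map (Ideal.Quotient.mk (Ideal.span {a, b})))
      rwa [Ideal.comap_map_of_surjective _ hs, ← RingHom.ker_eq_comap_bot, sup_eq_left.mpr hk] at h3
    exact (hQmax.eq_of_le hmax.ne_top hQm).ge
  have h1 := Ideal.height_le_card_of_mem_minimalPrimes_span (Set.toFinite {a, b}) hmin
  have h2 := height_origin (𝕜 := 𝕜)
  have h3 : (({a, b} : Set (MvPolynomial (Fin 3) 𝕜)).ncard : ℕ∞) ≤ 2 := by
    have := Set.ncard_insert_le a {b}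
    rw [Set.ncard_singleton] at this
    exact_mod_cast this
  have := (h2.trans h1).trans h3
  exact absurd this (by decide)

lemma top_mul (a b : MvPolynomial (Fin 3) 𝕜) :
    homogeneousComponent (a.totalDegree + b.totalDegree) (a * b) =
      homogeneousComponent a.totalDegree a * homogeneousComponent b.totalDegree b := by
  have hab : a * b = (∑ i ∈ Finset.range (a.totalDegree + 1), homogeneousComponent i a) *
      ∑ i ∈ Finset.range (b.totalDegree + 1), homogeneousComponent i b := by
    rw [sum_homogeneousComponent, sum_homogeneousComponent]
  rw [hab]
  rw [Finset.sum_mul_sum, map_sum]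
  simp only [map_sum]
  rw [Finset.sum_eq_single a.totalDegree, Finset.sum_eq_single b.totalDegree]
  · exact homogeneousComponent_eq_self
      ((homogeneousComponent_isHomogeneous _ a).mul (homogeneousComponent_isHomogeneous _ b))
  · intro j hj hne
    have hj' := Finset.mem_range.mp hj
    rw [homogeneousComponent_of_mem ((homogeneousComponent_isHomogeneous _ a).mul
      (homogeneousComponent_isHomogeneous _ b)), if_neg (by omega)]
  · intro h; exact absurd (Finset.self_mem_range_succ _) h
  · intro i hi hne
    refine Finset.sum_eq_zero fun j hj => ?_
    have hj' := Finset.mem_range.mp hj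
    have hi' := Finset.mem_range.mp hi
    rw [homogeneousComponent_of_mem ((homogeneousComponent_isHomogeneous _ a).mul
      (homogeneousComponent_isHomogeneous _ b)), if_neg (by omega)]
  · intro h; exact absurd (Finset.self_mem_range_succ _) h

lemma no_homog_factor {Ω a b : MvPolynomial (Fin 3) 𝕜} (hiso : HasIsolatedSingularity Ω)
    {p q : ℕ} (hp : p ≠ 0) (hq : q ≠ 0)
    (ha : a.IsHomogeneous p) (hb : b.IsHomogeneous q) (hab : Ω = a * b) : False := by
  refine not_finite_two hp hq ha hb ?_
  have hle : Ideal.span {pderiv (0 : Fin 3) Ω, pderiv 1 Ω, pderiv 2 Ω} ≤ Ideal.span {a, b} := by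
    have h : ∀ i, pderiv i Ω ∈ Ideal.span {a, b} := by
      intro i
      rw [hab, Derivation.leibniz]
      refine Ideal.add_mem _ (Ideal.mul_mem_right _ _ (Ideal.subset_span (by simp)))
        (Ideal.mul_mem_right _ _ (Ideal.subset_span (by simp)))
    rw [Ideal.span_le]
    rintro x (rfl | rfl | rfl) <;> exact h _
  have : FiniteDimensional 𝕜 (MvPolynomial (Fin 3) 𝕜 ⧸
    Ideal.span {pderiv (0 : Fin 3) Ω, pderiv 1 Ω, pderiv 2 Ω}) := hiso
  exact Module.Finite.of_surjective (Ideal.Quotient.factorₐ 𝕜 hle).toLinearMap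
    (Ideal.Quotient.factor_surjective hle)

lemma potential_ne_zero {Ω : MvPolynomial (Fin 3) 𝕜} (hiso : HasIsolatedSingularity Ω) :
    Ω ≠ 0 := by
  rintro rfl
  exact no_homog_factor hiso one_ne_zero one_ne_zero (isHomogeneous_zero _ _ _)
    (isHomogeneous_zero _ _ _) (mul_zero 0).symm

lemma totalDegree_F {Ω : MvPolynomial (Fin 3) 𝕜} (hiso : HasIsolatedSingularity Ω)
    {n : ℕ} (hn : n ≠ 0) (hΩ : Ω.IsHomogeneous n) (ξ : 𝕜) : (Ω - C ξ).totalDegree = n := by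
  rw [sub_eq_add_neg, ← map_neg, totalDegree_add_eq_left_of_totalDegree_lt]
  · exact hΩ.totalDegree (potential_ne_zero hiso)
  · rw [totalDegree_C, hΩ.totalDegree (potential_ne_zero hiso)]
    exact Nat.pos_of_ne_zero hn

lemma F_prime {Ω : MvPolynomial (Fin 3) 𝕜} (hiso : HasIsolatedSingularity Ω)
    {n : ℕ} (hn : n ≠ 0) (hΩ : Ω.IsHomogeneous n) (ξ : 𝕜) : Prime (Ω - C ξ) := by
  rw [← UniqueFactorizationMonoid.irreducible_iff_prime]
  have hdeg := totalDegree_F hiso hn hΩ ξ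
  have hF0 : Ω - C ξ ≠ 0 := by
    intro h; rw [h, totalDegree_zero] at hdeg; exact hn hdeg.symm
  refine ⟨?_, ?_⟩
  · intro hu
    rw [isUnit_iff_totalDegree_of_isReduced] at hu
    exact hn (hdeg ▸ hu.2)
  · intro a b hab
    by_contra hcon
    push Not at hcon
    have ha0 : a ≠ 0 := by rintro rfl; exact hF0 (by rw [hab, zero_mul])
    have hb0 : b ≠ 0 := by rintro rfl; exact hF0 (by rw [hab, mul_zero])
    have hdp : ∀ c : MvPolynomial (Fin 3) 𝕜, c ≠ 0 → ¬ IsUnit c → c.totalDegree ≠ 0 := by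
      intro c hc hu h
      apply hu
      have hC := totalDegree_eq_zero_iff_eq_C.mp h
      rw [hC]
      refine (IsUnit.mk0 _ ?_).map C
      intro h0
      rw [h0, map_zero] at hC
      exact hc hC
    have hsum : a.totalDegree + b.totalDegree = n := by
      rw [← totalDegree_mul_of_isDomain ha0 hb0, ← hab, hdeg]
    refine no_homog_factor hiso (hdp a ha0 hcon.1) (hdp b hb0 hcon.2)
      (homogeneousComponent_isHomogeneous _ a) (homogeneousComponent_isHomogeneous _ b) ?_
    rw [← top_mul, hsum, ← hab, map_sub, homogeneousComponent_eq_self hΩ,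
      homogeneousComponent_eq_zero _ _ (by rw [totalDegree_C]; exact Nat.pos_of_ne_zero hn),
      sub_zero]

end IrreduciblePart

section PoissonPart

namespace PoissonStructure

variable {𝕜 A : Type*} [CommRing 𝕜] [CommRing A] [Algebra 𝕜 A] (P : PoissonStructure 𝕜 A)

lemma add_right (a b c : A) : P.bracket a (b + c) = P.bracket a b + P.bracket a c := by
  rw [P.antisymm, P.add_left, P.antisymm b a, P.antisymm c a, neg_add, neg_neg, neg_neg]

lemma smul_right (r : 𝕜) (a b : A) : P.bracket a (r • b) = r • P.bracket a b := by
  rw [P.antisymm, P.smul_left, P.antisymm b a, smul_neg, neg_neg]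

/-- The Hamiltonian operator of `a`. -/
def ham (a : A) : A →ₗ[𝕜] A where
  toFun b := P.bracket a b
  map_add' := P.add_right a
  map_smul' r b := P.smul_right r a b

@[simp] lemma ham_apply (a b : A) : P.ham a b = P.bracket a b := rfl

lemma bracket_one (a : A) : P.bracket a 1 = 0 := by
  have := P.leibniz a 1 1
  simp only [mul_one, one_mul] at this
  exact left_eq_add.mp this

lemma one_bracket (a : A) : P.bracket 1 a = 0 := by
  rw [P.antisymm, P.bracket_one, neg_zero]

/-- The algebra of operators generated by multiplications and Hamiltonian operators. -/
def opAlg : Subalgebra 𝕜 (Module.End 𝕜 A) :=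
  Algebra.adjoin 𝕜 (Set.range (LinearMap.mulLeft 𝕜 : A → Module.End 𝕜 A) ∪ Set.range P.ham)

lemma mulLeft_mem (a : A) : LinearMap.mulLeft 𝕜 a ∈ P.opAlg :=
  Algebra.subset_adjoin (Or.inl ⟨a, rfl⟩)

lemma ham_mem (a : A) : P.ham a ∈ P.opAlg :=
  Algebra.subset_adjoin (Or.inr ⟨a, rfl⟩)

end PoissonStructure

open PoissonStructure

variable {𝕜 A : Type*} [Field 𝕜] [CommRing A] [Algebra 𝕜 A] {P : PoissonStructure 𝕜 A}

lemma center_scalar (hP : IsPoissonSimple P) (ε : A →ₐ[𝕜] 𝕜) {z : A}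
    (hz : ∀ a, P.bracket a z = 0) : z = algebraMap 𝕜 A (ε z) := by
  set w := z - algebraMap 𝕜 A (ε z) with hw
  have hwc : ∀ a, P.ham a w = 0 := by
    intro a
    rw [hw, map_sub, Algebra.algebraMap_eq_smul_one, map_smul, ham_apply, ham_apply,
      bracket_one, hz, smul_zero, sub_zero]
  have hεw : ε w = 0 := by simp [hw]
  have hst : ∀ x, ∀ y ∈ Ideal.span {w}, P.bracket x y ∈ Ideal.span {w} := by
    intro x y hy
    obtain ⟨c, rfl⟩ := Ideal.mem_span_singleton'.mp hy
    rw [P.leibniz, ← ham_apply _ x w, hwc, mul_zero, add_zero]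
    exact Ideal.mul_mem_left _ _ (Ideal.mem_span_singleton_self w)
  rcases hP (Ideal.span {w}) hst with h | h
  · rw [Ideal.span_singleton_eq_bot] at h
    exact sub_eq_zero.mp h
  · exfalso
    have h1 : (1 : A) ∈ Ideal.span {w} := by rw [h]; trivial
    obtain ⟨c, hc⟩ := Ideal.mem_span_singleton'.mp h1
    have := congrArg ε hc
    simp [hεw] at this

lemma opAlg_isSimple (hP : IsPoissonSimple P) [Nontrivial A] : IsSimpleModule P.opAlg A := by
  refine (isSimpleModule_iff _ _).mpr ⟨fun N => ?_⟩
  let I : Ideal A :=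
    { carrier := N
      add_mem' := N.add_mem
      zero_mem' := N.zero_mem
      smul_mem' := fun c x hx => N.smul_mem (⟨LinearMap.mulLeft 𝕜 c, P.mulLeft_mem c⟩ : P.opAlg) hx }
  rcases hP I (fun x y hy => N.smul_mem (⟨P.ham x, P.ham_mem x⟩ : P.opAlg) hy) with h | h
  · left
    ext x
    have : x ∈ N ↔ x ∈ (⊥ : Ideal A) := by rw [← h]; rfl
    simpa using this
  · right
    ext x
    have : x ∈ N ↔ x ∈ (⊤ : Ideal A) := by rw [← h]; rfl
    simpa using this

lemma opAlg_density (hP : IsPoissonSimple P) (ε : A →ₐ[𝕜] 𝕜) {κ : Type*}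
    (b : Module.Basis κ 𝕜 A) (i₀ : κ) (s : Finset κ) :
    ∃ m ∈ P.opAlg, m (b i₀) = 1 ∧ ∀ j ∈ s, j ≠ i₀ → m (b j) = 0 := by
  classical
  have : Nontrivial A := ε.toRingHom.domain_nontrivial
  have := opAlg_isSimple hP
  have hend : ∀ φ : Module.End P.opAlg A, ∃ c : 𝕜, ∀ v, φ v = c • v := by
    intro φ
    have hmul : ∀ a v, φ (a * v) = a * φ v := fun a v =>
      φ.map_smul (⟨LinearMap.mulLeft 𝕜 a, P.mulLeft_mem a⟩ : P.opAlg) v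
    have hham : ∀ a v, φ (P.bracket a v) = P.bracket a (φ v) := fun a v =>
      φ.map_smul (⟨P.ham a, P.ham_mem a⟩ : P.opAlg) v
    have hz := center_scalar hP ε (z := φ 1) (fun a => by
      rw [← hham, bracket_one, map_zero])
    refine ⟨ε (φ 1), fun v => ?_⟩
    have := hmul v 1
    rw [mul_one] at this
    rw [this, hz, Algebra.smul_def, mul_comm]
    simp
  let f : Module.End (Module.End P.opAlg A) A :=
    { toFun := fun v => b.coord i₀ v • (1 : A)
      map_add' := fun v w => by rw [map_add, add_smul]
      map_smul' := fun φ v => by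
        obtain ⟨c, hc⟩ := hend φ
        change b.coord i₀ (φ v) • (1 : A) = φ (b.coord i₀ v • (1 : A))
        rw [hc, hc, map_smul, smul_assoc] }
  obtain ⟨⟨m, hm⟩, h⟩ := jacobson_density (R := P.opAlg) (M := A) f (insert (b i₀) (s.image b))
  refine ⟨m, hm, ?_, ?_⟩
  · have := h (b i₀) (Finset.mem_insert_self _ _)
    have h2 : f (b i₀) = 1 := by
      change b.coord i₀ (b i₀) • (1 : A) = 1
      simp
    rw [h2] at this
    exact this.symm
  · intro j hj hne
    have := h (b j) (Finset.mem_insert_of_mem (Finset.mem_image_of_mem _ hj))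
    have h2 : f (b j) = 0 := by
      change b.coord i₀ (b j) • (1 : A) = 0
      simp [hne]
    rw [h2] at this
    exact this.symm

end PoissonPart

section TensorPart

open PiTensorProduct PoissonStructure

variable {𝕜 : Type*} [Field 𝕜] {d : ℕ} {A : Fin d → Type*}
  [∀ i, CommRing (A i)] [∀ i, Algebra 𝕜 (A i)]
  {P : ∀ i, PoissonStructure 𝕜 (A i)} {PT : PoissonStructure 𝕜 (⨂[𝕜] i, A i)}

/-- The operator acting by `m` on the `i`-th factor. -/
noncomputable def opAt (i : Fin d) (m : Module.End 𝕜 (A i)) : Module.End 𝕜 (⨂[𝕜] i, A i) :=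
  PiTensorProduct.map (Function.update (fun j => (1 : Module.End 𝕜 (A j))) i m)

lemma opAt_tprod (i : Fin d) (m : Module.End 𝕜 (A i)) (x : ∀ j, A j) :
    opAt i m (tprod 𝕜 x) = tprod 𝕜 (Function.update x i (m (x i))) := by
  rw [opAt, PiTensorProduct.map_tprod]
  congr 1
  ext j
  by_cases h : j = i
  · subst h; simp
  · simp [h]

lemma bracket_single (hPT : IsPiTensorBracket P PT) (i : Fin d) (a : A i) (t : ⨂[𝕜] i, A i) :
    PT.bracket (singleAlgHom (R := 𝕜) i a) t = opAt i ((P i).ham a) t := by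
  have : PT.ham (singleAlgHom (R := 𝕜) i a) = opAt i ((P i).ham a) := by
    refine PiTensorProduct.ext (MultilinearMap.ext fun x => ?_)
    simp only [LinearMap.compMultilinearMap_apply]
    rw [opAt_tprod, ham_apply, singleAlgHom_apply]
    have := hPT (MonoidHom.mulSingle _ i a) x
    rw [this, Finset.sum_eq_single i]
    · congr 1
      ext j
      by_cases h : j = i
      · subst h; simp
      · simp [h]
    · intro j _ hj
      apply (PiTensorProduct.tprod 𝕜).map_coord_zero j
      simp [hj, one_bracket]
    · intro h; exact absurd (Finset.mem_univ i) h
  exact DFunLike.congr_fun this t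

lemma mul_single (i : Fin d) (a : A i) (t : ⨂[𝕜] i, A i) :
    singleAlgHom (R := 𝕜) i a * t = opAt i (LinearMap.mulLeft 𝕜 a) t := by
  have : LinearMap.mulLeft 𝕜 (singleAlgHom (R := 𝕜) i a) = opAt i (LinearMap.mulLeft 𝕜 a) := by
    refine PiTensorProduct.ext (MultilinearMap.ext fun x => ?_)
    simp only [LinearMap.compMultilinearMap_apply]
    rw [opAt_tprod, LinearMap.mulLeft_apply, singleAlgHom_apply, tprod_mul_tprod]
    congr 1
    ext j
    by_cases h : j = i
    · subst h; simp
    · simp [h]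
  exact DFunLike.congr_fun this t

lemma opAt_mem (hPT : IsPiTensorBracket P PT) {I : Ideal (⨂[𝕜] i, A i)}
    (hI : ∀ x, ∀ y ∈ I, PT.bracket x y ∈ I) (i : Fin d) {m : Module.End 𝕜 (A i)}
    (hm : m ∈ (P i).opAlg) : ∀ t ∈ I, opAt i m t ∈ I := by
  refine Algebra.adjoin_induction (p := fun m _ => ∀ t ∈ I, opAt i m t ∈ I)
    ?_ ?_ ?_ ?_ hm
  · rintro x (⟨a, rfl⟩ | ⟨a, rfl⟩) t ht
    · rw [← mul_single]; exact I.mul_mem_left _ ht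
    · rw [← bracket_single hPT]; exact hI _ _ ht
  · intro r t ht
    rw [opAt, Algebra.algebraMap_eq_smul_one, PiTensorProduct.map_update_smul,
      Function.update_eq_self, PiTensorProduct.map_one, LinearMap.smul_apply]
    exact Submodule.smul_of_tower_mem I r ht
  · intro x y _ _ hx hy t ht
    rw [opAt, PiTensorProduct.map_update_add, LinearMap.add_apply]
    exact I.add_mem (hx t ht) (hy t ht)
  · intro x y _ _ hx hy t ht
    have : opAt i (x * y) = opAt i x * opAt i y := by
      rw [opAt, opAt, opAt, ← PiTensorProduct.map_mul]
      congr 1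
      ext j : 1
      by_cases h : j = i
      · subst h; simp
      · simp [h]
    rw [this]
    exact hx _ (hy t ht)

lemma map_mem (hPT : IsPiTensorBracket P PT) {I : Ideal (⨂[𝕜] i, A i)}
    (hI : ∀ x, ∀ y ∈ I, PT.bracket x y ∈ I) (m : ∀ i, Module.End 𝕜 (A i))
    (hm : ∀ i, m i ∈ (P i).opAlg) : ∀ t ∈ I, PiTensorProduct.map m t ∈ I := by
  classical
  have key : ∀ s : Finset (Fin d), ∀ t ∈ I,
      PiTensorProduct.map (fun i => if i ∈ s then m i else (1 : Module.End 𝕜 (A i))) t ∈ I := by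
    intro s
    induction s using Finset.induction_on with
    | empty =>
      intro t ht
      simp only [Finset.notMem_empty, if_false]
      rw [PiTensorProduct.map_one]
      exact ht
    | insert a s has ih =>
      intro t ht
      have : PiTensorProduct.map
          (fun i => if i ∈ insert a s then m i else (1 : Module.End 𝕜 (A i))) =
          opAt a (m a) * PiTensorProduct.map
            (fun i => if i ∈ s then m i else (1 : Module.End 𝕜 (A i))) := by
        rw [opAt, ← PiTensorProduct.map_mul]
        congr 1
        ext j : 1
        by_cases h : j = a
        · subst h; simp [has]
        · simp [h]
      rw [this]
      exact opAt_mem hPT hI a (hm a) _ (ih t ht)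
  intro t ht
  simpa using key Finset.univ t ht

lemma tensor_simple (hPT : IsPiTensorBracket P PT) (hP : ∀ i, IsPoissonSimple (P i))
    (ε : ∀ i, A i →ₐ[𝕜] 𝕜) : IsPoissonSimple PT := by
  classical
  intro I hI
  by_cases hbot : I = ⊥
  · exact Or.inl hbot
  right
  obtain ⟨f, hfI, hf⟩ := Submodule.exists_mem_ne_zero_of_ne_bot hbot
  obtain ⟨b⟩ : Nonempty (∀ i, Module.Basis (Module.Basis.ofVectorSpaceIndex 𝕜 (A i)) 𝕜 (A i)) :=
    ⟨fun i => Module.Basis.ofVectorSpace 𝕜 (A i)⟩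
  obtain ⟨B, hB⟩ : ∃ B, B = Basis.piTensorProduct b := ⟨_, rfl⟩
  have hr : B.repr f ≠ 0 := by simpa using hf
  obtain ⟨p₀, hp₀⟩ := Finsupp.ne_iff.mp hr
  have hd := fun i => opAlg_density (hP i) (ε i) (b i) (p₀ i)
    ((B.repr f).support.image fun p => p i)
  choose m hm h1 h0 using hd
  have hmem := map_mem hPT hI m hm f hfI
  have hval : PiTensorProduct.map m f = B.repr f p₀ • (1 : ⨂[𝕜] i, A i) := by
    conv_lhs => rw [← B.linearCombination_repr f]
    rw [Finsupp.linearCombination_apply, Finsupp.sum, map_sum, Finset.sum_eq_single p₀]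
    · rw [map_smul, hB, Basis.piTensorProduct_apply, PiTensorProduct.map_tprod]
      simp only [h1]
      rfl
    · intro p hp hne
      rw [map_smul, hB, Basis.piTensorProduct_apply, PiTensorProduct.map_tprod]
      obtain ⟨i, hi⟩ := Function.ne_iff.mp hne
      have hpi : p i ∈ (B.repr f).support.image fun p => p i :=
        Finset.mem_image.mpr ⟨p, hp, rfl⟩
      have hz : m i (b i (p i)) = 0 := h0 i (p i) hpi hi
      have hz2 : PiTensorProduct.tprod 𝕜 (fun i => m i (b i (p i))) = 0 :=
        (PiTensorProduct.tprod 𝕜).map_coord_zero i hz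
      rw [hz2, smul_zero]
    · intro h
      rw [Finsupp.notMem_support_iff.mp h, zero_smul, map_zero]
  rw [hval] at hmem
  rw [Ideal.eq_top_iff_one]
  have := Submodule.smul_of_tower_mem I (B.repr f p₀)⁻¹ hmem
  rwa [smul_smul, inv_mul_cancel₀ (by simpa using hp₀), one_smul] at this

lemma tprod_ne_zero_of (x : ∀ i, A i) (hx : ∀ i, x i ≠ 0) : tprod 𝕜 x ≠ 0 := by
  intro h
  let b := fun i => Module.Basis.ofVectorSpace 𝕜 (A i)
  have : ∀ i, ∃ p, (b i).repr (x i) p ≠ 0 := by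
    intro i
    have hr : (b i).repr (x i) ≠ 0 := by simpa using hx i
    simpa using Finsupp.ne_iff.mp hr
  choose p hp using this
  have h2 := Basis.piTensorProduct_repr_tprod_apply b x p
  rw [h, map_zero, Finsupp.zero_apply] at h2
  exact Finset.prod_ne_zero_iff.mpr (fun i _ => hp i) h2.symm

lemma tensor_not_simple (hPT : IsPiTensorBracket P PT) (ε : ∀ i, A i →ₐ[𝕜] 𝕜) (i : Fin d)
    (hε : ∀ a b, ε i ((P i).bracket a b) = 0) (a : A i) (ha : a ≠ 0) (hεa : ε i a = 0) :
    ¬ IsPoissonSimple PT := by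
  classical
  intro hs
  let I : Ideal (⨂[𝕜] i, A i) := (RingHom.ker (ε i)).map (singleAlgHom (R := 𝕜) i)
  have hmemI : ∀ c, ε i c = 0 → singleAlgHom (R := 𝕜) i c ∈ I := fun c hc =>
    Ideal.mem_map_of_mem _ hc
  have hst : ∀ x, ∀ y ∈ I, PT.bracket x y ∈ I := by
    intro x y hy
    refine Submodule.span_induction (p := fun y _ => PT.bracket x y ∈ I) ?_ ?_ ?_ ?_ hy
    · rintro _ ⟨c, hc, rfl⟩
      have h1 : PT.bracket x (singleAlgHom (R := 𝕜) i c)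
          = - opAt i ((P i).ham c) x := by
        rw [PT.antisymm, bracket_single hPT]
      change PT.bracket x (singleAlgHom (R := 𝕜) i c) ∈ I
      rw [h1]
      refine I.neg_mem ?_
      induction x using PiTensorProduct.induction_on with
      | smul_tprod r x =>
        rw [map_smul, opAt_tprod]
        refine Submodule.smul_of_tower_mem I r ?_
        have : tprod 𝕜 (Function.update x i (((P i).ham c) (x i))) =
            tprod 𝕜 (Function.update x i 1) * singleAlgHom (R := 𝕜) i ((P i).bracket c (x i)) := by
          rw [singleAlgHom_apply, tprod_mul_tprod]
          congr 1
          ext j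
          by_cases h : j = i
          · subst h; simp
          · simp [h]
        rw [this]
        exact I.mul_mem_left _ (hmemI _ (hε _ _))
      | add x y hx hy =>
        rw [map_add]
        exact I.add_mem (hx (by rw [PT.antisymm, bracket_single hPT]))
          (hy (by rw [PT.antisymm, bracket_single hPT]))
    · rw [← ham_apply, map_zero]; exact I.zero_mem
    · intro y z _ _ hy hz
      rw [PT.add_right]; exact I.add_mem hy hz
    · intro r y hyI hy'
      rw [smul_eq_mul, PT.leibniz]
      exact I.add_mem (I.mul_mem_left _ hyI) (I.mul_mem_left _ hy')
  rcases hs I hst with h | h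
  · have h1 := hmemI a hεa
    rw [h, Ideal.mem_bot, singleAlgHom_apply] at h1
    refine tprod_ne_zero_of _ ?_ h1
    intro j
    have : Nontrivial (A j) := (ε j).toRingHom.domain_nontrivial
    by_cases hj : j = i
    · subst hj; simpa using ha
    · simp [hj]
  · let χ : (⨂[𝕜] i, A i) →ₐ[𝕜] 𝕜 := liftAlgHom
      ((MultilinearMap.mkPiAlgebra 𝕜 (Fin d) 𝕜).compLinearMap fun j => (ε j).toLinearMap)
      (by simp) (by intro x y; simp [Finset.prod_mul_distrib])
    have hle : I ≤ RingHom.ker χ := by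
      refine Ideal.map_le_iff_le_comap.mpr ?_
      intro c hc
      rw [Ideal.mem_comap, RingHom.mem_ker]
      have hc' : ε i c = 0 := hc
      have hχ : ∀ x : ∀ j, A j, χ (PiTensorProduct.tprod 𝕜 x) = ∏ j, ε j (x j) := by
        intro x
        change lift _ (PiTensorProduct.tprod 𝕜 x) = _
        rw [lift.tprod]
        rfl
      have h2 := hχ (MonoidHom.mulSingle A i c)
      rw [Finset.prod_eq_zero (Finset.mem_univ i) (by simpa using hc')] at h2
      exact h2
    have h1 : (1 : ⨂[𝕜] i, A i) ∈ I := by rw [h]; trivial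
    have := hle h1
    rw [RingHom.mem_ker, map_one] at this
    exact one_ne_zero this

end TensorPart

section QuotPart

open MvPolynomial

variable {𝕜 : Type*} [Field 𝕜]

/-- The projection as an algebra homomorphism. -/
noncomputable def mkA (Ω : MvPolynomial (Fin 3) 𝕜) (ξ : 𝕜) :
    MvPolynomial (Fin 3) 𝕜 →ₐ[𝕜] PQuot 𝕜 Ω ξ :=
  Ideal.Quotient.mkₐ 𝕜 (Ideal.span {Ω - MvPolynomial.C ξ})

lemma mkA_apply (Ω : MvPolynomial (Fin 3) 𝕜) (ξ : 𝕜) (f : MvPolynomial (Fin 3) 𝕜) :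
    mkA Ω ξ f = PQuot.mk Ω ξ f := rfl

lemma mkA_surjective (Ω : MvPolynomial (Fin 3) 𝕜) (ξ : 𝕜) :
    Function.Surjective (mkA Ω ξ) := Ideal.Quotient.mk_surjective

lemma mkA_eq_zero (Ω : MvPolynomial (Fin 3) 𝕜) (ξ : 𝕜) (f : MvPolynomial (Fin 3) 𝕜) :
    mkA Ω ξ f = 0 ↔ (Ω - C ξ) ∣ f := by
  rw [← Ideal.mem_span_singleton]
  exact Ideal.Quotient.eq_zero_iff_mem

variable {Ω : MvPolynomial (Fin 3) 𝕜} {ξ : 𝕜} {n : ℕ}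

lemma quot_simple [IsAlgClosed 𝕜] [CharZero 𝕜] (hΩ : Ω.IsHomogeneous n)
    (hiso : HasIsolatedSingularity Ω) (hn : 5 ≤ n) (hξ : ξ ≠ 0)
    {P : PoissonStructure 𝕜 (PQuot 𝕜 Ω ξ)} (hP : IsInducedBracket Ω ξ P) :
    IsPoissonSimple P := by
  intro I hI
  by_cases hbot : I = ⊥
  · exact Or.inl hbot
  right
  obtain ⟨x, hxI, hx⟩ := Submodule.exists_mem_ne_zero_of_ne_bot hbot
  obtain ⟨f, rfl⟩ := mkA_surjective Ω ξ x
  have hn0 : n ≠ 0 := by omega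
  have hF : Ω - C ξ ∈ I.comap (mkA Ω ξ) := by
    rw [Ideal.mem_comap, (mkA_eq_zero Ω ξ _).mpr dvd_rfl]
    exact I.zero_mem
  have hf : ¬ (Ω - C ξ) ∣ f := fun h => hx ((mkA_eq_zero Ω ξ f).mpr h)
  obtain ⟨k, g, hg, hg0, hgJ⟩ := exists_homog_mem hΩ hn0 hξ
    (F_prime hiso (by omega) hΩ ξ) hF (Ideal.mem_comap.mpr hxI) hf
  have htop := homog_mem_top hΩ hn0 hξ hF (fun f g hg => by
    rw [Ideal.mem_comap, mkA_apply, ← hP]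
    exact hI _ _ hg) k g hg hg0 hgJ
  rw [Ideal.eq_top_iff_one] at htop ⊢
  rw [Ideal.mem_comap, map_one] at htop
  exact htop

lemma exists_point [IsAlgClosed 𝕜] [CharZero 𝕜] (hΩ : Ω.IsHomogeneous n)
    (hiso : HasIsolatedSingularity Ω) (hn : 5 ≤ n) :
    Nonempty (PQuot 𝕜 Ω ξ →ₐ[𝕜] 𝕜) := by
  have hnt : Nontrivial (PQuot 𝕜 Ω ξ) := by
    refine ⟨⟨1, 0, fun h => ?_⟩⟩
    rw [← map_one (mkA Ω ξ), mkA_eq_zero] at h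
    exact (F_prime hiso (by omega) hΩ ξ).not_isUnit (isUnit_of_dvd_one h)
  obtain ⟨M, hM⟩ := Ideal.exists_maximal (PQuot 𝕜 Ω ξ)
  let _ : Field (PQuot 𝕜 Ω ξ ⧸ M) := Ideal.Quotient.field M
  have h1 : Algebra.FiniteType 𝕜 (PQuot 𝕜 Ω ξ ⧸ M) :=
    Algebra.FiniteType.of_surjective ((Ideal.Quotient.mkₐ 𝕜 M).comp (mkA Ω ξ))
      ((Ideal.Quotient.mkₐ_surjective 𝕜 M).comp (mkA_surjective Ω ξ))
  have h2 : Module.Finite 𝕜 (PQuot 𝕜 Ω ξ ⧸ M) :=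
    finite_of_finite_type_of_isJacobsonRing 𝕜 _
  have h3 : Function.Bijective (algebraMap 𝕜 (PQuot 𝕜 Ω ξ ⧸ M)) :=
    IsAlgClosed.algebraMap_bijective_of_isIntegral
  exact ⟨(AlgEquiv.ofBijective (Algebra.ofId 𝕜 (PQuot 𝕜 Ω ξ ⧸ M)) h3).symm.toAlgHom.comp
    (Ideal.Quotient.mkₐ 𝕜 M)⟩

lemma constantCoeff_zero_of_homog (hΩ : Ω.IsHomogeneous n) (hn : n ≠ 0) :
    aeval (fun _ => (0 : 𝕜)) Ω = 0 := by
  have : constantCoeff Ω = 0 := by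
    rw [constantCoeff_eq]
    exact hΩ.coeff_eq_zero (by simpa using hn.symm)
  simpa using this

/-- Evaluation at the origin. -/
noncomputable def evZero (hΩ : Ω.IsHomogeneous n) (hn : 5 ≤ n) :
    PQuot 𝕜 Ω 0 →ₐ[𝕜] 𝕜 :=
  Ideal.Quotient.liftₐ (Ideal.span {Ω - MvPolynomial.C 0})
    (aeval (fun _ => (0 : 𝕜))) (by
      intro a ha
      obtain ⟨c, rfl⟩ := Ideal.mem_span_singleton'.mp ha
      rw [map_mul, map_sub, constantCoeff_zero_of_homog hΩ (by omega)]
      simp)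

lemma evZero_mk (hΩ : Ω.IsHomogeneous n) (hn : 5 ≤ n) (f : MvPolynomial (Fin 3) 𝕜) :
    evZero hΩ hn (PQuot.mk Ω 0 f) = aeval (fun _ => (0 : 𝕜)) f := rfl

lemma evZero_bracket (hΩ : Ω.IsHomogeneous n) (hn : 5 ≤ n)
    {P : PoissonStructure 𝕜 (PQuot 𝕜 Ω 0)} (hP : IsInducedBracket Ω 0 P) (a b : PQuot 𝕜 Ω 0) :
    evZero hΩ hn (P.bracket a b) = 0 := by
  obtain ⟨f, rfl⟩ := mkA_surjective Ω 0 a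
  obtain ⟨g, rfl⟩ := mkA_surjective Ω 0 b
  rw [mkA_apply, mkA_apply, hP, evZero_mk]
  have h : ∀ j, aeval (fun _ => (0 : 𝕜)) (pderiv j Ω) = 0 := fun j =>
    constantCoeff_zero_of_homog (hΩ.pderiv (i := j)) (by omega)
  have h2 : ∀ j, constantCoeff (pderiv j Ω) = 0 := fun j => by simpa using h j
  simp [jacBracket, Matrix.det_fin_three, h2]

lemma mk_X_ne_zero [IsAlgClosed 𝕜] [CharZero 𝕜] (hΩ : Ω.IsHomogeneous n)
    (hiso : HasIsolatedSingularity Ω) (hn : 5 ≤ n) : PQuot.mk Ω ξ (X 0) ≠ 0 := by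
  rw [← mkA_apply, Ne, mkA_eq_zero]
  intro h
  have h1 := totalDegree_le_of_dvd_of_isDomain h (X_ne_zero 0)
  rw [totalDegree_F hiso (by omega) hΩ ξ, totalDegree_X] at h1
  omega

end QuotPart

open PiTensorProduct in
/-- Theorem 0.2(3): `P_{Ω₁-ξ₁} ⊗ ⋯ ⊗ P_{Ω_d-ξ_d}` is Poisson simple iff all `ξ i ≠ 0`. -/
theorem tensorProduct_of_potentials_poissonSimple_iff
    {𝕜 : Type*} [Field 𝕜] [IsAlgClosed 𝕜] [CharZero 𝕜]
    (d : ℕ) (Ω : Fin d → MvPolynomial (Fin 3) 𝕜) (n : Fin d → ℕ)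
    (hhom : ∀ i, (Ω i).IsHomogeneous (n i))
    (hiso : ∀ i, HasIsolatedSingularity (Ω i))
    (hdeg : ∀ i, 5 ≤ n i)
    (hdist : Function.Injective n)
    (ξ : Fin d → 𝕜)
    (P : ∀ i, PoissonStructure 𝕜 (PQuot 𝕜 (Ω i) (ξ i)))
    (hP : ∀ i, IsInducedBracket (Ω i) (ξ i) (P i))
    (PT : PoissonStructure 𝕜 (⨂[𝕜] i, PQuot 𝕜 (Ω i) (ξ i)))
    (hPT : IsPiTensorBracket P PT) :
    IsPoissonSimple PT ↔ ∀ i, ξ i ≠ 0 := by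

  constructor
  · intro hs i hξ
    have hpt : ∀ j, Nonempty (PQuot 𝕜 (Ω j) (ξ j) →ₐ[𝕜] 𝕜) :=
      fun j => exists_point (hhom j) (hiso j) (hdeg j)
    obtain ⟨e, he1, he2⟩ : ∃ e : PQuot 𝕜 (Ω i) (ξ i) →ₐ[𝕜] 𝕜,
        (∀ a b, e ((P i).bracket a b) = 0) ∧ e (PQuot.mk (Ω i) (ξ i) (MvPolynomial.X 0)) = 0 := by
      have hPi := hP i
      revert hPi
      generalize P i = Q
      revert Q
      rw [hξ]
      intro Q hQ
      refine ⟨evZero (hhom i) (hdeg i), evZero_bracket (hhom i) (hdeg i) hQ, ?_⟩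
      rw [evZero_mk]
      simp
    classical
    refine tensor_not_simple hPT
      (Function.update (fun j => Classical.choice (hpt j)) i e) i ?_
      (PQuot.mk (Ω i) (ξ i) (MvPolynomial.X 0)) (mk_X_ne_zero (hhom i) (hiso i) (hdeg i)) ?_ hs
    · simpa using he1
    · simpa using he2
  · intro hξ
    exact tensor_simple hPT (fun i => quot_simple (hhom i) (hiso i) (hdeg i) (hξ i) (hP i))
      (fun i => Classical.choice (exists_point (hhom i) (hiso i) (hdeg i)))
end
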